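/- arXiv:1612.04472 — 4 statements merged into one kernel-verified Lean document; each statement's English description precedes it below -/
import Mathlib

section
/- Let n ≥ 1, let A be a symmetric (n+1)×(n+1) real matrix with A_ii = 0 for all i, and let a = (a_1,…,a_{n+1}) with a_i > 0. For x in the interior Δ_n° of the simplex set x_{n+1} := 1 − Σ_{i=1}^n x_i, g^{ij}(x) := −A_{ij} x_i x_j + δ_{ij} x_i Σ_{k=1}^{n+1} A_{ik} x_k, and b^i(x) := −x_i Σ_{j=1}^{n+1} A_{ij} a_j + a_i Σ_{j=1}^{n+1} A_{ij} x_j, and define the second-order differential operator L f(x) := Σ_{i,j=1}^n g^{ij}(x) ∂_i∂_j f(x) + Σ_{i=1}^n b^i(x) ∂_i f(x). Let μ_a be the measure on Δ_n° with density x_1^{a_1−1}⋯x_n^{a_n−1}(1 − Σ_{i=1}^n x_i)^{a_{n+1}−1} with respect to Lebesgue measure. Then L is symmetric with respect to μ_a: for all smooth functions f, g compactly supported in Δ_n°, ∫ f (L g) dμ_a = ∫ g (L f) dμ_a. -/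
open Finset MeasureTheory

/-- Partial derivative `∂_i f` on `ℝ^n`. -/
noncomputable def pderiv2 {n : ℕ} (i : Fin n) (f : (Fin n → ℝ) → ℝ) (x : Fin n → ℝ) : ℝ :=
  fderiv ℝ f x (Pi.single i 1)

/-- The extended coordinate `x_{n+1} = 1 - Σ x_i` appended to `x`. -/
noncomputable def xext2 {n : ℕ} (x : Fin n → ℝ) : Fin (n + 1) → ℝ :=
  Fin.snoc x (1 - ∑ m : Fin n, x m)

/-- The co-metric coefficients `g^{ij}` of the Dirichlet model on the simplex. -/
noncomputable def gcoef2 {n : ℕ} (A : Fin (n + 1) → Fin (n + 1) → ℝ)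
    (x : Fin n → ℝ) (i j : Fin n) : ℝ :=
  -(A i.castSucc j.castSucc) * x i * x j
    + (if i = j then x i * ∑ k : Fin (n + 1), A i.castSucc k * xext2 x k else 0)

/-- The drift coefficients `b^i` of the Dirichlet model on the simplex. -/
noncomputable def bcoef2 {n : ℕ} (A : Fin (n + 1) → Fin (n + 1) → ℝ)
    (a : Fin (n + 1) → ℝ) (x : Fin n → ℝ) (i : Fin n) : ℝ :=
  -(x i) * (∑ j : Fin (n + 1), A i.castSucc j * a j)
    + a i.castSucc * ∑ j : Fin (n + 1), A i.castSucc j * xext2 x j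

/-- The diffusion operator `L_{A,a}` on the simplex. -/
noncomputable def Lop2 {n : ℕ} (A : Fin (n + 1) → Fin (n + 1) → ℝ)
    (a : Fin (n + 1) → ℝ) (f : (Fin n → ℝ) → ℝ) (x : Fin n → ℝ) : ℝ :=
  (∑ i : Fin n, ∑ j : Fin n, gcoef2 A x i j * pderiv2 i (pderiv2 j f) x)
    + ∑ i : Fin n, bcoef2 A a x i * pderiv2 i f x

/-- The open simplex `Δ_n°`. -/
def simplexInterior2 (n : ℕ) : Set (Fin n → ℝ) :=
  {x | (∀ i, 0 < x i) ∧ ∑ i, x i < 1}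

/-- The Dirichlet measure `μ_a` (unnormalized) on the open simplex. -/
noncomputable def dirichletMeas2 {n : ℕ} (a : Fin (n + 1) → ℝ) : Measure (Fin n → ℝ) :=
  (volume.restrict (simplexInterior2 n)).withDensity fun x =>
    ENNReal.ofReal ((∏ i : Fin n, x i ^ (a i.castSucc - 1))
      * (1 - ∑ i, x i) ^ (a (Fin.last n) - 1))

/-!
On the open simplex `L_{A,a} f = ρ⁻¹ ∑ᵢ ∂ᵢ (∑ⱼ ρ gⁱʲ ∂ⱼ f)`, where `ρ = ∏ₖ xₖ ^ (aₖ - 1)` is the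
Dirichlet density over all `n + 1` coordinates: the drift satisfies `ρ bʲ = ∑ᵢ ∂ᵢ (ρ gⁱʲ)`. Since
`gⁱʲ` is symmetric, Green's identity turns both `∫ u L v dμ_a` and `∫ v L u dμ_a` into
`-∫ ∑ᵢⱼ ρ gⁱʲ ∂ᵢu ∂ⱼv`. Boundary terms vanish as soon as one of `u`, `v` is supported in the open
simplex.
-/

section DivergenceForm

variable {n : ℕ} {Ω : Set (Fin n → ℝ)}

theorem pderiv2_mul (i : Fin n) {u v : (Fin n → ℝ) → ℝ} {x : Fin n → ℝ}
    (hu : DifferentiableAt ℝ u x) (hv : DifferentiableAt ℝ v x) :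
    pderiv2 i (fun y => u y * v y) x = u x * pderiv2 i v x + pderiv2 i u x * v x := by
  simp [pderiv2, fderiv_fun_mul hu hv, mul_comm]

theorem pderiv2_add (i : Fin n) {u v : (Fin n → ℝ) → ℝ} {x : Fin n → ℝ}
    (hu : DifferentiableAt ℝ u x) (hv : DifferentiableAt ℝ v x) :
    pderiv2 i (fun y => u y + v y) x = pderiv2 i u x + pderiv2 i v x := by
  simp [pderiv2, fderiv_fun_add hu hv]

theorem pderiv2_const_mul (i : Fin n) (c : ℝ) {u : (Fin n → ℝ) → ℝ} {x : Fin n → ℝ}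
    (hu : DifferentiableAt ℝ u x) :
    pderiv2 i (fun y => c * u y) x = c * pderiv2 i u x := by
  simp [pderiv2, fderiv_const_mul hu]

theorem pderiv2_sum (i : Fin n) {ι : Type*} (s : Finset ι) {u : ι → (Fin n → ℝ) → ℝ}
    {x : Fin n → ℝ} (hu : ∀ k ∈ s, DifferentiableAt ℝ (u k) x) :
    pderiv2 i (fun y => ∑ k ∈ s, u k y) x = ∑ k ∈ s, pderiv2 i (u k) x := by
  simp [pderiv2, fderiv_fun_sum hu]

theorem contDiffOn_pderiv2 {m : WithTop ℕ∞} (hΩ : IsOpen Ω) (i : Fin n) {f : (Fin n → ℝ) → ℝ}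
    (hf : ContDiffOn ℝ (m + 1) f Ω) : ContDiffOn ℝ m (pderiv2 i f) Ω :=
  (hf.fderiv_of_isOpen hΩ le_rfl).clm_apply contDiffOn_const

theorem pderiv2_of_notMem_tsupport (i : Fin n) {f : (Fin n → ℝ) → ℝ} {x : Fin n → ℝ}
    (hx : x ∉ tsupport f) : pderiv2 i f x = 0 := by
  simp [pderiv2, fderiv_of_notMem_tsupport ℝ hx]

/-- The divergence `∑ᵢ ∂ᵢ Vⁱ` of a vector field `V` on `ℝ^n`. -/
noncomputable def divergence (V : (Fin n → ℝ) → Fin n → ℝ) (x : Fin n → ℝ) : ℝ :=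
  ∑ i, pderiv2 i (fun y => V y i) x

theorem divergence_mul {f : (Fin n → ℝ) → ℝ} {V : (Fin n → ℝ) → Fin n → ℝ} {x : Fin n → ℝ}
    (hf : DifferentiableAt ℝ f x) (hV : ∀ i, DifferentiableAt ℝ (fun y => V y i) x) :
    divergence (fun y i => f y * V y i) x
      = f x * divergence V x + ∑ i, pderiv2 i f x * V x i := by
  simp only [divergence, pderiv2_mul _ hf (hV _), sum_add_distrib, mul_sum]

theorem divergence_of_notMem_tsupport {V : (Fin n → ℝ) → Fin n → ℝ} {x : Fin n → ℝ}
    (hx : x ∉ tsupport V) : divergence V x = 0 :=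
  sum_eq_zero fun i _ => pderiv2_of_notMem_tsupport i fun h =>
    hx (tsupport_comp_subset (g := fun v : Fin n → ℝ => v i) rfl V h)

theorem continuousOn_divergence (hΩ : IsOpen Ω) {V : (Fin n → ℝ) → Fin n → ℝ}
    (hV : ContDiffOn ℝ 1 V Ω) : ContinuousOn (divergence V) Ω :=
  continuousOn_finsetSum _ fun i _ =>
    (contDiffOn_pderiv2 (m := 0) hΩ i (contDiffOn_pi.mp hV i)).continuousOn

theorem contDiff_of_contDiffOn_of_tsupport_subset {E F : Type*} [NormedAddCommGroup E]
    [NormedSpace ℝ E] [NormedAddCommGroup F] [NormedSpace ℝ F] {m : WithTop ℕ∞} {U : Set E}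
    {f : E → F} (hU : IsOpen U) (hf : ContDiffOn ℝ m f U) (hs : tsupport f ⊆ U) :
    ContDiff ℝ m f :=
  (contMDiff_of_tsupport fun _ hx =>
    (hf.contDiffAt (hU.mem_nhds (hs hx))).contMDiffAt).contDiff

theorem integral_fderiv_apply_eq_zero {E F : Type*} [NormedAddCommGroup E] [NormedSpace ℝ E]
    [FiniteDimensional ℝ E] [MeasurableSpace E] [BorelSpace E] [NormedAddCommGroup F]
    [NormedSpace ℝ F] (μ : Measure E) [μ.IsAddHaarMeasure] {f : E → F} (hf : ContDiff ℝ 1 f)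
    (hfc : HasCompactSupport f) (v : E) : ∫ x, fderiv ℝ f x v ∂μ = 0 := by
  have hf_int : Integrable f μ := hf.continuous.integrable_of_hasCompactSupport hfc
  have hf'_int : Integrable (fun x => fderiv ℝ f x v) μ :=
    ((hf.continuous_fderiv one_ne_zero).clm_apply continuous_const).integrable_of_hasCompactSupport
      (hfc.fderiv_apply ℝ v)
  simpa using integral_smul_fderiv_eq_neg_fderiv_smul_of_integrable (μ := μ) (𝕜 := ℝ)
    (f := fun _ => 1) (g := f) (v := v) (by simp) (by simpa using hf'_int)
    (by simpa using hf_int) (by simp) fun x _ => hf.differentiable one_ne_zero x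

theorem setIntegral_divergence_eq_zero (hΩ : IsOpen Ω) {V : (Fin n → ℝ) → Fin n → ℝ}
    (hV : ContDiffOn ℝ 1 V Ω) (hVc : HasCompactSupport V) (hVs : tsupport V ⊆ Ω) :
    ∫ x in Ω, divergence V x = 0 := by
  have hV_cd : ∀ i, ContDiff ℝ 1 fun x => V x i :=
    contDiff_pi.mp (contDiff_of_contDiffOn_of_tsupport_subset hΩ hV hVs)
  have hV_supp : ∀ i, HasCompactSupport fun x => V x i := fun i =>
    hVc.comp_left (g := fun v : Fin n → ℝ => v i) rfl
  rw [setIntegral_eq_integral_of_forall_compl_eq_zero fun x hx =>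
    divergence_of_notMem_tsupport fun h => hx (hVs h)]
  simp only [divergence]
  rw [integral_finsetSum]
  · exact sum_eq_zero fun i _ => integral_fderiv_apply_eq_zero volume (hV_cd i) (hV_supp i) _
  · exact fun i _ => (((hV_cd i).continuous_fderiv one_ne_zero).clm_apply
      continuous_const).integrable_of_hasCompactSupport ((hV_supp i).fderiv_apply ℝ _)

theorem setIntegral_mul_divergence (hΩ : IsOpen Ω) {f : (Fin n → ℝ) → ℝ}
    {V : (Fin n → ℝ) → Fin n → ℝ} (hf : ContDiffOn ℝ 1 f Ω) (hV : ContDiffOn ℝ 1 V Ω)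
    (hc : IsCompact (tsupport f ∩ tsupport V)) (hs : tsupport f ∩ tsupport V ⊆ Ω) :
    ∫ x in Ω, f x * divergence V x = -∫ x in Ω, ∑ i, pderiv2 i f x * V x i := by
  have hint : ∀ {h : (Fin n → ℝ) → ℝ}, ContinuousOn h Ω →
      (∀ x ∉ tsupport f ∩ tsupport V, h x = 0) → IntegrableOn h Ω := fun hh h0 =>
    (((hh.mono hs).integrableOn_compact hc).integrable_of_forall_notMem_eq_zero h0).integrableOn
  have hleft : IntegrableOn (fun x => f x * divergence V x) Ω := by
    refine hint (hf.continuousOn.mul (continuousOn_divergence hΩ hV)) fun x hx => ?_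
    rcases not_and_or.mp hx with hxf | hxV
    · rw [image_eq_zero_of_notMem_tsupport hxf, zero_mul]
    · rw [divergence_of_notMem_tsupport hxV, mul_zero]
  have hright : IntegrableOn (fun x => ∑ i, pderiv2 i f x * V x i) Ω := by
    refine hint (continuousOn_finsetSum _ fun i _ =>
      (contDiffOn_pderiv2 (m := 0) hΩ i hf).continuousOn.mul
        (contDiffOn_pi.mp hV i).continuousOn) fun x hx => sum_eq_zero fun i _ => ?_
    rcases not_and_or.mp hx with hxf | hxV
    · rw [pderiv2_of_notMem_tsupport i hxf, zero_mul]
    · rw [image_eq_zero_of_notMem_tsupport hxV, Pi.zero_apply, mul_zero]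
  have hsub : tsupport (fun y i => f y * V y i) ⊆ tsupport f ∩ tsupport V :=
    Set.subset_inter (tsupport_smul_subset_left f V) (tsupport_smul_subset_right f V)
  rw [← add_eq_zero_iff_eq_neg, ← integral_add hleft hright,
    ← setIntegral_divergence_eq_zero hΩ (hf.smul hV)
      (hc.of_isClosed_subset (isClosed_tsupport _) hsub) (hsub.trans hs)]
  refine setIntegral_congr_fun hΩ.measurableSet fun x hx => (divergence_mul ?_ fun i => ?_).symm
  · exact (hf.contDiffAt (hΩ.mem_nhds hx)).differentiableAt one_ne_zero
  · exact ((contDiffOn_pi.mp hV i).contDiffAt (hΩ.mem_nhds hx)).differentiableAt one_ne_zero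

/-- The vector field `M ∇f` attached to a matrix field `M`, so that `divergence (flux M f)` is the
divergence-form operator `∑ᵢⱼ ∂ᵢ (Mⁱʲ ∂ⱼ f)`. -/
noncomputable def flux (M : (Fin n → ℝ) → Fin n → Fin n → ℝ) (f : (Fin n → ℝ) → ℝ)
    (x : Fin n → ℝ) (i : Fin n) : ℝ :=
  ∑ j, M x i j * pderiv2 j f x

theorem tsupport_flux_subset (M : (Fin n → ℝ) → Fin n → Fin n → ℝ) (f : (Fin n → ℝ) → ℝ) :
    tsupport (flux M f) ⊆ tsupport f := by
  refine closure_minimal (fun x hx => ?_) (isClosed_tsupport f)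
  contrapose! hx
  simp only [Function.notMem_support, funext_iff, flux, pderiv2_of_notMem_tsupport _ hx, mul_zero,
    sum_const_zero, Pi.zero_apply, implies_true]

theorem contDiffOn_flux {m : WithTop ℕ∞} (hΩ : IsOpen Ω)
    {M : (Fin n → ℝ) → Fin n → Fin n → ℝ} {f : (Fin n → ℝ) → ℝ}
    (hM : ∀ i j, ContDiffOn ℝ m (fun x => M x i j) Ω) (hf : ContDiffOn ℝ (m + 1) f Ω) :
    ContDiffOn ℝ m (flux M f) Ω :=
  contDiffOn_pi.mpr fun i => ContDiffOn.sum fun j _ =>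
    (hM i j).mul (contDiffOn_pderiv2 hΩ j hf)

theorem divergence_flux {M : (Fin n → ℝ) → Fin n → Fin n → ℝ} {f : (Fin n → ℝ) → ℝ}
    {x : Fin n → ℝ} (hM : ∀ i j, DifferentiableAt ℝ (fun y => M y i j) x)
    (hf : ∀ j, DifferentiableAt ℝ (pderiv2 j f) x) :
    divergence (flux M f) x = (∑ i, ∑ j, M x i j * pderiv2 i (pderiv2 j f) x)
      + ∑ j, divergence (fun y i => M y i j) x * pderiv2 j f x := by
  simp only [divergence, flux, pderiv2_sum _ _ fun j _ => (hM _ j).fun_mul (hf j),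
    pderiv2_mul _ (hM _ _) (hf _), sum_add_distrib, sum_mul]
  rw [sum_comm (f := fun i j => pderiv2 i (fun y => M y i j) x * pderiv2 j f x)]

theorem setIntegral_mul_divergence_flux_comm (hΩ : IsOpen Ω)
    {M : (Fin n → ℝ) → Fin n → Fin n → ℝ} {f g : (Fin n → ℝ) → ℝ}
    (hM : ∀ i j, ContDiffOn ℝ 1 (fun x => M x i j) Ω)
    (hMsymm : ∀ x ∈ Ω, ∀ i j, M x i j = M x j i)
    (hf : ContDiffOn ℝ 2 f Ω) (hg : ContDiffOn ℝ 2 g Ω) (hfc : HasCompactSupport f)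
    (hfs : tsupport f ⊆ Ω) :
    ∫ x in Ω, f x * divergence (flux M g) x = ∫ x in Ω, g x * divergence (flux M f) x := by
  have hform_comm : ∀ x ∈ Ω,
      ∑ i, pderiv2 i f x * flux M g x i = ∑ i, pderiv2 i g x * flux M f x i := fun x hx => by
    simp only [flux, mul_sum]
    rw [sum_comm]
    refine sum_congr rfl fun i _ => sum_congr rfl fun j _ => ?_
    rw [hMsymm x hx j i]
    ring
  have hsub : tsupport g ∩ tsupport (flux M f) ⊆ tsupport f :=
    Set.inter_subset_right.trans (tsupport_flux_subset M f)
  have hclosed : IsClosed (tsupport g ∩ tsupport (flux M f)) :=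
    (isClosed_tsupport g).inter (isClosed_tsupport _)
  rw [setIntegral_mul_divergence hΩ (hf.of_le one_le_two)
      (contDiffOn_flux hΩ hM hg) (hfc.isCompact.inter_right (isClosed_tsupport _))
      (Set.inter_subset_left.trans hfs),
    setIntegral_mul_divergence hΩ (hg.of_le one_le_two)
      (contDiffOn_flux hΩ hM hf) (hfc.isCompact.of_isClosed_subset hclosed hsub)
      (hsub.trans hfs), setIntegral_congr_fun hΩ.measurableSet hform_comm]

end DivergenceForm

section Dirichlet

variable {n : ℕ}

theorem isOpen_simplexInterior2 (n : ℕ) : IsOpen (simplexInterior2 n) := by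
  have hpos : IsOpen {x : Fin n → ℝ | ∀ i, 0 < x i} := by
    rw [Set.ofPred_forall]
    exact isOpen_iInter_of_finite fun i => isOpen_lt continuous_const (continuous_apply i)
  exact hpos.inter (isOpen_lt (f := fun x : Fin n → ℝ => ∑ i, x i) (by fun_prop) continuous_const)

theorem simplexInterior2_subset_Icc (n : ℕ) : simplexInterior2 n ⊆ Set.Icc 0 1 := fun _ hx =>
  ⟨fun i => (hx.1 i).le, fun i =>
    (single_le_sum (fun j _ => (hx.1 j).le) (mem_univ i)).trans hx.2.le⟩

theorem hasCompactSupport_of_tsupport_subset_simplexInterior2 {f : (Fin n → ℝ) → ℝ}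
    (hf : tsupport f ⊆ simplexInterior2 n) : HasCompactSupport f :=
  isCompact_Icc.of_isClosed_subset (isClosed_tsupport f)
    (hf.trans (simplexInterior2_subset_Icc n))

theorem xext2_castSucc (x : Fin n → ℝ) (i : Fin n) : xext2 x i.castSucc = x i :=
  Fin.snoc_castSucc (α := fun _ => ℝ) _ _ i

theorem xext2_last (x : Fin n → ℝ) : xext2 x (Fin.last n) = 1 - ∑ m, x m :=
  Fin.snoc_last (α := fun _ => ℝ) _ _

theorem xext2_pos {x : Fin n → ℝ} (hx : x ∈ simplexInterior2 n) (k : Fin (n + 1)) :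
    0 < xext2 x k := by
  induction k using Fin.lastCases with
  | last => rw [xext2_last]; exact sub_pos.mpr hx.2
  | cast i => rw [xext2_castSucc]; exact hx.1 i

theorem contDiff_xext2 {m : WithTop ℕ∞} (k : Fin (n + 1)) :
    ContDiff ℝ m (fun x : Fin n → ℝ => xext2 x k) := by
  induction k using Fin.lastCases with
  | last => simp only [xext2_last]; fun_prop
  | cast i => simp only [xext2_castSucc]; fun_prop

theorem differentiableAt_xext2 (k : Fin (n + 1)) (x : Fin n → ℝ) :
    DifferentiableAt ℝ (fun y : Fin n → ℝ => xext2 y k) x :=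
  (contDiff_xext2 (m := 1) k).differentiable one_ne_zero x

theorem pderiv2_apply (i j : Fin n) (x : Fin n → ℝ) :
    pderiv2 i (fun y => y j) x = if i = j then 1 else 0 := by
  simp [pderiv2, (hasFDerivAt_apply (𝕜 := ℝ) j x).fderiv, Pi.single_apply, eq_comm]

theorem pderiv2_xext2_last (i : Fin n) (x : Fin n → ℝ) :
    pderiv2 i (fun y => xext2 y (Fin.last n)) x = -1 := by
  have hsum := pderiv2_sum i univ (u := fun j y => y j) (x := x) (by fun_prop)
  simp only [pderiv2_apply, sum_ite_eq, mem_univ, if_true] at hsum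
  simpa [xext2_last, pderiv2, fderiv_const_sub] using hsum

theorem sum_mul_pderiv2_xext2 (c : Fin (n + 1) → ℝ) (i : Fin n) (x : Fin n → ℝ) :
    ∑ k, c k * pderiv2 i (fun y => xext2 y k) x = c i.castSucc - c (Fin.last n) := by
  simp only [Fin.sum_univ_castSucc, xext2_castSucc, pderiv2_apply, pderiv2_xext2_last, mul_ite,
    mul_one, mul_zero, sum_ite_eq, mem_univ, if_true, mul_neg, sub_eq_add_neg]

theorem pderiv2_sum_mul_xext2 (c : Fin (n + 1) → ℝ) (i : Fin n) (x : Fin n → ℝ) :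
    pderiv2 i (fun y => ∑ k, c k * xext2 y k) x = c i.castSucc - c (Fin.last n) := by
  rw [← sum_mul_pderiv2_xext2 c i x,
    pderiv2_sum i univ fun k _ => (differentiableAt_xext2 k x).const_mul _]
  exact sum_congr rfl fun k _ => pderiv2_const_mul i _ (differentiableAt_xext2 k x)

/-- The density `∏ₖ xₖ ^ (aₖ - 1)` of the Dirichlet measure, the product running over all `n + 1`
coordinates. -/
noncomputable def dirichletDensity (a : Fin (n + 1) → ℝ) (x : Fin n → ℝ) : ℝ :=
  ∏ k, xext2 x k ^ (a k - 1)

theorem contDiffOn_dirichletDensity {m : WithTop ℕ∞} (a : Fin (n + 1) → ℝ) :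
    ContDiffOn ℝ m (dirichletDensity a) (simplexInterior2 n) :=
  contDiffOn_prod fun k _ =>
    (contDiff_xext2 k).contDiffOn.rpow_const_of_ne fun _ hx => (xext2_pos hx k).ne'

theorem differentiableAt_dirichletDensity (a : Fin (n + 1) → ℝ) {x : Fin n → ℝ}
    (hx : x ∈ simplexInterior2 n) : DifferentiableAt ℝ (dirichletDensity a) x :=
  ((contDiffOn_dirichletDensity (m := 1) a).contDiffAt
    ((isOpen_simplexInterior2 n).mem_nhds hx)).differentiableAt one_ne_zero

theorem dirichletDensity_eq_exp (a : Fin (n + 1) → ℝ) {x : Fin n → ℝ}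
    (hx : x ∈ simplexInterior2 n) :
    dirichletDensity a x = Real.exp (∑ k, (a k - 1) * Real.log (xext2 x k)) := by
  rw [Real.exp_sum]
  exact prod_congr rfl fun k _ => by rw [Real.rpow_def_of_pos (xext2_pos hx k), mul_comm]

theorem pderiv2_dirichletDensity (a : Fin (n + 1) → ℝ) {x : Fin n → ℝ}
    (hx : x ∈ simplexInterior2 n) (i : Fin n) :
    pderiv2 i (dirichletDensity a) x = dirichletDensity a x *
      ((a i.castSucc - 1) / x i - (a (Fin.last n) - 1) / xext2 x (Fin.last n)) := by
  have heq : dirichletDensity a =ᶠ[nhds x]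
      fun y => Real.exp (∑ k, (a k - 1) * Real.log (xext2 y k)) :=
    Filter.eventuallyEq_of_mem ((isOpen_simplexInterior2 n).mem_nhds hx)
      fun _ => dirichletDensity_eq_exp a
  have hlog := HasFDerivAt.fun_sum (u := univ) (x := x) fun k _ =>
    ((differentiableAt_xext2 k x).hasFDerivAt.log (xext2_pos hx k).ne').const_mul (a k - 1)
  have hlog_deriv := sum_mul_pderiv2_xext2 (fun k => (a k - 1) / xext2 x k) i x
  rw [xext2_castSucc] at hlog_deriv
  rw [← hlog_deriv, pderiv2, heq.fderiv_eq, hlog.exp.fderiv, heq.eq_of_nhds]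
  simp [pderiv2, div_eq_mul_inv, mul_assoc]

theorem integral_dirichletMeas2 (a : Fin (n + 1) → ℝ) (F : (Fin n → ℝ) → ℝ) :
    ∫ x, F x ∂(dirichletMeas2 a) = ∫ x in simplexInterior2 n, dirichletDensity a x * F x := by
  rw [dirichletMeas2, integral_withDensity_eq_integral_toReal_smul (by fun_prop) (by simp)]
  refine setIntegral_congr_fun (isOpen_simplexInterior2 n).measurableSet fun x hx => ?_
  have hdensity : (∏ i : Fin n, x i ^ (a i.castSucc - 1)) * (1 - ∑ i, x i) ^ (a (Fin.last n) - 1)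
      = dirichletDensity a x := by
    simp only [dirichletDensity, Fin.prod_univ_castSucc, xext2_castSucc, xext2_last]
  have hnonneg : 0 ≤ dirichletDensity a x :=
    prod_nonneg fun k _ => Real.rpow_nonneg (xext2_pos hx k).le _
  simp only [hdensity, ENNReal.toReal_ofReal hnonneg, smul_eq_mul]

variable {A : Fin (n + 1) → Fin (n + 1) → ℝ}

theorem contDiff_gcoef2 {m : WithTop ℕ∞} (A : Fin (n + 1) → Fin (n + 1) → ℝ) (i j : Fin n) :
    ContDiff ℝ m (fun x => gcoef2 A x i j) := by
  have := contDiff_xext2 (n := n) (m := m)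
  unfold gcoef2
  split_ifs <;> fun_prop

theorem differentiableAt_gcoef2 (A : Fin (n + 1) → Fin (n + 1) → ℝ) (x : Fin n → ℝ)
    (i j : Fin n) : DifferentiableAt ℝ (fun y => gcoef2 A y i j) x :=
  (contDiff_gcoef2 (m := 1) A i j).differentiable one_ne_zero x

theorem gcoef2_comm (hsymm : ∀ i j, A i j = A j i) (x : Fin n → ℝ) (i j : Fin n) :
    gcoef2 A x i j = gcoef2 A x j i := by
  rcases eq_or_ne i j with rfl | hij
  · rfl
  · simp only [gcoef2, hij, hij.symm, if_false, hsymm i.castSucc]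
    ring

-- For `c = a - 1` the difference of quotients is `∂ᵢ (log ρ)`, with `ρ` the Dirichlet density.
theorem sum_div_sub_div_mul_gcoef2 (hsymm : ∀ i j, A i j = A j i) (c : Fin (n + 1) → ℝ)
    {x : Fin n → ℝ} (hx : x ∈ simplexInterior2 n) (j : Fin n) :
    ∑ i, (c i.castSucc / x i - c (Fin.last n) / xext2 x (Fin.last n)) * gcoef2 A x i j
      = c j.castSucc * ∑ k, A j.castSucc k * xext2 x k - x j * ∑ k, A j.castSucc k * c k := by
  have hlast : xext2 x (Fin.last n) ≠ 0 := (xext2_pos hx _).ne'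
  set r := c (Fin.last n) / xext2 x (Fin.last n) with hr
  have hterm : ∀ i, (c i.castSucc / x i - r) * gcoef2 A x i j
      = -x j * (A j.castSucc i.castSucc * c i.castSucc)
        + r * x j * (A j.castSucc i.castSucc * x i)
        + if i = j then (c j.castSucc - r * x j) * ∑ k, A j.castSucc k * xext2 x k else 0 := by
    intro i
    have hi : x i ≠ 0 := (hx.1 i).ne'
    rw [gcoef2, hsymm i.castSucc j.castSucc]
    split_ifs with hij
    · subst hij
      field_simp
      ring
    · field_simp
      ring
  have hsplit := Fin.sum_univ_castSucc fun k => A j.castSucc k * xext2 x k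
  simp only [xext2_castSucc] at hsplit
  rw [sum_congr rfl fun i _ => hterm i]
  simp only [sum_add_distrib, ← mul_sum, sum_ite_eq', mem_univ, if_true,
    Fin.sum_univ_castSucc fun k => A j.castSucc k * c k, hsplit, hr]
  field_simp
  ring

theorem pderiv2_gcoef2 (A : Fin (n + 1) → Fin (n + 1) → ℝ) (x : Fin n → ℝ) (i j : Fin n) :
    pderiv2 i (fun y => gcoef2 A y i j) x = -A i.castSucc j.castSucc * x j
      + if i = j then ∑ k, A j.castSucc k * xext2 x k - x j * A j.castSucc (Fin.last n)
        else 0 := by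
  have hquad : pderiv2 i (fun y => -A i.castSucc j.castSucc * y i * y j) x
      = -A i.castSucc j.castSucc * (x j + if i = j then x i else 0) := by
    simp only [mul_assoc]
    rw [pderiv2_const_mul i _ (by fun_prop), pderiv2_mul i (by fun_prop) (by fun_prop),
      pderiv2_apply, pderiv2_apply]
    simp [add_comm]
  by_cases hij : i = j
  · subst hij
    have hsum : DifferentiableAt ℝ (fun y => ∑ k, A i.castSucc k * xext2 y k) x :=
      .fun_sum fun k _ => (differentiableAt_xext2 k x).const_mul _
    simp only [gcoef2, if_true] at hquad ⊢
    rw [pderiv2_add i (by fun_prop) (by fun_prop), hquad, pderiv2_mul i (by fun_prop) hsum,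
      pderiv2_sum_mul_xext2, pderiv2_apply, if_pos rfl]
    ring
  · simpa only [gcoef2, hij, if_false, add_zero] using hquad

theorem divergence_gcoef2 (hsymm : ∀ i j, A i j = A j i) (x : Fin n → ℝ) (j : Fin n) :
    divergence (fun y i => gcoef2 A y i j) x
      = ∑ k, A j.castSucc k * xext2 x k - x j * ∑ k, A j.castSucc k := by
  simp only [divergence, pderiv2_gcoef2, sum_add_distrib, sum_ite_eq', mem_univ, if_true,
    ← sum_mul, sum_neg_distrib, hsymm _ j.castSucc, Fin.sum_univ_castSucc (A j.castSucc)]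
  ring

/-- The symmetric matrix field `ρ gⁱʲ`, where `ρ` is the Dirichlet density: the matrix of
`L_{A,a}` in divergence form. -/
noncomputable def dirichletMatrix (A : Fin (n + 1) → Fin (n + 1) → ℝ) (a : Fin (n + 1) → ℝ)
    (x : Fin n → ℝ) (i j : Fin n) : ℝ :=
  dirichletDensity a x * gcoef2 A x i j

theorem contDiffOn_dirichletMatrix {m : WithTop ℕ∞} (A : Fin (n + 1) → Fin (n + 1) → ℝ)
    (a : Fin (n + 1) → ℝ) (i j : Fin n) :
    ContDiffOn ℝ m (fun x => dirichletMatrix A a x i j) (simplexInterior2 n) :=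
  (contDiffOn_dirichletDensity a).mul (contDiff_gcoef2 A i j).contDiffOn

theorem divergence_dirichletMatrix (hsymm : ∀ i j, A i j = A j i) (a : Fin (n + 1) → ℝ)
    {x : Fin n → ℝ} (hx : x ∈ simplexInterior2 n) (j : Fin n) :
    divergence (fun y i => dirichletMatrix A a y i j) x
      = dirichletDensity a x * bcoef2 A a x j := by
  unfold dirichletMatrix
  rw [divergence_mul (differentiableAt_dirichletDensity a hx)
    fun i => differentiableAt_gcoef2 A x i j]
  simp only [pderiv2_dirichletDensity a hx, mul_assoc]
  rw [← mul_sum, sum_div_sub_div_mul_gcoef2 hsymm (fun k => a k - 1) hx, divergence_gcoef2 hsymm,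
    bcoef2]
  simp only [mul_sub, mul_one, sum_sub_distrib]
  ring

theorem dirichletDensity_mul_Lop2 (hsymm : ∀ i j, A i j = A j i) (a : Fin (n + 1) → ℝ)
    {f : (Fin n → ℝ) → ℝ} (hf : ContDiffOn ℝ 2 f (simplexInterior2 n))
    {x : Fin n → ℝ} (hx : x ∈ simplexInterior2 n) :
    dirichletDensity a x * Lop2 A a f x = divergence (flux (dirichletMatrix A a) f) x := by
  have hΩ := isOpen_simplexInterior2 n
  have hdiff : ∀ {u : (Fin n → ℝ) → ℝ}, ContDiffOn ℝ 1 u (simplexInterior2 n) →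
      DifferentiableAt ℝ u x := fun hu =>
    (hu.contDiffAt (hΩ.mem_nhds hx)).differentiableAt one_ne_zero
  rw [divergence_flux (fun i j => hdiff (contDiffOn_dirichletMatrix A a i j))
    fun j => hdiff (contDiffOn_pderiv2 hΩ j hf)]
  simp only [divergence_dirichletMatrix hsymm a hx]
  simp only [dirichletMatrix, Lop2, mul_add, mul_sum, mul_assoc]

theorem integral_mul_Lop2_dirichletMeas2 (hsymm : ∀ i j, A i j = A j i) (a : Fin (n + 1) → ℝ)
    (f : (Fin n → ℝ) → ℝ) {g : (Fin n → ℝ) → ℝ} (hg : ContDiffOn ℝ 2 g (simplexInterior2 n)) :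
    ∫ x, f x * Lop2 A a g x ∂(dirichletMeas2 a)
      = ∫ x in simplexInterior2 n, f x * divergence (flux (dirichletMatrix A a) g) x := by
  rw [integral_dirichletMeas2]
  refine setIntegral_congr_fun (isOpen_simplexInterior2 n).measurableSet fun x hx => ?_
  simp only [← dirichletDensity_mul_Lop2 hsymm a hg hx, mul_left_comm]

end Dirichlet

theorem stmt_2_general {n : ℕ} {A : Fin (n + 1) → Fin (n + 1) → ℝ}
    (hsymm : ∀ i j, A i j = A j i) (a : Fin (n + 1) → ℝ) {f g : (Fin n → ℝ) → ℝ}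
    (hf : ContDiffOn ℝ 2 f (simplexInterior2 n)) (hg : ContDiffOn ℝ 2 g (simplexInterior2 n))
    (hfs : tsupport f ⊆ simplexInterior2 n) :
    ∫ x, f x * Lop2 A a g x ∂(dirichletMeas2 a)
      = ∫ x, g x * Lop2 A a f x ∂(dirichletMeas2 a) := by
  have hmatrix_symm : ∀ x i j, dirichletMatrix A a x i j = dirichletMatrix A a x j i :=
    fun x i j => congrArg (dirichletDensity a x * ·) (gcoef2_comm hsymm x i j)
  rw [integral_mul_Lop2_dirichletMeas2 hsymm a f hg, integral_mul_Lop2_dirichletMeas2 hsymm a g hf]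
  exact setIntegral_mul_divergence_flux_comm (isOpen_simplexInterior2 n)
    (contDiffOn_dirichletMatrix A a) (fun x _ => hmatrix_symm x) hf hg
    (hasCompactSupport_of_tsupport_subset_simplexInterior2 hfs) hfs

/-- The Dirichlet operator `L_{A,a}` is symmetric with respect to the Dirichlet
measure `μ_a` on the open simplex. -/
theorem stmt_2 (n : ℕ) (hn : 1 ≤ n)
    (A : Fin (n + 1) → Fin (n + 1) → ℝ)
    (hsymm : ∀ i j, A i j = A j i)
    (hdiag : ∀ i, A i i = 0)
    (a : Fin (n + 1) → ℝ) (ha : ∀ i, 0 < a i)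
    (f g : (Fin n → ℝ) → ℝ)
    (hf : ContDiff ℝ (⊤ : ℕ∞) f) (hg : ContDiff ℝ (⊤ : ℕ∞) g)
    (hfc : HasCompactSupport f) (hgc : HasCompactSupport g)
    (hfs : tsupport f ⊆ simplexInterior2 n)
    (hgs : tsupport g ⊆ simplexInterior2 n) :
    ∫ x, f x * Lop2 A a g x ∂(dirichletMeas2 a)
      = ∫ x, g x * Lop2 A a f x ∂(dirichletMeas2 a) :=
  stmt_2_general hsymm a (contDiff_infty.mp hf 2).contDiffOn
    (contDiff_infty.mp hg 2).contDiffOn hfs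
end

section
/- Let n ≥ 1 and a_1, …, a_{n+1} > 0. Then ∫_{Δ_n} x_1^{a_1−1}⋯x_n^{a_n−1}(1 − x_1 − ⋯ − x_n)^{a_{n+1}−1} dx_1⋯dx_n = Γ(a_1)⋯Γ(a_{n+1}) / Γ(a_1 + ⋯ + a_{n+1}), where the integral is with respect to Lebesgue measure on the simplex Δ_n ⊂ ℝ^n. -/
open Finset MeasureTheory

/-!
Write `D t` for the integral over the simplex `{x ≥ 0, ∑ i, x i ≤ t}` of the function
`(∏ i, x i ^ (a i - 1)) * (t - ∑ i, x i) ^ (b - 1)`. By homogeneity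
`D t = t ^ (∑ i, a i + b - 1) * D 1`, hence `∫ exp (-t) * D t` over `t > 0` is
`Γ (∑ i, a i + b) * D 1`. On the other hand, in the coordinates `(x, t - ∑ i, x i)` the function
`exp (-t)` splits into a product of exponentials, so the same integral is
`(∏ i, Γ (a i)) * Γ b`.
-/

theorem integral_integral_mul_comp_sub {X G 𝕜 : Type*} [MeasurableSpace X] [MeasurableSpace G]
    [AddGroup G] [MeasurableAdd G] [MeasurableSub₂ G] [RCLike 𝕜] {μ : Measure X} [SFinite μ]
    {ν : Measure G} [SFinite ν] [ν.IsAddRightInvariant] {φ : X → G} (hφ : Measurable φ)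
    {f : X → 𝕜} {g : G → 𝕜} (hf : Integrable f μ) (hg : Integrable g ν) :
    ∫ t, ∫ x, f x * g (t - φ x) ∂μ ∂ν = (∫ x, f x ∂μ) * ∫ s, g s ∂ν := by
  have shear : MeasurePreserving (fun p : X × G ↦ (p.1, p.2 - φ p.1)) (μ.prod ν) (μ.prod ν) :=
    (MeasurePreserving.id μ).skew_product (g := fun x t ↦ t - φ x)
      (measurable_snd.sub (hφ.comp measurable_fst))
      (ae_of_all _ fun x ↦ (measurePreserving_sub_right ν (φ x)).map_eq)
  have hint : Integrable (fun p : X × G ↦ f p.1 * g (p.2 - φ p.1)) (μ.prod ν) :=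
    shear.integrable_comp_of_integrable (hf.mul_prod hg)
  rw [← integral_integral_swap hint]
  simp_rw [integral_const_mul, integral_sub_right_eq_self, integral_mul_const]

/-- The truncated power function `x ↦ x₊ ^ c`, extended by `0` to the negative reals. At `x = 0` it
has the value of `Real.rpow`, which is `0` for every `c ≠ 0`. -/
noncomputable def truncatedPower (c : ℝ) : ℝ → ℝ :=
  (Set.Ici 0).indicator (· ^ c)

theorem truncatedPower_of_nonneg {x : ℝ} (hx : 0 ≤ x) (c : ℝ) : truncatedPower c x = x ^ c :=
  Set.indicator_of_mem hx _

theorem truncatedPower_of_neg {x : ℝ} (hx : x < 0) (c : ℝ) : truncatedPower c x = 0 :=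
  Set.indicator_of_notMem (Set.notMem_Ici.2 hx) _

theorem truncatedPower_mul {t : ℝ} (ht : 0 < t) (c x : ℝ) :
    truncatedPower c (t * x) = t ^ c * truncatedPower c x := by
  rcases lt_or_ge x 0 with hx | hx
  · rw [truncatedPower_of_neg hx, truncatedPower_of_neg (mul_neg_of_pos_of_neg ht hx), mul_zero]
  · rw [truncatedPower_of_nonneg hx, truncatedPower_of_nonneg (mul_nonneg ht.le hx),
      Real.mul_rpow ht.le hx]

theorem exp_neg_mul_truncatedPower_eq_indicator (c : ℝ) :
    (fun x ↦ Real.exp (-x) * truncatedPower c x) =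
      (Set.Ici 0).indicator fun x ↦ Real.exp (-x) * x ^ c :=
  funext fun _ ↦ (Set.indicator_mul_right _ (fun x ↦ Real.exp (-x)) (· ^ c)).symm

theorem integrable_exp_neg_mul_truncatedPower {a : ℝ} (ha : 0 < a) :
    Integrable fun x ↦ Real.exp (-x) * truncatedPower (a - 1) x := by
  rw [exp_neg_mul_truncatedPower_eq_indicator, integrable_indicator_iff measurableSet_Ici,
    integrableOn_Ici_iff_integrableOn_Ioi]
  exact Real.GammaIntegral_convergent ha

theorem integral_exp_neg_mul_truncatedPower {a : ℝ} (ha : 0 < a) :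
    ∫ x, Real.exp (-x) * truncatedPower (a - 1) x = Real.Gamma a := by
  rw [exp_neg_mul_truncatedPower_eq_indicator, integral_indicator measurableSet_Ici,
    integral_Ici_eq_integral_Ioi, Real.Gamma_eq_integral ha]

variable {ι : Type*} [Fintype ι]

/-- The Dirichlet integral over the simplex of size `t`, with exponents `a i - 1` on the coordinates
and `b - 1` on the slack `t - ∑ i, x i`. The truncation of the powers confines the integral to the
simplex. -/
noncomputable def dirichletIntegral (a : ι → ℝ) (b t : ℝ) : ℝ :=
  ∫ x : ι → ℝ, (∏ i, truncatedPower (a i - 1) (x i)) * truncatedPower (b - 1) (t - ∑ i, x i)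

theorem setIntegral_simplex_eq_dirichletIntegral (a : ι → ℝ) (b t : ℝ) :
    ∫ x in {x : ι → ℝ | (∀ i, 0 ≤ x i) ∧ ∑ i, x i ≤ t},
        (∏ i, x i ^ (a i - 1)) * (t - ∑ i, x i) ^ (b - 1) = dirichletIntegral a b t := by
  have hmeas : MeasurableSet {x : ι → ℝ | (∀ i, 0 ≤ x i) ∧ ∑ i, x i ≤ t} := by measurability
  rw [← integral_indicator hmeas, dirichletIntegral]
  congr 1 with x
  by_cases hx : x ∈ {x : ι → ℝ | (∀ i, 0 ≤ x i) ∧ ∑ i, x i ≤ t}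
  · rw [Set.indicator_of_mem hx, truncatedPower_of_nonneg (sub_nonneg.2 hx.2)]
    simp_rw [truncatedPower_of_nonneg (hx.1 _)]
  · rw [Set.indicator_of_notMem hx]
    rcases not_and_or.1 hx with hneg | hsum
    · obtain ⟨i, hi⟩ := not_forall.1 hneg
      rw [prod_eq_zero (mem_univ i) (truncatedPower_of_neg (not_le.1 hi) _), zero_mul]
    · rw [truncatedPower_of_neg (sub_neg.2 (not_le.1 hsum)), mul_zero]

theorem dirichletIntegral_of_neg {t : ℝ} (ht : t < 0) (a : ι → ℝ) (b : ℝ) :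
    dirichletIntegral a b t = 0 := by
  have hempty : {x : ι → ℝ | (∀ i, 0 ≤ x i) ∧ ∑ i, x i ≤ t} = ∅ :=
    Set.eq_empty_of_forall_notMem fun x hx ↦
      ((sum_nonneg fun i _ ↦ hx.1 i).trans hx.2).not_gt ht
  rw [← setIntegral_simplex_eq_dirichletIntegral, hempty, setIntegral_empty]

theorem dirichletIntegral_of_pos {t : ℝ} (ht : 0 < t) (a : ι → ℝ) (b : ℝ) :
    dirichletIntegral a b t = t ^ (∑ i, a i + b - 1) * dirichletIntegral a b 1 := by
  have hscale (x : ι → ℝ) :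
      (∏ i, truncatedPower (a i - 1) (t * x i)) * truncatedPower (b - 1) (t - ∑ i, t * x i) =
        t ^ (∑ i, (a i - 1) + (b - 1)) *
          ((∏ i, truncatedPower (a i - 1) (x i)) * truncatedPower (b - 1) (1 - ∑ i, x i)) := by
    rw [← mul_sum, ← mul_one_sub]
    simp_rw [truncatedPower_mul ht, prod_mul_distrib]
    rw [Real.rpow_add ht, Real.rpow_sum_of_pos ht]
    ring
  have hsubst := Measure.integral_comp_smul_of_nonneg volume
    (fun x : ι → ℝ ↦
      (∏ i, truncatedPower (a i - 1) (x i)) * truncatedPower (b - 1) (t - ∑ i, x i))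
    t (hR := ht.le)
  simp only [Pi.smul_apply, smul_eq_mul, hscale, integral_const_mul, Module.finrank_pi,
    ← Real.rpow_natCast] at hsubst
  rw [eq_inv_mul_iff_mul_eq₀ (Real.rpow_pos_of_pos ht _).ne', ← mul_assoc,
    ← Real.rpow_add ht] at hsubst
  rw [dirichletIntegral, ← hsubst, dirichletIntegral]
  congr 2
  simp only [sum_sub_distrib, sum_const, card_univ, nsmul_eq_mul, mul_one]
  ring

theorem integral_exp_neg_mul_dirichletIntegral {a : ι → ℝ} {b : ℝ} (ha : ∀ i, 0 < a i)
    (hb : 0 < b) :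
    ∫ t, Real.exp (-t) * dirichletIntegral a b t =
      (∏ i, Real.Gamma (a i)) * Real.Gamma b := by
  have hexp (t : ℝ) (x : ι → ℝ) :
      Real.exp (-t) = (∏ i, Real.exp (-x i)) * Real.exp (-(t - ∑ i, x i)) := by
    rw [← Real.exp_sum, ← Real.exp_add, sum_neg_distrib]
    ring_nf
  calc
    _ = ∫ t, ∫ x : ι → ℝ, (∏ i, Real.exp (-x i) * truncatedPower (a i - 1) (x i)) *
          (Real.exp (-(t - ∑ i, x i)) * truncatedPower (b - 1) (t - ∑ i, x i)) := by
      simp_rw [dirichletIntegral, ← integral_const_mul]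
      refine integral_congr_ae (.of_forall fun t ↦ integral_congr_ae (.of_forall fun x ↦ ?_))
      dsimp only
      rw [hexp t x, prod_mul_distrib]
      ring
    _ = (∫ x : ι → ℝ, ∏ i, Real.exp (-x i) * truncatedPower (a i - 1) (x i)) *
          ∫ s, Real.exp (-s) * truncatedPower (b - 1) s :=
      integral_integral_mul_comp_sub (φ := fun x : ι → ℝ ↦ ∑ i, x i) (by fun_prop)
        (Integrable.fintype_prod fun i ↦ integrable_exp_neg_mul_truncatedPower (ha i))
        (integrable_exp_neg_mul_truncatedPower hb)
    _ = (∏ i, Real.Gamma (a i)) * Real.Gamma b := by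
      rw [integral_fintype_prod_volume_eq_prod fun i x ↦
        Real.exp (-x) * truncatedPower (a i - 1) x]
      simp_rw [integral_exp_neg_mul_truncatedPower (ha _), integral_exp_neg_mul_truncatedPower hb]

theorem dirichletIntegral_one {a : ι → ℝ} {b : ℝ} (ha : ∀ i, 0 < a i) (hb : 0 < b) :
    dirichletIntegral a b 1 =
      (∏ i, Real.Gamma (a i)) * Real.Gamma b / Real.Gamma (∑ i, a i + b) := by
  have hpos : 0 < ∑ i, a i + b := add_pos_of_nonneg_of_pos (sum_nonneg fun i _ ↦ (ha i).le) hb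
  have hae : ∀ᵐ t : ℝ, Real.exp (-t) * dirichletIntegral a b t =
      Real.exp (-t) * truncatedPower (∑ i, a i + b - 1) t * dirichletIntegral a b 1 := by
    filter_upwards [Measure.ae_ne volume 0] with t ht
    rcases ht.lt_or_gt with ht | ht
    · simp only [dirichletIntegral_of_neg ht, truncatedPower_of_neg ht, mul_zero, zero_mul]
    · rw [dirichletIntegral_of_pos ht, truncatedPower_of_nonneg ht.le, mul_assoc]
  rw [eq_div_iff (Real.Gamma_pos_of_pos hpos).ne', mul_comm,
    ← integral_exp_neg_mul_dirichletIntegral ha hb, integral_congr_ae hae, integral_mul_const,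
    integral_exp_neg_mul_truncatedPower hpos]

theorem stmt_6_general {a : ι → ℝ} {b t : ℝ} (ha : ∀ i, 0 < a i) (hb : 0 < b) (ht : 0 < t) :
    ∫ x in {x : ι → ℝ | (∀ i, 0 ≤ x i) ∧ ∑ i, x i ≤ t},
        (∏ i, x i ^ (a i - 1)) * (t - ∑ i, x i) ^ (b - 1) =
      t ^ (∑ i, a i + b - 1) *
        ((∏ i, Real.Gamma (a i)) * Real.Gamma b / Real.Gamma (∑ i, a i + b)) := by
  rw [setIntegral_simplex_eq_dirichletIntegral, dirichletIntegral_of_pos ht,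
    dirichletIntegral_one ha hb]

/-- The normalizing constant of the Dirichlet distribution:
`∫_{Δ_n} Π x_i^{a_i-1} (1-Σx_i)^{a_{n+1}-1} dx = Π Γ(a_i) / Γ(Σ a_i)`. -/
theorem stmt_6 (n : ℕ) (hn : 1 ≤ n) (a : Fin (n + 1) → ℝ) (ha : ∀ i, 0 < a i) :
    ∫ x in {x : Fin n → ℝ | (∀ i, 0 ≤ x i) ∧ ∑ i, x i ≤ 1},
        (∏ i : Fin n, x i ^ (a i.castSucc - 1)) * (1 - ∑ i, x i) ^ (a (Fin.last n) - 1)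
      = (∏ k, Real.Gamma (a k)) / Real.Gamma (∑ k, a k) := by
  rw [stmt_6_general (a := fun i : Fin n ↦ a i.castSucc) (fun i ↦ ha i.castSucc) (ha (Fin.last n))
    one_pos, Real.one_rpow, one_mul, Fin.prod_univ_castSucc, Fin.sum_univ_castSucc]
end

section
/- Let N ≥ 1 and let I_1, …, I_{n+1} be a partition of {1,…,N} into disjoint nonempty sets with |I_i| = p_i. Let σ be the uniform (rotation-invariant) probability measure on the unit sphere S^{N−1} ⊂ ℝ^N, and let T : S^{N−1} → ℝ^n be the map T(y) = (x_1(y), …, x_n(y)) with x_k(y) := Σ_{r ∈ I_k} y_r^2. Then the pushforward measure T_*σ equals the Dirichlet distribution D_{(p_1/2, …, p_{n+1}/2)} on the simplex Δ_n. -/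
open Finset MeasureTheory

/-- The Dirichlet distribution `D_a` on the simplex `Δ_n ⊆ ℝ^n`, as a measure on `ℝ^n` given
by its density with respect to Lebesgue measure. -/
noncomputable def dirichletMeasure7 (n : ℕ) (a : Fin (n + 1) → ℝ) : Measure (Fin n → ℝ) :=
  volume.withDensity fun x =>
    ENNReal.ofReal
      (if (∀ i, 0 ≤ x i) ∧ ∑ i, x i ≤ 1 then
        (Real.Gamma (∑ k, a k) / ∏ k, Real.Gamma (a k))
          * (∏ i : Fin n, x i ^ (a i.castSucc - 1))
          * (1 - ∑ i, x i) ^ (a (Fin.last n) - 1)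
      else 0)

/-!
A rotation-invariant probability measure with no mass at the origin is determined, as far as the
direction `y / ‖y‖` is concerned, by its invariance: on the sphere, the characteristic function of
such a measure depends only on the norm, and averaging it against a second invariant measure gives
the same double integral for both. Hence `σ` may be replaced by the standard Gaussian measure as
long as one looks at the scale-invariant proportions `∑_{r ∈ I_k} y_r² / ∑_j ∑_{r ∈ I_j} y_r²`,
which on the sphere are the block sums themselves.

Under the Gaussian measure each `y_r²` has law Gamma(1/2, 1/2), so the block sums are independent
with laws Gamma(p_k/2, 1/2). The proportions of independent Gamma variables with a common rate
are Dirichlet distributed and independent of the total: in the coordinates `x = s • b`, with `s` the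
total and `b` barycentric coordinates, the product of Gamma densities times the Jacobian `s ^ n`
factors as the Dirichlet density in `b` times a Gamma density in `s`.
-/

open ProbabilityTheory Measure
open scoped ENNReal Function RealInnerProductSpace

section PiWithDensity

variable {ι : Type*} {X : ι → Type*} [∀ i, MeasurableSpace (X i)]
  {μ : ∀ i, Measure (X i)} [∀ i, SigmaFinite (μ i)] {g : ∀ i, X i → ℝ≥0∞}

theorem lmarginal_prod [DecidableEq ι] (hg : ∀ i, Measurable (g i)) (s : Finset ι) :
    ∫⋯∫⁻_s, (fun x ↦ ∏ i ∈ s, g i (x i)) ∂μ = fun _ ↦ ∏ i ∈ s, ∫⁻ u, g i u ∂μ i := by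
  induction s using Finset.induction_on with
  | empty => simp
  | insert i s hi ih =>
    have slice (x : ∀ i, X i) : ∫⁻ u, ∏ j ∈ insert i s, g j (Function.update x i u j) ∂μ i
        = (∫⁻ u, g i u ∂μ i) * ∏ j ∈ s, g j (x j) := by
      rw [← lintegral_mul_const _ (hg i)]
      refine lintegral_congr fun u ↦ ?_
      rw [prod_insert hi, Function.update_self]
      congr 1
      exact prod_congr rfl fun j hj ↦ by rw [Function.update_of_ne (ne_of_mem_of_not_mem hj hi)]
    rw [lmarginal_insert' _ (by fun_prop) hi]
    simp only [slice]
    ext x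
    rw [prod_insert hi, ← congrFun ih x]
    exact lintegral_const_mul _ (by fun_prop)

variable [Fintype ι]

theorem lintegral_fintype_prod_eq_prod (hg : ∀ i, Measurable (g i)) :
    ∫⁻ x, ∏ i, g i (x i) ∂Measure.pi μ = ∏ i, ∫⁻ u, g i u ∂μ i := by
  classical
  rcases isEmpty_or_nonempty (∀ i, X i) with hempty | ⟨⟨x⟩⟩
  · obtain ⟨i, hi⟩ := isEmpty_pi.1 hempty
    rw [lintegral_of_isEmpty, prod_eq_zero (mem_univ i) (lintegral_of_isEmpty _ _)]
  · rw [lintegral_eq_lmarginal_univ x, lmarginal_prod hg]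

theorem pi_withDensity (hg : ∀ i, Measurable (g i))
    [∀ i, SigmaFinite ((μ i).withDensity (g i))] :
    Measure.pi (fun i ↦ (μ i).withDensity (g i))
      = (Measure.pi μ).withDensity fun x ↦ ∏ i, g i (x i) := by
  classical
  refine pi_eq fun s hs ↦ ?_
  have indicator_pi (x : ∀ i, X i) : (Set.univ.pi s).indicator (fun x ↦ ∏ i, g i (x i)) x
      = ∏ i, (s i).indicator (g i) (x i) := by
    by_cases hx : ∀ i, x i ∈ s i
    · simp [hx]
    · obtain ⟨i, hi⟩ := not_forall.1 hx
      rw [Set.indicator_of_notMem (by simpa using hx),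
        prod_eq_zero (mem_univ i) (Set.indicator_of_notMem hi _)]
  rw [withDensity_apply _ (.univ_pi hs), ← lintegral_indicator (.univ_pi hs)]
  simp_rw [indicator_pi, lintegral_fintype_prod_eq_prod fun i ↦ (hg i).indicator (hs i),
    withDensity_apply _ (hs _), lintegral_indicator (hs _)]

end PiWithDensity

theorem lintegral_eq_ofReal_abs_pow_mul_lintegral_smul {n : ℕ} {s : ℝ} (hs : s ≠ 0)
    {f : (Fin n → ℝ) → ℝ≥0∞} (hf : Measurable f) :
    ∫⁻ x, f x = ENNReal.ofReal (|s| ^ n) * ∫⁻ z, f (s • z) := by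
  rw [← lintegral_map hf (measurable_const_smul s), map_addHaar_smul _ hs,
    lintegral_smul_measure, smul_eq_mul, ← mul_assoc, ← ENNReal.ofReal_mul (by positivity),
    Module.finrank_fin_fun, abs_inv, abs_pow, mul_inv_cancel₀ (by positivity),
    ENNReal.ofReal_one, one_mul]

@[fun_prop]
theorem measurable_gammaPDF (a r : ℝ) : Measurable (gammaPDF a r) :=
  (measurable_gammaPDFReal a r).ennreal_ofReal

@[fun_prop]
theorem measurable_finSnoc {X Y : Type*} [MeasurableSpace X] [MeasurableSpace Y] {n : ℕ}
    {f : X → Fin n → Y} {g : X → Y} (hf : Measurable f) (hg : Measurable g) :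
    Measurable fun x ↦ (Fin.snoc (f x) (g x) : Fin (n + 1) → Y) :=
  measurable_pi_lambda _ fun k ↦ by
    refine Fin.lastCases ?_ (fun i ↦ ?_) k
    · simpa only [Fin.snoc_last] using hg
    · simp only [Fin.snoc_castSucc]
      fun_prop

/-- The barycentric coordinates of `z` with respect to the vertices `e₁, …, eₙ, 0` of the standard
simplex: the coordinates of `z`, followed by one minus their sum. -/
def simplexCoord {n : ℕ} (z : Fin n → ℝ) : Fin (n + 1) → ℝ :=
  Fin.snoc z (1 - ∑ i, z i)

section SimplexCoord

variable {n : ℕ} (z : Fin n → ℝ)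

@[simp]
theorem simplexCoord_castSucc (i : Fin n) : simplexCoord z i.castSucc = z i :=
  Fin.snoc_castSucc ..

@[simp]
theorem simplexCoord_last : simplexCoord z (Fin.last n) = 1 - ∑ i, z i :=
  Fin.snoc_last ..

@[simp]
theorem sum_simplexCoord : ∑ k, simplexCoord z k = 1 := by
  simp [Fin.sum_univ_castSucc]

theorem simplexCoord_nonneg_iff :
    (∀ k, 0 ≤ simplexCoord z k) ↔ (∀ i, 0 ≤ z i) ∧ ∑ i, z i ≤ 1 := by
  simp [Fin.forall_fin_succ']

@[fun_prop]
theorem measurable_simplexCoord : Measurable (simplexCoord (n := n)) :=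
  measurable_finSnoc measurable_id (by fun_prop)

theorem snoc_smul_sub_sum (s : ℝ) :
    (Fin.snoc (s • z) (s - ∑ i, (s • z) i) : Fin (n + 1) → ℝ) = s • simplexCoord z := by
  ext k
  refine Fin.lastCases ?_ (fun i ↦ ?_) k <;> simp [mul_sub, mul_sum]

end SimplexCoord

theorem lintegral_eq_lintegral_smul_simplexCoord {n : ℕ} {f : (Fin (n + 1) → ℝ) → ℝ≥0∞}
    (hf : Measurable f) :
    ∫⁻ x, f x = ∫⁻ s, ∫⁻ z, ENNReal.ofReal (|s| ^ n) * f (s • simplexCoord z) := by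
  calc
    _ = ∫⁻ y : Fin n → ℝ, ∫⁻ t : ℝ, f (Fin.snoc y t) := by
      rw [← ((volume_preserving_piFinSuccAbove (fun _ : Fin (n + 1) ↦ ℝ)
        (Fin.last n)).symm).lintegral_comp hf, volume_eq_prod,
        lintegral_prod_symm' _ (by fun_prop)]
      simp [MeasurableEquiv.piFinSuccAbove_symm_apply, Fin.insertNthEquiv_last, Fin.snocEquiv]
    _ = ∫⁻ y : Fin n → ℝ, ∫⁻ s, f (Fin.snoc y (s - ∑ i, y i)) :=
      lintegral_congr fun y ↦ (lintegral_sub_right_eq_self _ _).symm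
    _ = ∫⁻ s, ∫⁻ y : Fin n → ℝ, f (Fin.snoc y (s - ∑ i, y i)) :=
      lintegral_lintegral_swap (by fun_prop)
    _ = _ := by
      refine lintegral_congr_ae ?_
      filter_upwards [ae_ne volume 0] with s hs
      rw [lintegral_eq_ofReal_abs_pow_mul_lintegral_smul hs (by fun_prop),
        ← lintegral_const_mul _ (by fun_prop)]
      simp_rw [snoc_smul_sub_sum]

/-- The density of the Dirichlet distribution with parameters `a`, as a function of all the
barycentric coordinates `b` of a point of the simplex. -/
noncomputable def dirichletPDF {ι : Type*} [Fintype ι] (a b : ι → ℝ) : ℝ≥0∞ :=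
  open Classical in
  ENNReal.ofReal (if ∀ k, 0 ≤ b k then
    Real.Gamma (∑ k, a k) / (∏ k, Real.Gamma (a k)) * ∏ k, b k ^ (a k - 1) else 0)

theorem dirichletMeasure7_eq_withDensity {n : ℕ} (a : Fin (n + 1) → ℝ) :
    dirichletMeasure7 n a = volume.withDensity fun z ↦ dirichletPDF a (simplexCoord z) := by
  simp only [dirichletMeasure7, dirichletPDF, simplexCoord_nonneg_iff, Fin.prod_univ_castSucc,
    simplexCoord_castSucc, simplexCoord_last, mul_assoc]

section DirichletPDF

variable {ι : Type*} [Fintype ι] {a b : ι → ℝ} {r s : ℝ}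

@[fun_prop]
theorem measurable_dirichletPDF (a : ι → ℝ) : Measurable (dirichletPDF a) := by
  classical
  refine (Measurable.ite ?_ (by fun_prop) measurable_const).ennreal_ofReal
  rw [Set.ofPred_forall]
  exact MeasurableSet.iInter fun k ↦ measurableSet_le measurable_const (measurable_pi_apply k)

theorem prod_gammaPDF_mul_of_nonneg (ha : ∀ k, 0 < a k) (hb : ∀ k, 0 ≤ b k)
    (hsum : ∑ k, b k = 1) (hr : 0 < r) (hs : 0 < s) :
    ∏ k, gammaPDF (a k) r (s * b k) = ENNReal.ofReal (r ^ (∑ k, a k) / (∏ k, Real.Gamma (a k)) *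
      (s ^ (∑ k, (a k - 1)) * ∏ k, b k ^ (a k - 1)) * Real.exp (-(r * s))) := by
  have hΓ (k) : 0 < Real.Gamma (a k) := Real.Gamma_pos_of_pos (ha k)
  have hexp : ∏ k, Real.exp (-(r * (s * b k))) = Real.exp (-(r * s)) := by
    rw [← Real.exp_sum, sum_neg_distrib, ← mul_sum, ← mul_sum, hsum, mul_one]
  rw [prod_congr rfl fun k _ ↦ gammaPDF_of_nonneg (mul_nonneg hs.le (hb k)),
    ← ENNReal.ofReal_prod_of_nonneg fun k _ ↦ by have := hΓ k; have := hb k; positivity]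
  simp_rw [Real.mul_rpow hs.le (hb _), prod_mul_distrib, prod_div_distrib, hexp,
    ← Real.rpow_sum_of_pos hr, ← Real.rpow_sum_of_pos hs]

theorem prod_gammaPDF_mul_of_neg (hsum : ∑ k, b k = 1) (hs : s < 0) :
    ∏ k, gammaPDF (a k) r (s * b k) = 0 := by
  obtain ⟨k, -, hk⟩ : ∃ k ∈ univ, 0 < b k := exists_lt_of_sum_lt (by simp [hsum])
  exact prod_eq_zero (mem_univ k) (gammaPDF_of_neg (mul_neg_of_neg_of_pos hs hk))

theorem ofReal_abs_pow_mul_prod_gammaPDF_mul {n : ℕ} (hn : Fintype.card ι = n + 1)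
    (ha : ∀ k, 0 < a k) (hsum : ∑ k, b k = 1) (hr : 0 < r) (hs : s ≠ 0) :
    ENNReal.ofReal (|s| ^ n) * ∏ k, gammaPDF (a k) r (s * b k)
      = dirichletPDF a b * gammaPDF (∑ k, a k) r s := by
  rcases hs.lt_or_gt with hs | hs
  · rw [gammaPDF_of_neg hs, prod_gammaPDF_mul_of_neg hsum hs, mul_zero, mul_zero]
  by_cases hb : ∀ k, 0 ≤ b k
  · have : Nonempty ι := Fintype.card_pos_iff.1 (by omega)
    have hΓ (k) : 0 < Real.Gamma (a k) := Real.Gamma_pos_of_pos (ha k)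
    have hΓsum : 0 < Real.Gamma (∑ k, a k) :=
      Real.Gamma_pos_of_pos (sum_pos (fun k _ ↦ ha k) univ_nonempty)
    have hscale : s ^ (∑ k, a k - 1) = s ^ n * s ^ (∑ k, (a k - 1)) := by
      rw [← Real.rpow_natCast, ← Real.rpow_add hs, sum_sub_distrib, sum_const, card_univ, hn]
      congr 1
      push_cast [nsmul_eq_mul]
      ring
    have hprod : 0 ≤ ∏ k, b k ^ (a k - 1) := prod_nonneg fun k _ ↦ Real.rpow_nonneg (hb k) _
    have hprodΓ : 0 < ∏ k, Real.Gamma (a k) := prod_pos fun k _ ↦ hΓ k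
    rw [prod_gammaPDF_mul_of_nonneg ha hb hsum hr hs, dirichletPDF, if_pos hb,
      gammaPDF_of_nonneg hs.le, ← ENNReal.ofReal_mul (by positivity),
      ← ENNReal.ofReal_mul (by positivity), abs_of_pos hs, hscale]
    congr 1
    field_simp
  · rw [dirichletPDF, if_neg hb, ENNReal.ofReal_zero, zero_mul]
    obtain ⟨k, hk⟩ := not_forall.1 hb
    rw [prod_eq_zero (mem_univ k) (gammaPDF_of_neg (mul_neg_of_pos_of_neg hs (not_le.1 hk))),
      mul_zero]

end DirichletPDF

section GammaMeasure

variable {n : ℕ} {a : Fin (n + 1) → ℝ} {r : ℝ}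

theorem pi_gammaMeasure_map_proportions_prodMk_sum (ha : ∀ k, 0 < a k) (hr : 0 < r) :
    (Measure.pi fun k ↦ gammaMeasure (a k) r).map
        (fun x ↦ (fun i : Fin n ↦ x i.castSucc / ∑ k, x k, ∑ k, x k))
      = (dirichletMeasure7 n a).prod (gammaMeasure (∑ k, a k) r) := by
  have hprob (k) := isProbabilityMeasure_gammaMeasure (ha k) hr
  have := isProbabilityMeasure_gammaMeasure (sum_pos (fun k _ ↦ ha k) univ_nonempty) hr
  unfold gammaMeasure at *
  refine ext_of_lintegral _ fun f hf ↦ ?_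
  rw [lintegral_map hf (by fun_prop), pi_withDensity (fun k ↦ measurable_gammaPDF _ _),
    ← volume_pi, lintegral_withDensity_eq_lintegral_mul _ (by fun_prop) (by fun_prop),
    lintegral_eq_lintegral_smul_simplexCoord (by fun_prop), dirichletMeasure7_eq_withDensity,
    prod_withDensity (by fun_prop) (by fun_prop),
    lintegral_withDensity_eq_lintegral_mul _ (by fun_prop) hf,
    lintegral_prod_symm' _ (by fun_prop)]
  refine lintegral_congr_ae ?_
  filter_upwards [ae_ne volume 0] with s hs
  refine lintegral_congr fun z ↦ ?_
  simp only [Pi.mul_apply, Pi.smul_apply, smul_eq_mul, ← mul_sum, sum_simplexCoord, mul_one,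
    simplexCoord_castSucc, mul_div_cancel_left₀ _ hs]
  rw [← mul_assoc, ofReal_abs_pow_mul_prod_gammaPDF_mul (by simp) ha (sum_simplexCoord z) hr hs]

theorem isProbabilityMeasure_dirichletMeasure7 (ha : ∀ k, 0 < a k) :
    IsProbabilityMeasure (dirichletMeasure7 n a) := by
  have hprob (k) := isProbabilityMeasure_gammaMeasure (ha k) one_pos
  have := isProbabilityMeasure_gammaMeasure (sum_pos (fun k _ ↦ ha k) univ_nonempty) one_pos
  have h := congrArg (· Set.univ) (pi_gammaMeasure_map_proportions_prodMk_sum ha one_pos)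
  rw [map_apply (by fun_prop) .univ, ← Set.univ_prod_univ, prod_prod] at h
  exact ⟨by simpa using h.symm⟩

theorem pi_gammaMeasure_map_proportions (ha : ∀ k, 0 < a k) (hr : 0 < r) :
    (Measure.pi fun k ↦ gammaMeasure (a k) r).map (fun x (i : Fin n) ↦ x i.castSucc / ∑ k, x k)
      = dirichletMeasure7 n a := by
  have := isProbabilityMeasure_gammaMeasure (sum_pos (fun k _ ↦ ha k) univ_nonempty) hr
  have h := congrArg Measure.fst (pi_gammaMeasure_map_proportions_prodMk_sum ha hr)
  rwa [fst_prod, fst_map_prodMk (by fun_prop)] at h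

theorem pi_fin_gammaMeasure_map_sum (ha : ∀ k, 0 < a k) (hr : 0 < r) :
    (Measure.pi fun k ↦ gammaMeasure (a k) r).map (fun x ↦ ∑ k, x k)
      = gammaMeasure (∑ k, a k) r := by
  have := isProbabilityMeasure_dirichletMeasure7 ha
  have := isProbabilityMeasure_gammaMeasure (sum_pos (fun k _ ↦ ha k) univ_nonempty) hr
  have h := congrArg Measure.snd (pi_gammaMeasure_map_proportions_prodMk_sum ha hr)
  rwa [snd_prod, snd_map_prodMk (by fun_prop)] at h

end GammaMeasure

theorem pi_map_restrict_of_pairwise_disjoint {ι κ : Type*} [Fintype ι] [Fintype κ]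
    {X : ι → Type*} [∀ i, MeasurableSpace (X i)] (μ : ∀ i, Measure (X i))
    [∀ i, IsProbabilityMeasure (μ i)] {I : κ → Finset ι} (hI : Pairwise (Disjoint on I)) :
    (Measure.pi μ).map (fun x k ↦ (I k).restrict x)
      = Measure.pi fun k ↦ Measure.pi fun i : I k ↦ μ i := by
  have hinj : Function.Injective fun q : (k : κ) × I k ↦ (q.2 : ι) := by
    rintro ⟨k, i, hi⟩ ⟨l, j, hj⟩ (rfl : i = j)
    obtain rfl : k = l := by
      by_contra hkl
      exact disjoint_left.1 (hI hkl) hi hj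
    rfl
  simp_rw [← infinitePi_eq_pi]
  rw [← infinitePi_map_piCurry fun k (i : I k) ↦ μ i, ← map_infinitePi_infinitePi_of_inj hinj,
    Measure.map_map (by fun_prop) (by fun_prop)]
  rfl

section GammaSums

variable {ι : Type*} [Fintype ι] {a : ι → ℝ} {r : ℝ}

theorem pi_gammaMeasure_map_sum [Nonempty ι] (ha : ∀ i, 0 < a i) (hr : 0 < r) :
    (Measure.pi fun i ↦ gammaMeasure (a i) r).map (fun x ↦ ∑ i, x i)
      = gammaMeasure (∑ i, a i) r := by
  have hprob (i) := isProbabilityMeasure_gammaMeasure (ha i) hr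
  obtain ⟨n, hn⟩ := Nat.exists_eq_add_one.2 (Fintype.card_pos (α := ι))
  let e : Fin (n + 1) ≃ ι := (Fintype.equivFinOfCardEq hn).symm
  rw [← pi_map_piCongrLeft e, Measure.map_map (by fun_prop) (by fun_prop), ← e.sum_comp,
    ← pi_fin_gammaMeasure_map_sum (fun k ↦ ha (e k)) hr]
  congr 1
  ext x
  simp [← e.sum_comp, MeasurableEquiv.piCongrLeft]

theorem pi_gammaMeasure_map_sum_of_pairwise_disjoint {κ : Type*} [Fintype κ] {I : κ → Finset ι}
    (hI : Pairwise (Disjoint on I)) (hne : ∀ k, (I k).Nonempty) (ha : ∀ i, 0 < a i) (hr : 0 < r) :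
    (Measure.pi fun i ↦ gammaMeasure (a i) r).map (fun x k ↦ ∑ i ∈ I k, x i)
      = Measure.pi fun k ↦ gammaMeasure (∑ i ∈ I k, a i) r := by
  have hprob (i) := isProbabilityMeasure_gammaMeasure (ha i) hr
  have hsum (k) : (Measure.pi fun i : I k ↦ gammaMeasure (a i) r).map (fun x ↦ ∑ i, x i)
      = gammaMeasure (∑ i ∈ I k, a i) r := by
    have := (hne k).to_subtype
    rw [← sum_coe_sort, pi_gammaMeasure_map_sum (fun i : I k ↦ ha i) hr]
  have : ∀ k, IsProbabilityMeasure
      ((Measure.pi fun i : I k ↦ gammaMeasure (a i) r).map fun x ↦ ∑ i, x i) :=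
    fun k ↦ isProbabilityMeasure_map (by fun_prop)
  simp_rw [← hsum]
  rw [← pi_map_pi (fun k ↦ by fun_prop),
    ← pi_map_restrict_of_pairwise_disjoint (fun i ↦ gammaMeasure (a i) r) hI,
    Measure.map_map (by fun_prop) (by fun_prop)]
  congr 1
  ext x k
  exact (sum_coe_sort (I k) x).symm

end GammaSums

theorem lintegral_comp_abs (f : ℝ → ℝ≥0∞) :
    ∫⁻ x, f |x| = 2 * ∫⁻ x in Set.Ioi 0, f x := by
  have hneg : ∫⁻ x in Set.Iic 0, f |x| = ∫⁻ x in Set.Ioi 0, f |x| := by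
    rw [← setLIntegral_congr Iio_ae_eq_Iic,
      ← (measurePreserving_neg volume).setLIntegral_comp_preimage_emb
        (MeasurableEquiv.neg ℝ).measurableEmbedding]
    simp
  rw [← lintegral_add_compl _ (measurableSet_Ioi (a := (0 : ℝ))), Set.compl_Ioi, hneg, ← two_mul,
    setLIntegral_congr_fun measurableSet_Ioi fun x hx ↦ by rw [abs_of_pos hx]]

theorem lintegral_abs_mul_comp_sq (f : ℝ → ℝ≥0∞) :
    ∫⁻ x, ENNReal.ofReal |x| * f (x ^ 2) = ∫⁻ u in Set.Ioi 0, f u := by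
  have himage : (fun x : ℝ ↦ x ^ 2) '' Set.Ioi 0 = Set.Ioi 0 :=
    Set.Subset.antisymm (Set.image_subset_iff.2 fun x hx ↦ pow_pos (Set.mem_Ioi.1 hx) 2)
      fun u hu ↦ ⟨√u, Real.sqrt_pos.2 hu, Real.sq_sqrt (le_of_lt hu)⟩
  have hinj : Set.InjOn (fun x : ℝ ↦ x ^ 2) (Set.Ioi 0) :=
    fun x hx y hy h ↦ (pow_left_inj₀ (le_of_lt hx) (le_of_lt hy) two_ne_zero).1 h
  calc
    _ = ∫⁻ x, ENNReal.ofReal |x| * f (|x| ^ 2) := by simp only [sq_abs]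
    _ = 2 * ∫⁻ x in Set.Ioi 0, ENNReal.ofReal x * f (x ^ 2) :=
      lintegral_comp_abs fun x ↦ ENNReal.ofReal x * f (x ^ 2)
    _ = ∫⁻ x in Set.Ioi 0, 2 * (ENNReal.ofReal x * f (x ^ 2)) :=
      (lintegral_const_mul' _ _ (by simp)).symm
    _ = ∫⁻ x in Set.Ioi 0, ENNReal.ofReal |(2 : ℕ) * x ^ (2 - 1)| * f (x ^ 2) := by
      refine setLIntegral_congr_fun measurableSet_Ioi fun x (hx : 0 < x) ↦ ?_
      simp [abs_of_pos hx, ENNReal.ofReal_mul, mul_assoc]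
    _ = ∫⁻ u in (fun x : ℝ ↦ x ^ 2) '' Set.Ioi 0, f u :=
      (lintegral_image_eq_lintegral_abs_deriv_mul measurableSet_Ioi
        (fun x _ ↦ (hasDerivAt_pow 2 x).hasDerivWithinAt) hinj f).symm
    _ = ∫⁻ u in Set.Ioi 0, f u := by rw [himage]

theorem gaussianPDF_eq_abs_mul_gammaPDF_sq {x : ℝ} (hx : x ≠ 0) :
    gaussianPDF 0 1 x = ENNReal.ofReal |x| * gammaPDF (1 / 2) (1 / 2) (x ^ 2) := by
  have hx0 : 0 < |x| := abs_pos.2 hx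
  have hpow : (x ^ 2) ^ ((1 / 2 : ℝ) - 1) = |x|⁻¹ := by
    rw [← sq_abs, ← Real.rpow_natCast, ← Real.rpow_mul hx0.le, ← Real.rpow_neg_one]
    norm_num
  have hconst : (1 / 2 : ℝ) ^ (1 / 2 : ℝ) / Real.Gamma (1 / 2) = (√(2 * Real.pi * 1))⁻¹ := by
    rw [Real.Gamma_one_half_eq, ← Real.sqrt_eq_rpow, ← Real.sqrt_div (by norm_num), ← Real.sqrt_inv]
    congr 1
    field_simp
  have hexp : -(x - 0) ^ 2 / (2 * 1) = -(1 / 2 * x ^ 2) := by ring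
  rw [gammaPDF_of_nonneg (sq_nonneg x), ← ENNReal.ofReal_mul hx0.le, gaussianPDF, gaussianPDFReal,
    NNReal.coe_one, hpow, hconst, hexp]
  congr 1
  field_simp

theorem lintegral_gammaMeasure {a r : ℝ} {f : ℝ → ℝ≥0∞} (hf : Measurable f) :
    ∫⁻ u, f u ∂gammaMeasure a r = ∫⁻ u in Set.Ioi 0, gammaPDF a r u * f u := by
  have hsupp : Function.support (fun u ↦ gammaPDF a r u * f u) ⊆ Set.Ici 0 := fun u hu ↦
    not_lt.1 fun hneg : u < 0 ↦ hu (by simp only [gammaPDF_of_neg hneg, zero_mul])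
  rw [gammaMeasure, lintegral_withDensity_eq_lintegral_mul _
    (measurable_gammaPDF a r) hf, setLIntegral_congr Ioi_ae_eq_Ici,
    setLIntegral_eq_of_support_subset hsupp]
  rfl

theorem gaussianReal_map_sq :
    (gaussianReal 0 1).map (fun x ↦ x ^ 2) = gammaMeasure (1 / 2) (1 / 2) := by
  refine ext_of_lintegral _ fun f hf ↦ ?_
  rw [lintegral_map hf (by fun_prop), gaussianReal_of_var_ne_zero _ one_ne_zero,
    lintegral_withDensity_eq_lintegral_mul _ (by fun_prop) (by fun_prop),
    lintegral_gammaMeasure hf, ← lintegral_abs_mul_comp_sq]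
  refine lintegral_congr_ae ?_
  filter_upwards [ae_ne volume 0] with x hx
  rw [Pi.mul_apply, gaussianPDF_eq_abs_mul_gammaPDF_sq hx, mul_assoc]

theorem pi_gaussianReal_map_sum_sq_of_pairwise_disjoint {ι κ : Type*} [Fintype ι] [Fintype κ]
    {I : κ → Finset ι} (hI : Pairwise (Disjoint on I)) (hne : ∀ k, (I k).Nonempty) :
    (Measure.pi fun _ : ι ↦ gaussianReal 0 1).map (fun x k ↦ ∑ i ∈ I k, x i ^ 2)
      = Measure.pi fun k ↦ gammaMeasure ((#(I k) : ℝ) / 2) (1 / 2) := by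
  have : IsProbabilityMeasure ((gaussianReal 0 1).map fun x ↦ x ^ 2) :=
    isProbabilityMeasure_map (by fun_prop)
  have hcard (k) : (#(I k) : ℝ) / 2 = ∑ i ∈ I k, 1 / 2 := by
    rw [sum_const, nsmul_eq_mul, mul_one_div]
  simp_rw [hcard]
  rw [← pi_gammaMeasure_map_sum_of_pairwise_disjoint hI hne (by norm_num) (by norm_num),
    ← gaussianReal_map_sq, ← pi_map_pi (fun _ ↦ by fun_prop),
    Measure.map_map (by fun_prop) (by fun_prop)]
  rfl

section RotationInvariant

variable {E : Type*} [NormedAddCommGroup E] [InnerProductSpace ℝ E] [MeasurableSpace E]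
  [BorelSpace E] {σ τ : Measure E}

theorem charFun_eq_of_norm_eq (hσ : ∀ e : E ≃ₗᵢ[ℝ] E, σ.map e = σ) {s t : E} (h : ‖s‖ = ‖t‖) :
    charFun σ s = charFun σ t := by
  let e := (ℝ ∙ (s - t))ᗮ.reflection
  have he : e s = t := Submodule.reflection_sub h
  calc
    charFun σ s = ∫ x, Complex.exp (⟪e x, e s⟫ * Complex.I) ∂σ := by
      simp only [charFun_apply, e.inner_map_map]
    _ = ∫ y, Complex.exp (⟪y, t⟫ * Complex.I) ∂σ.map e := by
      rw [integral_map (by fun_prop) (Continuous.aestronglyMeasurable (by fun_prop)), he]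
    _ = charFun σ t := by rw [hσ e, charFun_apply]

@[fun_prop]
theorem measurable_normalize : Measurable (NormedSpace.normalize : E → E) := by
  unfold NormedSpace.normalize
  fun_prop

theorem map_normalize_map_linearIsometryEquiv (hσ : ∀ e : E ≃ₗᵢ[ℝ] E, σ.map e = σ)
    (e : E ≃ₗᵢ[ℝ] E) : (σ.map NormedSpace.normalize).map e = σ.map NormedSpace.normalize := by
  rw [Measure.map_map (by fun_prop) measurable_normalize]
  conv_rhs => rw [← hσ e, Measure.map_map measurable_normalize (by fun_prop)]
  congr 1
  ext x
  simp [NormedSpace.normalize]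

theorem charFun_eq_integral_charFun_norm_smul [IsProbabilityMeasure τ]
    (hσ : ∀ e : E ≃ₗᵢ[ℝ] E, σ.map e = σ) (hτ : ∀ᵐ x ∂τ, ‖x‖ = 1) (t : E) :
    charFun σ t = ∫ y, charFun σ (‖t‖ • y) ∂τ := by
  have hconst : (fun y ↦ charFun σ (‖t‖ • y)) =ᵐ[τ] fun _ ↦ charFun σ t := by
    filter_upwards [hτ] with y hy
    exact charFun_eq_of_norm_eq hσ (by simp [norm_smul, hy])
  rw [integral_congr_ae hconst, integral_const, probReal_univ, one_smul]

variable [SecondCountableTopology E] [CompleteSpace E] [IsProbabilityMeasure σ]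
  [IsProbabilityMeasure τ]

theorem eq_of_map_linearIsometryEquiv_eq (hσ : ∀ e : E ≃ₗᵢ[ℝ] E, σ.map e = σ)
    (hτ : ∀ e : E ≃ₗᵢ[ℝ] E, τ.map e = τ) (hσ1 : ∀ᵐ x ∂σ, ‖x‖ = 1) (hτ1 : ∀ᵐ x ∂τ, ‖x‖ = 1) :
    σ = τ := by
  refine ext_of_charFun (funext fun t ↦ ?_)
  rw [charFun_eq_integral_charFun_norm_smul hσ hτ1, charFun_eq_integral_charFun_norm_smul hτ hσ1]
  simp_rw [charFun_apply]
  rw [integral_integral_swap]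
  · simp_rw [inner_smul_right, real_inner_comm]
  · refine Integrable.of_bound (C := 1) (Continuous.aestronglyMeasurable (by fun_prop)) ?_
    refine ae_of_all _ fun z ↦ ?_
    rw [Function.uncurry_apply_pair, Complex.norm_exp_ofReal_mul_I]

theorem map_eq_map_of_smul_invariant (hσ : ∀ e : E ≃ₗᵢ[ℝ] E, σ.map e = σ)
    (hτ : ∀ e : E ≃ₗᵢ[ℝ] E, τ.map e = τ) (hσ0 : ∀ᵐ x ∂σ, x ≠ 0) (hτ0 : ∀ᵐ x ∂τ, x ≠ 0)
    {F : Type*} [MeasurableSpace F] {f : E → F} (hf : Measurable f)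
    (hsmul : ∀ c : ℝ, 0 < c → ∀ x, f (c • x) = f x) : σ.map f = τ.map f := by
  have map_normalize_map {μ : Measure E} (hμ0 : ∀ᵐ x ∂μ, x ≠ 0) :
      (μ.map NormedSpace.normalize).map f = μ.map f := by
    rw [Measure.map_map hf measurable_normalize]
    refine map_congr ?_
    filter_upwards [hμ0] with x hx
    exact hsmul _ (inv_pos.2 (norm_pos_iff.2 hx)) x
  have ae_norm {μ : Measure E} (hμ0 : ∀ᵐ x ∂μ, x ≠ 0) :
      ∀ᵐ x ∂μ.map NormedSpace.normalize, ‖x‖ = 1 := by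
    rw [ae_map_iff (by fun_prop) (measurableSet_eq_fun (by fun_prop) (by fun_prop))]
    simpa only [NormedSpace.norm_normalize_eq_one_iff]
  have := isProbabilityMeasure_map (μ := σ) measurable_normalize.aemeasurable
  have := isProbabilityMeasure_map (μ := τ) measurable_normalize.aemeasurable
  rw [← map_normalize_map hσ0, ← map_normalize_map hτ0,
    eq_of_map_linearIsometryEquiv_eq (map_normalize_map_linearIsometryEquiv hσ)
      (map_normalize_map_linearIsometryEquiv hτ) (ae_norm hσ0) (ae_norm hτ0)]

end RotationInvariant

theorem ae_ne_zero_stdGaussian {ι : Type*} [Fintype ι] [Nonempty ι] :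
    ∀ᵐ x ∂stdGaussian (EuclideanSpace ℝ ι), x ≠ 0 := by
  have : NullSingletonClass (gaussianReal 0 1) := nullSingletonClass_gaussianReal one_ne_zero
  have hmeas : MeasurableSet {x : EuclideanSpace ℝ ι | x ≠ 0} :=
    (measurableSet_singleton 0).compl
  rw [← map_pi_eq_stdGaussian, ae_map_iff (by fun_prop) hmeas]
  filter_upwards [ae_ne (Measure.pi fun _ : ι ↦ gaussianReal 0 1) 0] with x hx
  simpa using hx

theorem stdGaussian_map_sum_sq_div_of_pairwise_disjoint {ι : Type*} [Fintype ι] {n : ℕ}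
    {I : Fin (n + 1) → Finset ι} (hI : Pairwise (Disjoint on I))
    (hne : ∀ k, (I k).Nonempty) :
    (stdGaussian (EuclideanSpace ℝ ι)).map
        (fun y (k : Fin n) ↦ (∑ i ∈ I k.castSucc, y i ^ 2) / ∑ j, ∑ i ∈ I j, y i ^ 2)
      = dirichletMeasure7 n fun k ↦ (#(I k) : ℝ) / 2 := by
  have hcard (k) : 0 < (#(I k) : ℝ) / 2 := by
    have := (hne k).card_pos
    positivity
  rw [← pi_gammaMeasure_map_proportions hcard (r := 1 / 2) (by norm_num),
    ← pi_gaussianReal_map_sum_sq_of_pairwise_disjoint hI hne, ← map_pi_eq_stdGaussian,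
    Measure.map_map (by fun_prop) (by fun_prop), Measure.map_map (by fun_prop) (by fun_prop)]
  rfl

theorem stmt_7_general {ι : Type*} [Fintype ι] {n : ℕ} {I : Fin (n + 1) → Finset ι}
    (hI : Pairwise (Disjoint on I)) (hne : ∀ k, (I k).Nonempty)
    {σ : Measure (EuclideanSpace ℝ ι)} [IsProbabilityMeasure σ] (hσ0 : ∀ᵐ y ∂σ, y ≠ 0)
    (hσ : ∀ e : EuclideanSpace ℝ ι ≃ₗᵢ[ℝ] EuclideanSpace ℝ ι, σ.map e = σ) :
    σ.map (fun y (k : Fin n) ↦ (∑ i ∈ I k.castSucc, y i ^ 2) / ∑ j, ∑ i ∈ I j, y i ^ 2)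
      = dirichletMeasure7 n fun k ↦ (#(I k) : ℝ) / 2 := by
  have : Nonempty ι := ⟨(hne 0).choose⟩
  rw [← stdGaussian_map_sum_sq_div_of_pairwise_disjoint hI hne]
  refine map_eq_map_of_smul_invariant hσ (fun e ↦ stdGaussian_map e) hσ0 ae_ne_zero_stdGaussian
    (by fun_prop) fun c hc y ↦ funext fun k ↦ ?_
  simp only [PiLp.smul_apply, smul_eq_mul, mul_pow, ← mul_sum]
  exact mul_div_mul_left _ _ (by positivity)

/-- The pushforward of the uniform (rotation-invariant) probability measure on
the unit sphere `S^{N-1}` under `y ↦ (Σ_{r∈I_k} y_r²)_{k≤n}` is the Dirichlet distribution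
with parameters `p_i/2`. -/
theorem stmt_7 (N n : ℕ) (hN : 1 ≤ N)
    (I : Fin (n + 1) → Finset (Fin N)) (p : Fin (n + 1) → ℕ)
    (hdisj : ∀ i j, i ≠ j → Disjoint (I i) (I j))
    (hcover : ∀ r, ∃ i, r ∈ I i)
    (hne : ∀ i, (I i).Nonempty)
    (hcard : ∀ i, (I i).card = p i)
    (σ : Measure (EuclideanSpace ℝ (Fin N))) [IsProbabilityMeasure σ]
    (hsupp : σ {y | ‖y‖ ≠ 1} = 0)
    (hinv : ∀ e : EuclideanSpace ℝ (Fin N) ≃ₗᵢ[ℝ] EuclideanSpace ℝ (Fin N),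
      Measure.map e σ = σ) :
    Measure.map (fun y (k : Fin n) => ∑ r ∈ I k.castSucc, y r ^ 2) σ
      = dirichletMeasure7 n (fun i => (p i : ℝ) / 2) := by
  have hnorm (y : EuclideanSpace ℝ (Fin N)) : ∑ k, ∑ r ∈ I k, y r ^ 2 = ‖y‖ ^ 2 := by
    rw [EuclideanSpace.real_norm_sq_eq, ← sum_biUnion fun i _ j _ ↦ hdisj i j]
    congr 1
    ext r
    simpa using hcover r
  have hsphere : ∀ᵐ y ∂σ, ‖y‖ = 1 := hsupp
  have hne_zero : ∀ᵐ y ∂σ, y ≠ 0 := hsphere.mono fun y hy ↦ norm_ne_zero_iff.1 (hy ▸ one_ne_zero)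
  simp_rw [← hcard]
  rw [← stmt_7_general (fun i j ↦ hdisj i j) hne hne_zero hinv]
  refine map_congr (hsphere.mono fun y hy ↦ ?_)
  ext k
  beta_reduce
  rw [hnorm, hy, one_pow, div_one]
end

section
/- Let d ≥ 1, let d_1, …, d_{n+1} ≥ d be integers, set N := d_1 + ⋯ + d_{n+1}, and let I_1, …, I_{n+1} be the corresponding partition of {1,…,N} into consecutive blocks with |I_i| = d_i. Let μ be the normalized Haar probability measure on the special unitary group SU(N). For u ∈ SU(N) and 1 ≤ i ≤ n, let W^(i)(u) be the d×d_i submatrix of u formed by its first d rows and the columns in I_i, and let Z^(i)(u) := W^(i)(u) W^(i)(u)*. Let c be the coordinate map sending an n-tuple (Z^(1),…,Z^(n)) of d×d Hermitian matrices to the vector in ℝ^{n d²} consisting, for each k, of the real diagonal entries Z^(k)_{pp} (1 ≤ p ≤ d) and the real and imaginary parts of the above-diagonal entries Z^(k)_{pq} (p < q). Then there exists a constant C > 0 such that the pushforward of μ under u ↦ c(Z^(1)(u),…,Z^(n)(u)) has density f with respect to Lebesgue measure on ℝ^{n d²}, where f(x) = C · Π_{i=1}^n det(Z^(i))^{d_i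 − d} · det(Id − Σ_{i=1}^n Z^(i))^{d_{n+1} − d} if the tuple (Z^(1),…,Z^(n)) with coordinates x lies in the complex matrix simplex Δ_{n,d}, and f(x) = 0 otherwise. -/
open Finset Matrix MeasureTheory ComplexOrder
open scoped Classical

/-- Matrices over `ℂ` carry the product measurable structure of their entries. -/
noncomputable instance matrixMeasurableSpace15 {N : ℕ} :
    MeasurableSpace (Matrix (Fin N) (Fin N) ℂ) :=
  MeasurableSpace.pi

/-- The index type for the real coordinates of an `n`-tuple of `d×d` Hermitian matrices:
for each `k`, the `d` (real) diagonal entries and the real and imaginary parts of the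
above-diagonal entries; it has cardinality `n·d²`. -/
def herdIdx15 (n d : ℕ) : Type :=
  Fin n × (Fin d ⊕ ({pq : Fin d × Fin d // pq.1 < pq.2} × Bool))

instance (n d : ℕ) : Fintype (herdIdx15 n d) := by unfold herdIdx15; infer_instance
instance (n d : ℕ) : MeasurableSpace (herdIdx15 n d → ℝ) := MeasurableSpace.pi

/-- The coordinate map sending an `n`-tuple of matrices to its `n·d²` real coordinates. -/
noncomputable def coordMap15 {n d : ℕ} (Z : Fin n → Matrix (Fin d) (Fin d) ℂ) :
    herdIdx15 n d → ℝ :=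
  fun idx => match idx with
  | (k, Sum.inl p) => (Z k p p).re
  | (k, Sum.inr (⟨(p, q), _⟩, false)) => (Z k p q).re
  | (k, Sum.inr (⟨(p, q), _⟩, true)) => (Z k p q).im

/-- Reconstruction of the `k`-th Hermitian matrix from the real coordinates. -/
noncomputable def recon15 {n d : ℕ} (x : herdIdx15 n d → ℝ) (k : Fin n) :
    Matrix (Fin d) (Fin d) ℂ :=
  Matrix.of fun p q =>
    if h : p < q then ⟨x (k, Sum.inr (⟨(p, q), h⟩, false)), x (k, Sum.inr (⟨(p, q), h⟩, true))⟩
    else if h' : q < p then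
      ⟨x (k, Sum.inr (⟨(q, p), h'⟩, false)), -(x (k, Sum.inr (⟨(q, p), h'⟩, true)))⟩
    else (x (k, Sum.inl p) : ℂ)

/-- The extracted matrix `Z^(I)(u) = W W*`, where `W` is the submatrix of `u` formed by its
first `d` rows and the columns in `I`. -/
noncomputable def extractZ15 {N : ℕ} (d : ℕ) (hdN : d ≤ N) (I : Finset (Fin N))
    (u : Matrix (Fin N) (Fin N) ℂ) : Matrix (Fin d) (Fin d) ℂ :=
  Matrix.of fun a b => ∑ r ∈ I, u (Fin.castLE hdN a) r * star (u (Fin.castLE hdN b) r)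

/-!
Let `X` be a `d × N` complex matrix distributed according to Lebesgue measure. Right multiplication
by a unitary matrix preserves this distribution and the Gram matrix `X Xᴴ`, so the normalized matrix
`(X Xᴴ) ^ (-1/2) X`, whose rows are orthonormal, is independent of `X Xᴴ` and distributed as the
first `d` rows of a Haar unitary matrix. Since `d < N`, orthonormal rows even extend to an element
of `SU(N)`.

The blocks of columns of `X` are independent, and the Gram matrix of the `i`-th one has density
proportional to `det ^ (d_i - d)`, by uniqueness of the measure on the positive definite cone
that is invariant under the congruences `x ↦ g x gᴴ`. Normalizing the block Gram matrices by
their sum `X Xᴴ` therefore factors their joint density into a density on the cone and the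
Dirichlet density. Cancelling the law of `X Xᴴ` from the two product decompositions leaves the
claim.
-/

open scoped ENNReal

namespace MatrixDirichlet

variable {m κ ι : Type*}

/-- The real vector space of Hermitian matrices. -/
abbrev HermMatrix (m : Type*) : Type _ := selfAdjoint (Matrix m m ℂ)

section MatrixOrder

open scoped MatrixOrder Matrix.Norms.L2Operator

theorem isClosed_posSemidef [Finite m] : IsClosed {A : Matrix m m ℂ | A.PosSemidef} := by
  cases nonempty_fintype m
  simpa only [← nonneg_iff_posSemidef] using CStarAlgebra.isClosed_nonneg (A := Matrix m m ℂ)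

theorem exists_add_smul_one_posSemidef [Finite m] [DecidableEq m] {A : Matrix m m ℂ}
    (hA : A.IsHermitian) : ∃ k : ℕ, (A + (k : ℝ) • (1 : Matrix m m ℂ)).PosSemidef := by
  cases nonempty_fintype m
  obtain ⟨k, hk⟩ := exists_nat_ge ‖A‖
  refine ⟨k, ?_⟩
  have hnorm : (A + ‖A‖ • (1 : Matrix m m ℂ)).PosSemidef := by
    have := IsSelfAdjoint.neg_algebraMap_norm_le_self (a := A) hA
    rwa [Algebra.algebraMap_eq_smul_one, Matrix.le_iff, sub_neg_eq_add] at this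
  have hrest : ((k - ‖A‖) • (1 : Matrix m m ℂ)).PosSemidef := PosSemidef.one.smul (sub_nonneg.2 hk)
  simpa [sub_smul] using hnorm.add hrest

variable [Fintype m] [DecidableEq m] {A : Matrix m m ℂ}

/-- The inverse of the positive square root of a positive definite matrix, extended by `1` to all
other matrices so that its values are always invertible. -/
noncomputable def invSqrt (A : Matrix m m ℂ) : Matrix m m ℂ :=
  {A : Matrix m m ℂ | A.PosDef}.piecewise (fun A => (CFC.sqrt A)⁻¹) 1 A

theorem invSqrt_of_posDef (hA : A.PosDef) : invSqrt A = (CFC.sqrt A)⁻¹ :=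
  Set.piecewise_eq_of_mem _ _ _ hA

theorem sqrt_mul_sqrt_of_posDef (hA : A.PosDef) : CFC.sqrt A * CFC.sqrt A = A :=
  CFC.sqrt_mul_sqrt_self A hA.posSemidef.nonneg

theorem isUnit_det_sqrt (hA : A.PosDef) : IsUnit (CFC.sqrt A).det := by
  refine isUnit_iff_ne_zero.2 fun h => hA.det_pos.ne' ?_
  rw [← sqrt_mul_sqrt_of_posDef hA, det_mul, h, zero_mul]

theorem det_invSqrt_ne_zero (A : Matrix m m ℂ) : (invSqrt A).det ≠ 0 := by
  by_cases hA : A.PosDef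
  · rw [invSqrt_of_posDef hA]
    exact ((isUnit_nonsing_inv_det_iff).2 (isUnit_det_sqrt hA)).ne_zero
  · simp [invSqrt, hA]

theorem conjTranspose_invSqrt (hA : A.PosDef) : (invSqrt A)ᴴ = invSqrt A := by
  rw [invSqrt_of_posDef hA]
  exact (CFC.sqrt_nonneg A).posSemidef.isHermitian.inv

theorem invSqrt_mul_conjTranspose (hA : A.PosDef) : invSqrt A * (invSqrt A)ᴴ = A⁻¹ := by
  rw [conjTranspose_invSqrt hA, invSqrt_of_posDef hA, ← Matrix.mul_inv_rev,
    sqrt_mul_sqrt_of_posDef hA]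

theorem invSqrt_mul_mul_conjTranspose (hA : A.PosDef) : invSqrt A * A * (invSqrt A)ᴴ = 1 := by
  nth_rw 2 [← sqrt_mul_sqrt_of_posDef hA]
  rw [conjTranspose_invSqrt hA, invSqrt_of_posDef hA, ← Matrix.mul_assoc,
    nonsing_inv_mul _ (isUnit_det_sqrt hA), Matrix.one_mul, mul_nonsing_inv _ (isUnit_det_sqrt hA)]

theorem continuousOn_invSqrt : ContinuousOn invSqrt {A : Matrix m m ℂ | A.PosDef} := by
  refine ContinuousOn.congr ?_ fun A hA => invSqrt_of_posDef hA
  have hsqrt : ContinuousOn CFC.sqrt {A : Matrix m m ℂ | A.PosDef} :=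
    CFC.continuousOn_sqrt.mono fun A hA => PosDef.posSemidef hA |>.nonneg
  simp only [Matrix.inv_def, Ring.inverse_eq_inv']
  exact ((continuous_id.matrix_det.comp_continuousOn hsqrt).inv₀
    fun A hA => (isUnit_det_sqrt hA).ne_zero).smul
    (continuous_id.matrix_adjugate.comp_continuousOn hsqrt)

end MatrixOrder

section Instances

noncomputable scoped instance : MeasurableSpace (Matrix m κ ℂ) := MeasurableSpace.pi

scoped instance [Finite m] [Finite κ] : BorelSpace (Matrix m κ ℂ) :=
  inferInstanceAs (BorelSpace (m → κ → ℂ))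

scoped instance [Finite m] : FiniteDimensional ℝ (HermMatrix m) :=
  FiniteDimensional.of_injective (selfAdjoint.submodule ℝ (Matrix m m ℂ)).subtype
    Subtype.val_injective

variable [Fintype m] [Fintype κ]

noncomputable scoped instance : NormedAddCommGroup (Matrix m κ ℂ) :=
  inferInstanceAs (NormedAddCommGroup (m → κ → ℂ))

noncomputable scoped instance : NormedSpace ℝ (Matrix m κ ℂ) :=
  inferInstanceAs (NormedSpace ℝ (m → κ → ℂ))

scoped instance : ProperSpace (HermMatrix m) := FiniteDimensional.proper ℝ _

scoped instance : ProperSpace (Matrix m κ ℂ) := FiniteDimensional.proper ℝ _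

/-- The Lebesgue measure on complex matrices, up to normalization. -/
noncomputable scoped instance : MeasureSpace (Matrix m κ ℂ) := ⟨Measure.addHaar⟩

/-- The Lebesgue measure on Hermitian matrices, up to normalization. -/
noncomputable scoped instance : MeasureSpace (HermMatrix m) := ⟨Measure.addHaar⟩

scoped instance : (volume : Measure (Matrix m κ ℂ)).IsAddHaarMeasure :=
  inferInstanceAs (Measure.addHaar (G := Matrix m κ ℂ)).IsAddHaarMeasure

scoped instance : (volume : Measure (HermMatrix m)).IsAddHaarMeasure :=
  inferInstanceAs (Measure.addHaar (G := HermMatrix m)).IsAddHaarMeasure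

end Instances

section Congruence

variable [Fintype m]

/-- The congruence `x ↦ g x gᴴ` of Hermitian matrices by `g`. -/
def congruence (g : Matrix m m ℂ) : HermMatrix m →ₗ[ℝ] HermMatrix m where
  toFun x := ⟨g * x * gᴴ, isHermitian_mul_mul_conjTranspose g x.2⟩
  map_add' x y := Subtype.ext (by simp [Matrix.mul_add, Matrix.add_mul])
  map_smul' c x := Subtype.ext (by simp)

@[simp] theorem coe_congruence (g : Matrix m m ℂ) (x : HermMatrix m) :
    (congruence g x : Matrix m m ℂ) = g * x * gᴴ := rfl

/-- The congruence by `g`, applied to all members of a tuple. -/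
noncomputable def tupleCongruence (n : ℕ) (g : Matrix m m ℂ) :
    (Fin n → HermMatrix m) →ₗ[ℝ] Fin n → HermMatrix m :=
  LinearMap.pi fun j => congruence g ∘ₗ LinearMap.proj j

@[simp] theorem tupleCongruence_apply {n : ℕ} (g : Matrix m m ℂ) (z : Fin n → HermMatrix m)
    (j : Fin n) : tupleCongruence n g z j = congruence g (z j) := rfl

end Congruence

section Determinants

variable [Fintype m] [Fintype κ] [DecidableEq m]

theorem det_mulLeftLinearMap {R : Type*} [CommRing R] (g : Matrix m m R) :
    LinearMap.det (mulLeftLinearMap κ R g) = g.det ^ Fintype.card κ := by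
  let e : (κ → m → R) ≃ₗ[R] Matrix m κ R :=
    (ofLinearEquiv R).trans (transposeLinearEquiv κ m R R)
  have h : mulLeftLinearMap κ R g =
      e.toLinearMap ∘ₗ (LinearMap.pi fun j => toLin' g ∘ₗ LinearMap.proj j) ∘ₗ
        e.symm.toLinearMap := by
    ext1 W
    ext i j
    rfl
  rw [h, LinearMap.det_conj, LinearMap.det_pi]
  simp

theorem det_mulRightLinearMap {R : Type*} [CommRing R] (g : Matrix m m R) :
    LinearMap.det (mulRightLinearMap κ R g) = g.det ^ Fintype.card κ := by
  have h : mulRightLinearMap κ R g = transposeLinearEquiv m κ R R ∘ₗ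
      mulLeftLinearMap κ R gᵀ ∘ₗ (transposeLinearEquiv m κ R R).symm := by
    ext1 W
    simp [Matrix.transpose_mul]
  rw [h, LinearMap.det_conj, det_mulLeftLinearMap, det_transpose]

theorem abs_det_restrictScalars {E : Type*} [AddCommGroup E] [Module ℂ E]
    (f : E →ₗ[ℂ] E) : |LinearMap.det (f.restrictScalars ℝ)| = ‖LinearMap.det f‖ ^ 2 := by
  rw [LinearMap.det_restrictScalars, Algebra.norm_complex_apply, Complex.normSq_eq_norm_sq, abs_sq]

theorem abs_det_mulLeftLinearMap (g : Matrix m m ℂ) :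
    |LinearMap.det (mulLeftLinearMap κ ℝ g)| = (‖g.det‖ ^ 2) ^ Fintype.card κ := by
  rw [← pow_mul, mul_comm, pow_mul, ← norm_pow, ← det_mulLeftLinearMap (κ := κ)]
  exact abs_det_restrictScalars (mulLeftLinearMap κ ℂ g)

theorem abs_det_mulRightLinearMap (g : Matrix m m ℂ) :
    |LinearMap.det (mulRightLinearMap κ ℝ g)| = (‖g.det‖ ^ 2) ^ Fintype.card κ := by
  rw [← pow_mul, mul_comm, pow_mul, ← norm_pow, ← det_mulRightLinearMap (κ := κ)]
  exact abs_det_restrictScalars (mulRightLinearMap κ ℂ g)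

open ComplexStarModule in
/-- The decomposition `a = x + i y` of an element of a complex star module into self-adjoint parts,
as a real linear equivalence. -/
noncomputable def realImagEquiv {A : Type*} [AddCommGroup A] [Module ℂ A] [StarAddMonoid A]
    [StarModule ℂ A] : A ≃ₗ[ℝ] selfAdjoint A × selfAdjoint A where
  toLinearMap := LinearMap.prod ℜ ℑ
  invFun p := p.1 + Complex.I • (p.2 : A)
  left_inv := realPart_add_I_smul_imaginaryPart
  right_inv p := by
    simp [selfAdjoint.realPart_coe, selfAdjoint.imaginaryPart_coe, imaginaryPart_I_smul,
      realPart_I_smul]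

theorem abs_det_congruence (g : Matrix m m ℂ) :
    |LinearMap.det (congruence g)| = (‖g.det‖ ^ 2) ^ Fintype.card m := by
  let e : Matrix m m ℂ ≃ₗ[ℝ] HermMatrix m × HermMatrix m := realImagEquiv
  have h : (congruence g).prodMap (congruence g) = e ∘ₗ
      (mulRightLinearMap m ℝ gᴴ ∘ₗ mulLeftLinearMap m ℝ g) ∘ₗ e.symm := by
    rw [← LinearMap.comp_assoc, LinearEquiv.eq_comp_toLinearMap_symm]
    refine LinearMap.ext fun X => Prod.ext (Subtype.ext ?_) (Subtype.ext ?_)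
    · simp [e, realImagEquiv, realPart_apply_coe, star_eq_conjTranspose, mul_add, add_mul,
        mul_assoc]
    · simp [e, realImagEquiv, imaginaryPart_apply_coe, star_eq_conjTranspose, mul_sub, sub_mul,
        mul_assoc]
  refine (pow_left_inj₀ (abs_nonneg _) (by positivity) two_ne_zero).1 ?_
  rw [sq, ← abs_mul, ← LinearMap.det_prodMap, h, LinearMap.det_conj, LinearMap.det_comp, abs_mul,
    abs_det_mulRightLinearMap, abs_det_mulLeftLinearMap, det_conjTranspose, norm_star, ← sq]

end Determinants

section Measure

variable {E F : Type*} [MeasurableSpace E] [MeasurableSpace F]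

theorem map_withDensity_comp (μ : Measure E) {f : E → F} (hf : Measurable f) {ρ : F → ℝ≥0∞}
    (hρ : Measurable ρ) : (μ.withDensity (ρ ∘ f)).map f = (μ.map f).withDensity ρ := by
  ext s hs
  rw [Measure.map_apply hf hs, withDensity_apply _ (hf hs), withDensity_apply _ hs,
    setLIntegral_map hs hρ hf]
  rfl

theorem map_linearMap_withDensity {E : Type*} [NormedAddCommGroup E] [NormedSpace ℝ E]
    [MeasurableSpace E] [BorelSpace E] [FiniteDimensional ℝ E] (μ : Measure E)
    [μ.IsAddHaarMeasure] {L : E →ₗ[ℝ] E} (hL : LinearMap.det L ≠ 0) {ρ ρ' : E → ℝ≥0∞}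
    (hρ' : Measurable ρ') {c : ℝ≥0∞} (hρ : ∀ x, ρ x = c * ρ' (L x)) :
    (μ.withDensity ρ).map L =
      (c * ENNReal.ofReal |LinearMap.det L|⁻¹) • μ.withDensity ρ' := by
  have hmeas : Measurable L := L.continuous_of_finiteDimensional.measurable
  calc (μ.withDensity ρ).map L = (μ.withDensity (c • (ρ' ∘ L))).map L := by
        congr 2
        exact funext hρ
    _ = c • (ENNReal.ofReal |LinearMap.det L|⁻¹ • μ).withDensity ρ' := by
        rw [withDensity_smul _ (hρ'.comp hmeas), Measure.map_smul,
          map_withDensity_comp μ hmeas hρ', Measure.map_linearMap_addHaar_eq_smul_addHaar μ hL,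
          abs_inv]
    _ = (c * ENNReal.ofReal |LinearMap.det L|⁻¹) • μ.withDensity ρ' := by
        rw [withDensity_smul_measure, smul_smul]

theorem measurePreserving_withDensity_of_linearMap {E : Type*} [NormedAddCommGroup E]
    [NormedSpace ℝ E] [MeasurableSpace E] [BorelSpace E] [FiniteDimensional ℝ E] (μ : Measure E)
    [μ.IsAddHaarMeasure] {L : E →ₗ[ℝ] E} (hL : LinearMap.det L ≠ 0) {ρ : E → ℝ≥0∞}
    (hρ : Measurable ρ) (hρL : ∀ x, ENNReal.ofReal |LinearMap.det L| * ρ (L x) = ρ x) :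
    MeasurePreserving L (μ.withDensity ρ) (μ.withDensity ρ) := by
  refine ⟨L.continuous_of_finiteDimensional.measurable, ?_⟩
  rw [map_linearMap_withDensity μ hL hρ fun x => (hρL x).symm,
    ← ENNReal.ofReal_mul (abs_nonneg _), mul_inv_cancel₀ (abs_ne_zero.2 hL), ENNReal.ofReal_one,
    one_smul]

theorem eq_of_prod_eq_prod {μ : Measure E} [SigmaFinite μ] (hμ : μ ≠ 0) {ν₁ ν₂ : Measure F}
    [SFinite ν₁] [SFinite ν₂] (h : μ.prod ν₁ = μ.prod ν₂) : ν₁ = ν₂ := by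
  obtain ⟨s, -, -, hs0, hst⟩ := Measure.exists_subset_measure_lt_top MeasurableSet.univ
    (Measure.measure_univ_pos.2 hμ)
  refine Measure.ext fun t _ => ?_
  have := congr_arg (· (s ×ˢ t)) h
  simpa [Measure.prod_prod, ENNReal.mul_right_inj hs0.ne' hst.ne] using this

theorem ne_zero_and_ne_top_of_eq_smul {μ ρ : Measure E} [SigmaFinite μ] (hμ : μ ≠ 0) {c : ℝ≥0∞}
    (h : μ = c • ρ) : c ≠ 0 ∧ c ≠ ⊤ := by
  obtain ⟨s, -, -, hs0, hst⟩ := Measure.exists_subset_measure_lt_top MeasurableSet.univ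
    (Measure.measure_univ_pos.2 hμ)
  have hs : μ s = c * ρ s := by rw [h, Measure.smul_apply, smul_eq_mul]
  refine ⟨fun hc => hs0.ne' (by rw [hs, hc, zero_mul]), fun hc => ?_⟩
  rw [hs, hc] at hs0 hst
  exact hst.ne (ENNReal.top_mul (right_ne_zero_of_mul hs0.ne'))

theorem exists_eq_smul_of_eq_smul {μ₁ μ₂ ρ : Measure E} [SigmaFinite μ₁] [SigmaFinite μ₂]
    (hμ₁ : μ₁ ≠ 0) (hμ₂ : μ₂ ≠ 0) {c₁ c₂ : ℝ≥0∞} (h₁ : μ₁ = c₁ • ρ) (h₂ : μ₂ = c₂ • ρ) :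
    ∃ c : ℝ≥0∞, c ≠ 0 ∧ c ≠ ⊤ ∧ μ₁ = c • μ₂ := by
  obtain ⟨hc₁, hc₁'⟩ := ne_zero_and_ne_top_of_eq_smul hμ₁ h₁
  obtain ⟨hc₂, hc₂'⟩ := ne_zero_and_ne_top_of_eq_smul hμ₂ h₂
  refine ⟨c₁ * c₂⁻¹, mul_ne_zero hc₁ (ENNReal.inv_ne_zero.2 hc₂'),
    ENNReal.mul_ne_top hc₁' (ENNReal.inv_ne_top.2 hc₂), ?_⟩
  rw [h₁, h₂, smul_smul, mul_assoc, ENNReal.inv_mul_cancel hc₂ hc₂', mul_one]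

theorem map_prodMk_withDensity_eq_prod {F' : Type*} [MeasurableSpace F'] (μ : Measure E)
    (ν : Measure F) [SFinite ν] {ν' : Measure F'} [SigmaFinite ν'] {f : E → ℝ≥0∞}
    [SigmaFinite (μ.withDensity f)] (hf : Measurable f) {ρ : E × F → ℝ≥0∞} (hρ : Measurable ρ)
    {T : E × F → F'} (hT : Measurable T)
    (h : ∀ x, (ν.withDensity fun y => ρ (x, y)).map (fun y => T (x, y)) = f x • ν') :
    ((μ.prod ν).withDensity ρ).map (fun p => (p.1, T p)) = (μ.withDensity f).prod ν' := by
  refine (Measure.prod_eq fun s t hs ht => ?_).symm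
  have hTx : ∀ x, Measurable fun y => T (x, y) := fun x => hT.comp measurable_prodMk_left
  have hst : MeasurableSet ((fun p => (p.1, T p)) ⁻¹' s ×ˢ t) :=
    (measurable_fst.prodMk hT) (hs.prod ht)
  have hfiber : ∀ x, ∫⁻ y, ((fun p => (p.1, T p)) ⁻¹' s ×ˢ t).indicator ρ (x, y) ∂ν =
      s.indicator (fun x => f x * ν' t) x := fun x => by
    by_cases hx : x ∈ s
    · rw [Set.indicator_of_mem hx, ← smul_eq_mul, ← Measure.smul_apply, ← h x,
        Measure.map_apply (hTx x) ht, withDensity_apply _ (hTx x ht),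
        ← lintegral_indicator (hTx x ht)]
      exact lintegral_congr fun y => by simp [Set.indicator_apply, hx]
    · simp [hx]
  rw [Measure.map_apply (measurable_fst.prodMk hT) (hs.prod ht), withDensity_apply _ hst,
    ← lintegral_indicator hst, lintegral_prod _ (hρ.indicator hst).aemeasurable,
    lintegral_congr hfiber, lintegral_indicator hs, lintegral_mul_const _ hf,
    withDensity_apply _ hs]

theorem lintegral_indicator_one_comp {μ : Measure E} {g : E → F} (hg : Measurable g) {s : Set F}
    (hs : MeasurableSet s) : ∫⁻ x, s.indicator 1 (g x) ∂μ = μ.map g s := by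
  rw [← lintegral_map (measurable_one.indicator hs) hg, lintegral_indicator_one hs]

theorem map_prodMk_prod_apply {F' : Type*} [MeasurableSpace F'] {μ : Measure E} {g : E → F}
    (hg : Measurable g) {θ : E → F'} (hθ : Measurable θ) {s : Set F} (hs : MeasurableSet s)
    {t : Set F'} (ht : MeasurableSet t) : μ.map (fun x => (g x, θ x)) (s ×ˢ t) =
      ∫⁻ x, s.indicator 1 (g x) * t.indicator 1 (θ x) ∂μ := by
  rw [← lintegral_indicator_one_comp (hg.prodMk hθ) (hs.prod ht)]
  exact lintegral_congr fun x => by by_cases hx : g x ∈ s <;> simp [Set.indicator_apply, hx]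

theorem map_prodMk_eq_prod_of_measurePreserving {G F' : Type*} [MeasurableSpace G]
    [MeasurableSpace F'] {μ : Measure G} [IsProbabilityMeasure μ] {ν : Measure E} [SFinite ν]
    {T : G → E → E} (hT : Measurable fun p : E × G => T p.2 p.1)
    (hν : ∀ᵐ u ∂μ, MeasurePreserving (T u) ν ν) {g : E → F} (hg : Measurable g)
    [SigmaFinite (ν.map g)] (hgT : ∀ᵐ u ∂μ, ∀ x, g (T u x) = g x) {θ : E → F'}
    (hθ : Measurable θ) {ρ : Measure F'} [SigmaFinite ρ]
    (h : ∀ᵐ x ∂ν, μ.map (fun u => θ (T u x)) = ρ) :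
    ν.map (fun x => (g x, θ x)) = (ν.map g).prod ρ := by
  refine (Measure.prod_eq fun s t hs ht => ?_).symm
  have hgs : Measurable fun x => s.indicator (1 : F → ℝ≥0∞) (g x) :=
    (measurable_one.indicator hs).comp hg
  have hθt : Measurable fun x => t.indicator (1 : F' → ℝ≥0∞) (θ x) :=
    (measurable_one.indicator ht).comp hθ
  have hgθ : Measurable fun x =>
      s.indicator (1 : F → ℝ≥0∞) (g x) * t.indicator (1 : F' → ℝ≥0∞) (θ x) := hgs.mul hθt
  calc ν.map (fun x => (g x, θ x)) (s ×ˢ t)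
      = ∫⁻ _ : G, ∫⁻ x, s.indicator 1 (g x) * t.indicator 1 (θ x) ∂ν ∂μ := by
        rw [map_prodMk_prod_apply hg hθ hs ht, lintegral_const, measure_univ, mul_one]
    _ = ∫⁻ u, ∫⁻ x, s.indicator 1 (g x) * t.indicator 1 (θ (T u x)) ∂ν ∂μ := by
        refine lintegral_congr_ae ?_
        filter_upwards [hν, hgT] with u hu hgu
        rw [← hu.lintegral_comp hgθ]
        simp only [hgu]
    _ = ∫⁻ x, ∫⁻ u, s.indicator 1 (g x) * t.indicator 1 (θ (T u x)) ∂μ ∂ν :=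
        (lintegral_lintegral_swap
          ((hgs.comp measurable_fst).mul (hθt.comp hT)).aemeasurable).symm
    _ = ∫⁻ x, s.indicator 1 (g x) * ρ t ∂ν := by
        refine lintegral_congr_ae (h.mono fun x hx => ?_)
        have hTx : Measurable fun u => T u x := hT.comp (measurable_prodMk_left (x := x))
        have hθtx : Measurable fun u => t.indicator (1 : F' → ℝ≥0∞) (θ (T u x)) := hθt.comp hTx
        have hθx : Measurable fun u => θ (T u x) := hθ.comp hTx
        dsimp only
        rw [lintegral_const_mul _ hθtx, ← hx, lintegral_indicator_one_comp hθx ht]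
    _ = ν.map g s * ρ t := by
        rw [lintegral_mul_const _ hgs, lintegral_indicator_one_comp hg hs]

theorem exists_map_linearEquiv_eq_smul {E F : Type*} [NormedAddCommGroup E] [NormedSpace ℝ E]
    [FiniteDimensional ℝ E] [MeasurableSpace E] [BorelSpace E] [NormedAddCommGroup F]
    [NormedSpace ℝ F] [MeasurableSpace F] [BorelSpace F] (L : E ≃ₗ[ℝ] F) (μ : Measure E)
    [μ.IsAddHaarMeasure] (ν : Measure F) [ν.IsAddHaarMeasure] :
    ∃ c : ℝ≥0∞, μ.map L = c • ν := by
  have : FiniteDimensional ℝ F := L.finiteDimensional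
  have : ProperSpace F := FiniteDimensional.proper ℝ F
  have : (μ.map L).IsAddHaarMeasure := L.toContinuousLinearEquiv.isAddHaarMeasure_map μ
  exact ⟨_, Measure.isAddLeftInvariant_eq_smul _ _⟩

theorem exists_map_linearEquiv_withDensity_eq_smul {E F : Type*} [NormedAddCommGroup E]
    [NormedSpace ℝ E] [FiniteDimensional ℝ E] [MeasurableSpace E] [BorelSpace E]
    [NormedAddCommGroup F] [NormedSpace ℝ F] [MeasurableSpace F] [BorelSpace F] (L : E ≃ₗ[ℝ] F)
    (μ : Measure E) [μ.IsAddHaarMeasure] (ν : Measure F) [ν.IsAddHaarMeasure] {ρ : E → ℝ≥0∞}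
    (hρ : Measurable ρ) :
    ∃ c : ℝ≥0∞, (μ.withDensity ρ).map L = c • ν.withDensity (ρ ∘ L.symm) := by
  obtain ⟨c, hc⟩ := exists_map_linearEquiv_eq_smul L μ ν
  have hL : Measurable L := L.toContinuousLinearEquiv.continuous.measurable
  have hρL : Measurable (ρ ∘ L.symm) :=
    hρ.comp L.toContinuousLinearEquiv.symm.continuous.measurable
  have hcomp : (ρ ∘ L.symm) ∘ L = ρ := funext fun x => congr_arg ρ (L.symm_apply_apply x)
  have h := map_withDensity_comp μ hL hρL
  exact ⟨c, by rw [← withDensity_smul_measure, ← hc, ← h, hcomp]⟩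

end Measure

section PiMeasure

variable {E : Type*} [MeasurableSpace E]

theorem lintegral_pi_prod_eq_prod_lintegral : ∀ {n : ℕ} (μ : Fin n → Measure E)
    [∀ i, SigmaFinite (μ i)] {f : Fin n → E → ℝ≥0∞}, (∀ i, Measurable (f i)) →
      ∫⁻ x, ∏ i, f i (x i) ∂Measure.pi μ = ∏ i, ∫⁻ x, f i x ∂μ i
  | 0, _, _, _, _ => by simp
  | n + 1, μ, _, f, hf => by
    have htail : Measurable fun x : Fin n → E => ∏ i, f i.succ (x i) :=
      Finset.measurable_fun_prod _ fun i _ => (hf _).comp (measurable_pi_apply i)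
    have e := (measurePreserving_piFinSuccAbove μ 0).symm
    rw [← e.lintegral_comp_emb (MeasurableEquiv.measurableEmbedding _), Fin.prod_univ_succ,
      ← lintegral_pi_prod_eq_prod_lintegral (fun i => μ i.succ) fun i => hf i.succ]
    simp only [MeasurableEquiv.piFinSuccAbove_symm_apply, Fin.prod_univ_succ, Fin.insertNthEquiv,
      Equiv.coe_fn_mk, Fin.insertNth_zero, Fin.cons_zero, Fin.cons_succ]
    exact lintegral_prod_mul (hf 0).aemeasurable htail.aemeasurable

theorem pi_withDensity {n : ℕ} (μ : Fin n → Measure E) [∀ i, SigmaFinite (μ i)]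
    {f : Fin n → E → ℝ≥0∞} (hf : ∀ i, Measurable (f i))
    [∀ i, SigmaFinite ((μ i).withDensity (f i))] :
    Measure.pi (fun i => (μ i).withDensity (f i)) =
      (Measure.pi μ).withDensity fun x => ∏ i, f i (x i) := by
  refine Measure.pi_eq fun s hs => ?_
  have hind : (Set.univ.pi s).indicator (fun x => ∏ i, f i (x i)) =
      fun x => ∏ i, (s i).indicator (f i) (x i) := by
    funext x
    by_cases hx : x ∈ Set.univ.pi s
    · rw [Set.indicator_of_mem hx]
      exact Finset.prod_congr rfl fun i _ => (Set.indicator_of_mem (hx i trivial) _).symm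
    · rw [Set.indicator_of_notMem hx]
      obtain ⟨i, hi⟩ : ∃ i, x i ∉ s i := by simpa [Set.mem_pi] using hx
      exact (Finset.prod_eq_zero (Finset.mem_univ i) (Set.indicator_of_notMem hi _)).symm
  rw [withDensity_apply _ (MeasurableSet.univ_pi hs), ← lintegral_indicator (.univ_pi hs), hind,
    lintegral_pi_prod_eq_prod_lintegral _ fun i => (hf i).indicator (hs i)]
  exact Finset.prod_congr rfl fun i _ => by
    rw [withDensity_apply _ (hs i), lintegral_indicator (hs i)]

theorem pi_smul_withDensity {n : ℕ} (μ : Fin n → Measure E) [∀ i, SigmaFinite (μ i)]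
    {f : Fin n → E → ℝ≥0∞} (hf : ∀ i, Measurable (f i)) (c : Fin n → ℝ≥0∞)
    [∀ i, SigmaFinite (c i • (μ i).withDensity (f i))] :
    Measure.pi (fun i => c i • (μ i).withDensity (f i)) =
      (∏ i, c i) • (Measure.pi μ).withDensity fun x => ∏ i, f i (x i) := by
  have hc : ∀ i, c i • (μ i).withDensity (f i) = (μ i).withDensity (c i • f i) :=
    fun i => (withDensity_smul _ (hf i)).symm
  have : ∀ i, SigmaFinite ((μ i).withDensity (c i • f i)) := fun i => hc i ▸ inferInstance
  have hprod : Measurable fun x : Fin n → E => ∏ i, f i (x i) :=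
    Finset.measurable_fun_prod _ fun i _ => (hf i).comp (measurable_pi_apply i)
  simp only [hc]
  rw [pi_withDensity μ fun i => (hf i).const_smul (c i), ← withDensity_smul _ hprod]
  congr 1
  funext x
  simp [Finset.prod_mul_distrib]

end PiMeasure

section AeDet

variable [DecidableEq m]

theorem finite_det_add_smul_one_eq_zero [Fintype m] (A : Matrix m m ℂ) :
    {t : ℝ | (A + t • (1 : Matrix m m ℂ)).det = 0}.Finite := by
  have hroots : {z : ℂ | (-A).charpoly.IsRoot z}.Finite :=
    Polynomial.finite_setOfPred_isRoot (Matrix.charpoly_monic _).ne_zero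
  refine (hroots.preimage Complex.ofReal_injective.injOn).subset fun t ht => ?_
  rw [Set.mem_preimage, Set.mem_ofPred_eq, Polynomial.IsRoot, Matrix.eval_charpoly,
    ← Set.mem_ofPred.1 ht]
  congr 1
  ext i j
  simp [Matrix.one_apply, Matrix.diagonal_apply, Matrix.scalar_apply, add_comm]

-- Along every line in the direction `v`, the determinant is a nonzero polynomial.
theorem ae_det_add_ne_zero [Fintype m] {E : Type*} [NormedAddCommGroup E] [NormedSpace ℝ E]
    [MeasurableSpace E] [BorelSpace E] [FiniteDimensional ℝ E] (μ : Measure E)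
    [μ.IsAddHaarMeasure] (A : Matrix m m ℂ) (L : E →ₗ[ℝ] Matrix m m ℂ) {v : E} (hv : L v = 1) :
    ∀ᵐ x ∂μ, (A + L x).det ≠ 0 := by
  have hcont : Continuous fun x => (A + L x).det :=
    (continuous_const.add L.continuous_of_finiteDimensional).matrix_det
  refine ae_mem_of_ae_add_linearMap_mem (s := {x | (A + L x).det ≠ 0})
    (LinearMap.toSpanSingleton ℝ E v) volume μ
    (hcont.measurable (measurableSet_singleton 0)).compl fun y => ?_
  have hline := (finite_det_add_smul_one_eq_zero (A + L y)).measure_zero volume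
  refine (measure_eq_zero_iff_ae_notMem.1 hline).mono fun t ht => ?_
  simpa [hv, add_assoc] using ht

theorem ae_add_posSemidef_iff_posDef [Finite m] {E : Type*} [NormedAddCommGroup E]
    [NormedSpace ℝ E] [MeasurableSpace E] [BorelSpace E] [FiniteDimensional ℝ E] (μ : Measure E)
    [μ.IsAddHaarMeasure] (A : Matrix m m ℂ) (L : E →ₗ[ℝ] Matrix m m ℂ) {v : E} (hv : L v = 1) :
    ∀ᵐ x ∂μ, (A + L x).PosSemidef ↔ (A + L x).PosDef := by
  cases nonempty_fintype m
  exact (ae_det_add_ne_zero μ A L hv).mono fun _ hx =>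
    ⟨fun h => h.posDef_iff_det_ne_zero.2 hx, PosDef.posSemidef⟩

end AeDet

section Cone

/-- The cone of positive definite Hermitian matrices. -/
def posDefCone (m : Type*) : Set (HermMatrix m) := {x | (x : Matrix m m ℂ).PosDef}

theorem continuous_det_hermMatrix [Fintype m] [DecidableEq m] :
    Continuous fun x : HermMatrix m => (x : Matrix m m ℂ).det :=
  continuous_subtype_val.matrix_det

theorem measurableSet_posSemidef [Finite m] :
    MeasurableSet {x : HermMatrix m | (x : Matrix m m ℂ).PosSemidef} :=
  (isClosed_posSemidef.preimage continuous_subtype_val).measurableSet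

theorem measurableSet_posDefCone [Finite m] : MeasurableSet (posDefCone m) := by
  cases nonempty_fintype m
  have h : posDefCone m = {x : HermMatrix m | (x : Matrix m m ℂ).PosSemidef} ∩
      {x : HermMatrix m | (x : Matrix m m ℂ).det ≠ 0} :=
    Set.ext fun x => ⟨fun h => ⟨PosDef.posSemidef h, (PosDef.det_pos h).ne'⟩,
      fun h => h.1.posDef_iff_det_ne_zero.2 h.2⟩
  rw [h]
  exact measurableSet_posSemidef.inter
    (continuous_det_hermMatrix.measurable (measurableSet_singleton 0)).compl

variable [Fintype m]

theorem measurable_congruence_const (g : Matrix m m ℂ) : Measurable (congruence g) :=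
  (congruence g).continuous_of_finiteDimensional.measurable

theorem measurable_congruence :
    Measurable fun p : Matrix m m ℂ × HermMatrix m => congruence p.1 p.2 := by
  have h : Continuous fun p : Matrix m m ℂ × HermMatrix m => congruence p.1 p.2 :=
    ((continuous_fst.matrix_mul (continuous_subtype_val.comp continuous_snd)).matrix_mul
      continuous_fst.matrix_conjTranspose).subtype_mk _
  exact h.measurable

theorem ae_posSemidef_iff_posDef :
    ∀ᵐ x : HermMatrix m, (x : Matrix m m ℂ).PosSemidef ↔ (x : Matrix m m ℂ).PosDef := by
  let L : HermMatrix m →ₗ[ℝ] Matrix m m ℂ := (selfAdjoint.submodule ℝ (Matrix m m ℂ)).subtype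
  simpa only [zero_add] using! ae_add_posSemidef_iff_posDef volume 0 L (v := 1) rfl

-- The translates of the cone by multiples of `-1` cover the space.
theorem volume_posDefCone_ne_zero : volume (posDefCone m) ≠ 0 := by
  intro h0
  have hpsd : volume {x : HermMatrix m | (x : Matrix m m ℂ).PosSemidef} = 0 :=
    (measure_congr (ae_posSemidef_iff_posDef.mono fun x hx => propext hx)).trans h0
  have hcover : (Set.univ : Set (HermMatrix m)) ⊆
      ⋃ k : ℕ, (fun x => x + (k : ℝ) • 1) ⁻¹' {x | (x : Matrix m m ℂ).PosSemidef} := fun x _ =>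
    Set.mem_iUnion.2 (exists_add_smul_one_posSemidef x.2)
  refine NeZero.ne (volume : Measure (HermMatrix m)) (Measure.measure_univ_eq_zero.1 ?_)
  refine measure_mono_null hcover (measure_iUnion_null fun k => ?_)
  rw [measure_preimage_add_right, hpsd]

variable [DecidableEq m]

theorem re_det_pos {A : Matrix m m ℂ} (hA : A.PosDef) : 0 < A.det.re :=
  (Complex.pos_iff.1 hA.det_pos).1

theorem re_det_congruence (g : Matrix m m ℂ) (x : HermMatrix m) :
    (congruence g x : Matrix m m ℂ).det.re = ‖g.det‖ ^ 2 * (x : Matrix m m ℂ).det.re := by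
  rw [coe_congruence, det_mul, det_mul, det_conjTranspose, mul_right_comm, Complex.star_def,
    Complex.mul_conj, Complex.normSq_eq_norm_sq, Complex.re_ofReal_mul]

theorem congruence_mem_posDefCone {g : Matrix m m ℂ} (hg : g.det ≠ 0) {x : HermMatrix m} :
    congruence g x ∈ posDefCone m ↔ x ∈ posDefCone m :=
  IsUnit.posDef_star_right_conjugate_iff ((isUnit_iff_isUnit_det _).2 hg.isUnit)

theorem det_congruence_ne_zero {g : Matrix m m ℂ} (hg : g.det ≠ 0) :
    LinearMap.det (congruence g) ≠ 0 := by
  rw [← abs_ne_zero, abs_det_congruence]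
  positivity

theorem measurable_invSqrt : Measurable fun x : HermMatrix m => invSqrt (x : Matrix m m ℂ) := by
  have h : Measurable ((posDefCone m).piecewise (fun x => invSqrt (x : Matrix m m ℂ)) 1) :=
    ContinuousOn.measurable_piecewise (continuousOn_invSqrt.comp continuous_subtype_val.continuousOn
      fun _ hx => hx) continuousOn_const measurableSet_posDefCone
  convert h using 2 with x
  by_cases hx : x ∈ posDefCone m
  · rw [Set.piecewise_eq_of_mem _ _ _ hx]
  · rw [Set.piecewise_eq_of_notMem _ _ _ hx]
    exact Set.piecewise_eq_of_notMem _ _ _ hx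

/-- The density `x ↦ det x ^ k` on the cone of positive definite matrices, extended by zero to all
Hermitian matrices. The determinant is real, so only its real part is recorded. -/
noncomputable def coneDensity (k : ℤ) : HermMatrix m → ℝ≥0∞ :=
  (posDefCone m).indicator fun x => ENNReal.ofReal ((x : Matrix m m ℂ).det.re ^ k)

theorem measurable_coneDensity (k : ℤ) : Measurable (coneDensity (m := m) k) :=
  (((Complex.continuous_re.comp continuous_det_hermMatrix).measurable.pow_const
    k).ennreal_ofReal).indicator measurableSet_posDefCone

theorem coneDensity_of_posDef (k : ℤ) {x : HermMatrix m} (hx : x ∈ posDefCone m) :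
    coneDensity k x = ENNReal.ofReal ((x : Matrix m m ℂ).det.re ^ k) :=
  Set.indicator_of_mem hx _

theorem coneDensity_ne_zero (k : ℤ) {x : HermMatrix m} :
    coneDensity k x ≠ 0 ↔ x ∈ posDefCone m := by
  refine ⟨fun h => of_not_not fun hx => h (Set.indicator_of_notMem hx _), fun hx => ?_⟩
  rw [coneDensity_of_posDef k hx, ENNReal.ofReal_ne_zero_iff]
  exact zpow_pos (re_det_pos hx) k

theorem coneDensity_ne_top (k : ℤ) (x : HermMatrix m) : coneDensity k x ≠ ⊤ := by
  rw [coneDensity, Set.indicator_apply]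
  split_ifs <;> simp

theorem coneDensity_mul (k l : ℤ) (x : HermMatrix m) :
    coneDensity k x * coneDensity l x = coneDensity (k + l) x := by
  by_cases hx : x ∈ posDefCone m
  · have hpos := re_det_pos hx
    simp only [coneDensity_of_posDef _ hx]
    rw [← ENNReal.ofReal_mul (by positivity), zpow_add₀ hpos.ne']
  · simp [coneDensity, hx]

theorem coneDensity_congruence (k : ℤ) {g : Matrix m m ℂ} (hg : g.det ≠ 0) (x : HermMatrix m) :
    coneDensity k (congruence g x) = ENNReal.ofReal ((‖g.det‖ ^ 2) ^ k) * coneDensity k x := by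
  simp only [coneDensity, Set.indicator_apply, congruence_mem_posDefCone hg]
  split_ifs
  · rw [re_det_congruence, mul_zpow, ENNReal.ofReal_mul (by positivity)]
  · rw [mul_zero]

scoped instance (k : ℤ) : SigmaFinite (volume.withDensity (coneDensity (m := m) k)) :=
  SigmaFinite.withDensity_of_ne_top (Filter.Eventually.of_forall (coneDensity_ne_top k))

theorem withDensity_coneDensity_ne_zero (k : ℤ) :
    volume.withDensity (coneDensity (m := m) k) ≠ 0 := by
  rw [Ne, withDensity_eq_zero_iff (measurable_coneDensity k).aemeasurable]
  exact fun h => volume_posDefCone_ne_zero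
    (measure_mono_null (fun x hx => (coneDensity_ne_zero k).2 hx) h)

theorem ae_withDensity_coneDensity (k : ℤ) :
    ∀ᵐ x ∂volume.withDensity (coneDensity (m := m) k), x ∈ posDefCone m := by
  rw [ae_withDensity_iff (measurable_coneDensity k)]
  exact Filter.Eventually.of_forall fun x => (coneDensity_ne_zero k).1

theorem ofReal_pow_mul_ofReal_zpow_neg {a : ℝ} (ha : 0 < a) (n : ℕ) :
    ENNReal.ofReal (a ^ n) * ENNReal.ofReal (a ^ (-n : ℤ)) = 1 := by
  rw [← ENNReal.ofReal_mul (by positivity), _root_.zpow_neg, zpow_natCast,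
    mul_inv_cancel₀ (by positivity), ENNReal.ofReal_one]

theorem measurePreserving_congruence {g : Matrix m m ℂ} (hg : g.det ≠ 0) :
    MeasurePreserving (congruence g)
      (volume.withDensity (coneDensity (-Fintype.card m : ℤ)))
      (volume.withDensity (coneDensity (-Fintype.card m : ℤ))) := by
  refine measurePreserving_withDensity_of_linearMap _ (det_congruence_ne_zero hg)
    (measurable_coneDensity _) fun x => ?_
  rw [abs_det_congruence, coneDensity_congruence _ hg, ← mul_assoc,
    ofReal_pow_mul_ofReal_zpow_neg (by positivity), one_mul]

end Cone

section Gram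

variable [Fintype κ]

/-- The Gram matrix `W Wᴴ` of the rows of `W`. -/
def gram (W : Matrix m κ ℂ) : HermMatrix m := ⟨W * Wᴴ, isHermitian_mul_conjTranspose_self W⟩

@[simp] theorem coe_gram (W : Matrix m κ ℂ) : (gram W : Matrix m m ℂ) = W * Wᴴ := rfl

theorem gram_mul_left [Fintype m] (g : Matrix m m ℂ) (W : Matrix m κ ℂ) :
    gram (g * W) = congruence g (gram W) :=
  Subtype.ext (by simp [Matrix.mul_assoc])

theorem gram_mul_right [DecidableEq κ] (W : Matrix m κ ℂ) {u : Matrix κ κ ℂ} (hu : u * uᴴ = 1) :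
    gram (W * u) = gram W :=
  Subtype.ext (by rw [coe_gram, coe_gram, conjTranspose_mul, Matrix.mul_assoc, ← Matrix.mul_assoc u,
    hu, Matrix.one_mul])

theorem continuous_gram : Continuous (gram : Matrix m κ ℂ → HermMatrix m) :=
  (continuous_id.matrix_mul continuous_id.matrix_conjTranspose).subtype_mk _

theorem measurable_gram [Finite m] : Measurable (gram : Matrix m κ ℂ → HermMatrix m) :=
  continuous_gram.measurable

variable [Fintype m]

theorem measurable_gram_mul_congruence {f h : HermMatrix m → ℝ≥0∞} (hf : Measurable f)
    (hh : Measurable h) : Measurable fun p : Matrix m m ℂ × HermMatrix m =>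
      f (gram p.1) * h (congruence p.1 p.2) := by
  have hfg : Measurable fun W : Matrix m m ℂ => f (gram W) := hf.comp measurable_gram
  simpa only [Function.comp_def, Pi.mul_def] using
    (hfg.comp measurable_fst).mul (hh.comp measurable_congruence)

theorem re_trace_gram (W : Matrix m κ ℂ) :
    (gram W : Matrix m m ℂ).trace.re = ∑ i, ∑ j, ‖W i j‖ ^ 2 := by
  simp [trace, Matrix.mul_apply, Complex.mul_conj, Complex.normSq_eq_norm_sq,
    -Complex.ofReal_pow]

/-- The set of Hermitian matrices of trace at most `r`, whose preimages under `gram` are compact. -/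
def traceLE (m : Type*) [Fintype m] (r : ℝ) : Set (HermMatrix m) :=
  {x | (x : Matrix m m ℂ).trace.re ≤ r}

theorem measurableSet_traceLE (r : ℝ) : MeasurableSet (traceLE m r) := by
  have h : Continuous fun x : HermMatrix m => (x : Matrix m m ℂ).trace.re :=
    Complex.continuous_re.comp continuous_subtype_val.matrix_trace
  exact measurableSet_le h.measurable measurable_const

theorem volume_gram_preimage_traceLE_lt_top (r : ℝ) :
    volume ((gram : Matrix m κ ℂ → HermMatrix m) ⁻¹' traceLE m r) < ⊤ := by
  refine (measure_mono fun W hW => ?_).trans_lt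
    (isCompact_closedBall (0 : Matrix m κ ℂ) √r).measure_lt_top
  have hentry : ∀ i j, ‖W i j‖ ≤ √r := fun i j => by
    refine Real.le_sqrt_of_sq_le (le_trans ?_ ((re_trace_gram W).symm.trans_le hW))
    exact (single_le_sum (f := fun j => ‖W i j‖ ^ 2) (fun _ _ => by positivity) (mem_univ j)).trans
      (single_le_sum (f := fun i => ∑ j, ‖W i j‖ ^ 2) (fun _ _ => by positivity) (mem_univ i))
  rw [mem_closedBall_zero_iff]
  exact (pi_norm_le_iff_of_nonneg r.sqrt_nonneg).2 fun i =>
    (pi_norm_le_iff_of_nonneg r.sqrt_nonneg).2 (hentry i)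

scoped instance : SigmaFinite ((volume : Measure (Matrix m κ ℂ)).map gram) := by
  refine ⟨⟨⟨fun k : ℕ => traceLE m k, fun _ => trivial, fun k => ?_, ?_⟩⟩⟩
  · rw [Measure.map_apply measurable_gram (measurableSet_traceLE _)]
    exact volume_gram_preimage_traceLE_lt_top _
  · exact Set.iUnion_eq_univ_iff.2 fun x => exists_nat_ge (x : Matrix m m ℂ).trace.re

theorem posDef_gram_of_det_submatrix_ne_zero [DecidableEq m] {W : Matrix m κ ℂ} (e : m → κ)
    (h : (W.submatrix id e).det ≠ 0) : gram W ∈ posDefCone m := by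
  refine PosDef.mul_conjTranspose_self _ fun v w hvw => ?_
  refine vecMul_injective_of_isUnit ((isUnit_iff_isUnit_det _).2 h.isUnit) (funext fun a => ?_)
  exact congrFun hvw (e a)

theorem ae_posDef_gram (hκ : Fintype.card m ≤ Fintype.card κ) :
    ∀ᵐ W : Matrix m κ ℂ, gram W ∈ posDefCone m := by
  obtain ⟨e⟩ : Nonempty (m ↪ κ) := Function.Embedding.nonempty_of_card_le hκ
  let L : Matrix m κ ℂ →ₗ[ℝ] Matrix m m ℂ :=
    { toFun := fun W => W.submatrix id e
      map_add' := fun _ _ => rfl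
      map_smul' := fun _ _ => rfl }
  have hL : L ((1 : Matrix κ κ ℂ).submatrix e id) = 1 := submatrix_one_embedding e
  refine (ae_det_add_ne_zero volume 0 L hL).mono fun W hW => ?_
  exact posDef_gram_of_det_submatrix_ne_zero e (by rwa [zero_add] at hW)

theorem coneDensity_gram_square [DecidableEq m] (k : ℤ) (W : Matrix m m ℂ) :
    coneDensity k (gram W) = if W.det = 0 then 0 else ENNReal.ofReal ((‖W.det‖ ^ 2) ^ k) := by
  split_ifs with hW
  · by_contra h
    refine (PosDef.det_pos ((coneDensity_ne_zero k).1 h)).ne' ?_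
    rw [coe_gram, det_mul, hW, zero_mul]
  · have hone : (1 : HermMatrix m) ∈ posDefCone m := PosDef.one
    have hgram : gram W = congruence W 1 := Subtype.ext (by simp)
    rw [hgram, coneDensity_congruence k hW, coneDensity_of_posDef k hone]
    simp

end Gram

section Invariant

variable [Fintype m] [DecidableEq m] [Fintype κ]

/-- The measure `det (W Wᴴ) ^ (-|κ|) dW` on the `m × κ` matrices of full rank. -/
noncomputable def invariantMeasure (m κ : Type*) [Fintype m] [DecidableEq m] [Fintype κ] :
    Measure (Matrix m κ ℂ) :=
  volume.withDensity (coneDensity (-Fintype.card κ) ∘ gram)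

theorem measurable_coneDensity_gram (k : ℤ) :
    Measurable (coneDensity k ∘ gram : Matrix m κ ℂ → ℝ≥0∞) :=
  (measurable_coneDensity k).comp measurable_gram

scoped instance : SigmaFinite (invariantMeasure m κ) :=
  SigmaFinite.withDensity_of_ne_top (Filter.Eventually.of_forall fun _ => coneDensity_ne_top _ _)

theorem map_gram_invariantMeasure : (invariantMeasure m κ).map gram =
    ((volume : Measure (Matrix m κ ℂ)).map gram).withDensity (coneDensity (-Fintype.card κ)) :=
  map_withDensity_comp _ measurable_gram (measurable_coneDensity _)

scoped instance : SigmaFinite ((invariantMeasure m κ).map gram) :=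
  map_gram_invariantMeasure (m := m) (κ := κ) ▸
    SigmaFinite.withDensity_of_ne_top (Filter.Eventually.of_forall (coneDensity_ne_top _))

theorem measurePreserving_mul_left {g : Matrix m m ℂ} (hg : g.det ≠ 0) :
    MeasurePreserving (g * ·) (invariantMeasure m κ) (invariantMeasure m κ) := by
  have hdet : LinearMap.det (mulLeftLinearMap κ ℝ g) ≠ 0 := by
    rw [← abs_ne_zero, abs_det_mulLeftLinearMap]
    positivity
  refine measurePreserving_withDensity_of_linearMap volume hdet (measurable_coneDensity_gram _)
    fun W => ?_
  rw [Function.comp_apply, mulLeftLinearMap_apply, gram_mul_left, coneDensity_congruence _ hg,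
    abs_det_mulLeftLinearMap, ← mul_assoc, ofReal_pow_mul_ofReal_zpow_neg (by positivity), one_mul,
    Function.comp_apply]

theorem measurePreserving_mul_right {g : Matrix m m ℂ} (hg : g.det ≠ 0) :
    MeasurePreserving (· * g) (invariantMeasure m m) (invariantMeasure m m) := by
  have hdet : LinearMap.det (mulRightLinearMap m ℝ g) ≠ 0 := by
    rw [← abs_ne_zero, abs_det_mulRightLinearMap]
    positivity
  refine measurePreserving_withDensity_of_linearMap volume hdet (measurable_coneDensity_gram _)
    fun W => ?_
  rw [Function.comp_apply, mulRightLinearMap_apply, Function.comp_apply, coneDensity_gram_square,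
    coneDensity_gram_square, abs_det_mulRightLinearMap, det_mul]
  split_ifs with hWg hW hW
  · rw [mul_zero]
  · exact absurd hWg (mul_ne_zero hW hg)
  · simp [hW] at hWg
  · rw [norm_mul, mul_pow, mul_zpow, ENNReal.ofReal_mul (by positivity), mul_left_comm,
      ofReal_pow_mul_ofReal_zpow_neg (by positivity), mul_one]

theorem measurePreserving_congruence_map_gram {g : Matrix m m ℂ} (hg : g.det ≠ 0) :
    MeasurePreserving (congruence g) ((invariantMeasure m κ).map gram)
      ((invariantMeasure m κ).map gram) := by
  have hmeas : Measurable (congruence g) := measurable_congruence_const g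
  refine ⟨hmeas, ?_⟩
  rw [Measure.map_map hmeas measurable_gram]
  nth_rw 2 [← (measurePreserving_mul_left hg).map_eq]
  rw [Measure.map_map measurable_gram (measurePreserving_mul_left (κ := κ) hg).measurable]
  congr 1
  exact funext fun W => (gram_mul_left g W).symm

theorem ae_invariantMeasure_det_ne_zero : ∀ᵐ W ∂invariantMeasure m m, W.det ≠ 0 := by
  rw [invariantMeasure, ae_withDensity_iff (measurable_coneDensity_gram _)]
  refine Filter.Eventually.of_forall fun W hW h => hW ?_
  rw [Function.comp_apply, coneDensity_gram_square, if_pos h]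

theorem ae_posDef_gram_invariantMeasure (hκ : Fintype.card m ≤ Fintype.card κ) :
    ∀ᵐ x ∂(invariantMeasure m κ).map gram, x ∈ posDefCone m :=
  (ae_map_iff measurable_gram.aemeasurable measurableSet_posDefCone).2
    ((withDensity_absolutelyContinuous _ _).ae_le (ae_posDef_gram hκ))

theorem map_gram_invariantMeasure_ne_zero (hκ : Fintype.card m ≤ Fintype.card κ) :
    (invariantMeasure m κ).map gram ≠ 0 := by
  rw [Ne, Measure.map_eq_zero_iff measurable_gram.aemeasurable, invariantMeasure,
    withDensity_eq_zero_iff (measurable_coneDensity_gram _).aemeasurable]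
  intro h
  refine NeZero.ne (volume : Measure (Matrix m κ ℂ))
    (ae_eq_bot.1 (Filter.eventually_false_iff_eq_bot.1 ?_))
  filter_upwards [h, ae_posDef_gram hκ] with W h0 hW
  exact (coneDensity_ne_zero _).2 hW h0

end Invariant

section Uniqueness

variable [Fintype m] [DecidableEq m]

theorem gram_mul_invSqrt (V : Matrix m m ℂ) {x : HermMatrix m} (hx : x ∈ posDefCone m) :
    (gram (V * invSqrt (x : Matrix m m ℂ)) : Matrix m m ℂ) = V * (x : Matrix m m ℂ)⁻¹ * Vᴴ := by
  rw [coe_gram, conjTranspose_mul, Matrix.mul_assoc, ← Matrix.mul_assoc (invSqrt _),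
    invSqrt_mul_conjTranspose hx, Matrix.mul_assoc]

theorem det_conjTranspose_inv_ne_zero {V : Matrix m m ℂ} (hV : V.det ≠ 0) : V⁻¹ᴴ.det ≠ 0 := by
  rw [det_conjTranspose, star_ne_zero]
  exact (isUnit_nonsing_inv_det_iff.2 hV.isUnit).ne_zero

theorem gram_mul_invSqrt_eq {V : Matrix m m ℂ} (hV : V.det ≠ 0) {x : HermMatrix m}
    (hx : x ∈ posDefCone m) : gram (V * invSqrt (x : Matrix m m ℂ)) =
      gram (invSqrt (congruence V⁻¹ᴴ x : Matrix m m ℂ)) := by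
  have hxV : congruence V⁻¹ᴴ x ∈ posDefCone m :=
    (congruence_mem_posDefCone (det_conjTranspose_inv_ne_zero hV)).2 hx
  refine Subtype.ext ?_
  rw [gram_mul_invSqrt V hx, ← Matrix.one_mul (invSqrt _), gram_mul_invSqrt 1 hxV, coe_congruence,
    conjTranspose_conjTranspose, Matrix.mul_inv_rev, Matrix.mul_inv_rev,
    nonsing_inv_nonsing_inv _ hV.isUnit,
    conjTranspose_nonsing_inv, nonsing_inv_nonsing_inv _ (by simpa using hV.isUnit)]
  simp [Matrix.mul_assoc]

theorem congruence_mul_invSqrt (V : Matrix m m ℂ) {x : HermMatrix m} (hx : x ∈ posDefCone m) :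
    congruence (V * invSqrt (x : Matrix m m ℂ)) x = gram V := by
  refine Subtype.ext ?_
  calc V * invSqrt (x : Matrix m m ℂ) * x * (V * invSqrt (x : Matrix m m ℂ))ᴴ
      = V * (invSqrt (x : Matrix m m ℂ) * x * (invSqrt (x : Matrix m m ℂ))ᴴ) * Vᴴ := by
        simp only [conjTranspose_mul, Matrix.mul_assoc]
    _ = V * Vᴴ := by rw [invSqrt_mul_mul_conjTranspose hx, Matrix.mul_one]

theorem measurable_gram_mul_invSqrt : Measurable fun p : Matrix m m ℂ × HermMatrix m =>
    gram (p.1 * invSqrt (p.2 : Matrix m m ℂ)) := by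
  have hmul : Measurable fun p : Matrix m m ℂ × Matrix m m ℂ => gram (p.1 * p.2) :=
    (continuous_gram.comp (continuous_fst.matrix_mul continuous_snd)).measurable
  have hpair : Measurable fun p : Matrix m m ℂ × HermMatrix m =>
      (p.1, invSqrt (p.2 : Matrix m m ℂ)) :=
    measurable_fst.prodMk (measurable_invSqrt.comp measurable_snd)
  simpa only [Function.comp_def] using hmul.comp hpair

theorem lintegral_gram_mul_invSqrt {μ : Measure (HermMatrix m)} (hμ : ∀ᵐ x ∂μ, x ∈ posDefCone m)
    (hinv : ∀ g : Matrix m m ℂ, g.det ≠ 0 → MeasurePreserving (congruence g) μ μ)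
    {V : Matrix m m ℂ} (hV : V.det ≠ 0) {f : HermMatrix m → ℝ≥0∞} (hf : Measurable f) :
    ∫⁻ x, f (gram (V * invSqrt (x : Matrix m m ℂ))) ∂μ =
      ∫⁻ x, f (gram (invSqrt (x : Matrix m m ℂ))) ∂μ := by
  have hfs : Measurable fun x : HermMatrix m => f (gram (invSqrt (x : Matrix m m ℂ))) :=
    hf.comp (measurable_gram.comp measurable_invSqrt)
  rw [← (hinv V⁻¹ᴴ (det_conjTranspose_inv_ne_zero hV)).lintegral_comp hfs]
  exact lintegral_congr_ae (hμ.mono fun x hx => congrArg f (gram_mul_invSqrt_eq hV hx))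

-- The substitution `W = V x ^ (-1/2)`.
theorem lintegral_gram_mul_congruence {x : HermMatrix m} (hx : x ∈ posDefCone m)
    {f h : HermMatrix m → ℝ≥0∞} (hf : Measurable f) (hh : Measurable h) :
    ∫⁻ W, f (gram W) * h (congruence W x) ∂invariantMeasure m m =
      ∫⁻ V, f (gram (V * invSqrt (x : Matrix m m ℂ))) * h (gram V) ∂invariantMeasure m m := by
  have hmeas : Measurable fun W : Matrix m m ℂ => f (gram W) * h (congruence W x) := by
    simpa only [Function.comp_def] using
      (measurable_gram_mul_congruence hf hh).comp (measurable_prodMk_right (y := x))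
  have hsubst := (measurePreserving_mul_right
    (det_invSqrt_ne_zero (x : Matrix m m ℂ))).lintegral_comp hmeas
  simp only [congruence_mul_invSqrt _ hx] at hsubst
  exact hsubst.symm

theorem lintegral_gram_mul_lintegral {μ : Measure (HermMatrix m)} [SFinite μ]
    (hμ : ∀ᵐ x ∂μ, x ∈ posDefCone m)
    (hinv : ∀ g : Matrix m m ℂ, g.det ≠ 0 → MeasurePreserving (congruence g) μ μ)
    {f h : HermMatrix m → ℝ≥0∞} (hf : Measurable f) (hh : Measurable h) :
    (∫⁻ W, f (gram W) ∂invariantMeasure m m) * ∫⁻ x, h x ∂μ =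
      (∫⁻ x, f (gram (invSqrt (x : Matrix m m ℂ))) ∂μ) *
        ∫⁻ V, h (gram V) ∂invariantMeasure m m := by
  have hfg : Measurable fun W : Matrix m m ℂ => f (gram W) := hf.comp measurable_gram
  have hhg : Measurable fun W : Matrix m m ℂ => h (gram W) := hh.comp measurable_gram
  have hright : Measurable fun p : Matrix m m ℂ × HermMatrix m =>
      f (gram (p.1 * invSqrt (p.2 : Matrix m m ℂ))) * h (gram p.1) := by
    simpa only [Function.comp_def, Pi.mul_def] using
      (hf.comp measurable_gram_mul_invSqrt).mul (hhg.comp measurable_fst)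
  calc (∫⁻ W, f (gram W) ∂invariantMeasure m m) * ∫⁻ x, h x ∂μ
      = ∫⁻ W, ∫⁻ x, f (gram W) * h (congruence W x) ∂μ ∂invariantMeasure m m := by
        rw [← lintegral_mul_const _ hfg]
        refine lintegral_congr_ae (ae_invariantMeasure_det_ne_zero.mono fun W hW => ?_)
        have hhW : Measurable fun x => h (congruence W x) :=
          hh.comp (measurable_congruence_const W)
        dsimp only
        rw [lintegral_const_mul _ hhW, (hinv W hW).lintegral_comp hh]
    _ = ∫⁻ x, ∫⁻ W, f (gram W) * h (congruence W x) ∂invariantMeasure m m ∂μ :=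
        lintegral_lintegral_swap (measurable_gram_mul_congruence hf hh).aemeasurable
    _ = ∫⁻ x, ∫⁻ V, f (gram (V * invSqrt (x : Matrix m m ℂ))) * h (gram V)
          ∂invariantMeasure m m ∂μ :=
        lintegral_congr_ae (hμ.mono fun x hx => lintegral_gram_mul_congruence hx hf hh)
    _ = ∫⁻ V, ∫⁻ x, f (gram (V * invSqrt (x : Matrix m m ℂ))) * h (gram V) ∂μ
          ∂invariantMeasure m m :=
        (lintegral_lintegral_swap hright.aemeasurable).symm
    _ = _ := by
        rw [← lintegral_const_mul _ hhg]
        refine lintegral_congr_ae (ae_invariantMeasure_det_ne_zero.mono fun V hV => ?_)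
        have hfV : Measurable fun x : HermMatrix m =>
            f (gram (V * invSqrt (x : Matrix m m ℂ))) := by
          simpa only [Function.comp_def] using
            (hf.comp measurable_gram_mul_invSqrt).comp (measurable_prodMk_left (x := V))
        dsimp only
        rw [lintegral_mul_const _ hfV, lintegral_gram_mul_invSqrt hμ hinv hV hf]

theorem exists_eq_smul_map_gram {μ : Measure (HermMatrix m)} [SFinite μ]
    (hμ : ∀ᵐ x ∂μ, x ∈ posDefCone m)
    (hinv : ∀ g : Matrix m m ℂ, g.det ≠ 0 → MeasurePreserving (congruence g) μ μ) :
    ∃ c : ℝ≥0∞, μ = c • (invariantMeasure m m).map gram := by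
  obtain ⟨s, hs, -, hs0, hst⟩ := Measure.exists_subset_measure_lt_top MeasurableSet.univ
    (Measure.measure_univ_pos.2 (map_gram_invariantMeasure_ne_zero (le_refl (Fintype.card m))))
  refine ⟨((invariantMeasure m m).map gram s)⁻¹ *
    ∫⁻ x, s.indicator 1 (gram (invSqrt (x : Matrix m m ℂ))) ∂μ, Measure.ext fun t ht => ?_⟩
  have h := lintegral_gram_mul_lintegral hμ hinv (measurable_one.indicator hs)
    (measurable_one.indicator ht)
  rw [lintegral_indicator_one_comp measurable_gram hs,
    lintegral_indicator_one_comp measurable_gram ht, lintegral_indicator_one ht] at h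
  rw [Measure.smul_apply, smul_eq_mul, mul_assoc, ← h, ← mul_assoc,
    ENNReal.inv_mul_cancel hs0.ne' hst.ne, one_mul]

theorem exists_eq_smul_of_congruence_invariant {μ₁ μ₂ : Measure (HermMatrix m)} [SigmaFinite μ₁]
    [SigmaFinite μ₂] (h₁ : μ₁ ≠ 0) (h₂ : μ₂ ≠ 0) (hμ₁ : ∀ᵐ x ∂μ₁, x ∈ posDefCone m)
    (hμ₂ : ∀ᵐ x ∂μ₂, x ∈ posDefCone m)
    (hinv₁ : ∀ g : Matrix m m ℂ, g.det ≠ 0 → MeasurePreserving (congruence g) μ₁ μ₁)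
    (hinv₂ : ∀ g : Matrix m m ℂ, g.det ≠ 0 → MeasurePreserving (congruence g) μ₂ μ₂) :
    ∃ c : ℝ≥0∞, c ≠ 0 ∧ c ≠ ⊤ ∧ μ₁ = c • μ₂ := by
  obtain ⟨c₁, hc₁⟩ := exists_eq_smul_map_gram hμ₁ hinv₁
  obtain ⟨c₂, hc₂⟩ := exists_eq_smul_map_gram hμ₂ hinv₂
  exact exists_eq_smul_of_eq_smul h₁ h₂ hc₁ hc₂

end Uniqueness

section Wishart

variable [Fintype m] [DecidableEq m] [Fintype κ]

theorem withDensity_coneDensity_add (μ : Measure (HermMatrix m)) (k l : ℤ) :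
    (μ.withDensity (coneDensity k)).withDensity (coneDensity l) =
      μ.withDensity (coneDensity (k + l)) := by
  rw [← withDensity_mul _ (measurable_coneDensity k) (measurable_coneDensity l)]
  exact congrArg μ.withDensity (funext (coneDensity_mul k l))

theorem withDensity_coneDensity_zero {μ : Measure (HermMatrix m)}
    (hμ : ∀ᵐ x ∂μ, x ∈ posDefCone m) : μ.withDensity (coneDensity 0) = μ := by
  nth_rw 2 [← withDensity_one (μ := μ)]
  refine withDensity_congr_ae (hμ.mono fun x hx => ?_)
  rw [coneDensity_of_posDef 0 hx]
  simp

theorem exists_map_gram_eq_smul_withDensity (hκ : Fintype.card m ≤ Fintype.card κ) :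
    ∃ c : ℝ≥0∞, c ≠ 0 ∧ c ≠ ⊤ ∧ (volume : Measure (Matrix m κ ℂ)).map gram =
      c • volume.withDensity (coneDensity (Fintype.card κ - Fintype.card m)) := by
  obtain ⟨c, hc0, hct, hc⟩ := exists_eq_smul_of_congruence_invariant
    (map_gram_invariantMeasure_ne_zero hκ) (withDensity_coneDensity_ne_zero _)
    (ae_posDef_gram_invariantMeasure hκ) (ae_withDensity_coneDensity _)
    (fun _ => measurePreserving_congruence_map_gram) (fun _ => measurePreserving_congruence)
  refine ⟨c, hc0, hct, ?_⟩
  have hcone : ∀ᵐ x ∂(volume : Measure (Matrix m κ ℂ)).map gram, x ∈ posDefCone m :=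
    (ae_map_iff measurable_gram.aemeasurable measurableSet_posDefCone).2 (ae_posDef_gram hκ)
  have h := congrArg (Measure.withDensity · (coneDensity (Fintype.card κ))) hc
  rwa [map_gram_invariantMeasure, withDensity_smul_measure, withDensity_coneDensity_add,
    withDensity_coneDensity_add, neg_add_cancel, withDensity_coneDensity_zero hcone,
    neg_add_eq_sub] at h

end Wishart

section Blocks

/-- The decomposition of a matrix into its blocks of columns, the columns being partitioned into
the fibers of `b`. -/
def blocks (m : Type*) (b : κ → ι) :
    Matrix m κ ℂ ≃ₗ[ℝ] ∀ i, Matrix m {r // b r = i} ℂ where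
  toFun X i := X.submatrix id Subtype.val
  invFun Y := Matrix.of fun a r => Y (b r) a ⟨r, rfl⟩
  map_add' _ _ := rfl
  map_smul' _ _ := rfl
  left_inv _ := rfl
  right_inv Y := by
    funext i
    ext a ⟨r, rfl⟩
    rfl

variable [Fintype κ] [DecidableEq ι]

/-- The Gram matrices of the blocks of columns of a matrix. -/
noncomputable def blockGram (b : κ → ι) (X : Matrix m κ ℂ) : ι → HermMatrix m :=
  fun i => gram (blocks m b X i)

theorem sum_blockGram [Fintype ι] (b : κ → ι) (X : Matrix m κ ℂ) :
    ∑ i, blockGram b X i = gram X := by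
  refine Subtype.ext (Matrix.ext fun p q => ?_)
  rw [AddSubgroup.val_finsetSum, Matrix.sum_apply]
  exact Fintype.sum_fiberwise b fun r => X p r * star (X q r)

theorem blockGram_mul_left [Fintype m] (b : κ → ι) (g : Matrix m m ℂ) (X : Matrix m κ ℂ) (i : ι) :
    blockGram b (g * X) i = congruence g (blockGram b X i) :=
  gram_mul_left g (blocks m b X i)

theorem measurable_blockGram [Finite m] (b : κ → ι) :
    Measurable (blockGram b : Matrix m κ ℂ → ι → HermMatrix m) := by
  refine measurable_pi_lambda _ fun i => ?_
  have h : Continuous fun X : Matrix m κ ℂ =>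
      gram (X.submatrix id (Subtype.val : {r // b r = i} → κ)) :=
    continuous_gram.comp (continuous_id.matrix_submatrix id Subtype.val)
  exact h.measurable

theorem exists_map_blockGram_eq_smul [Fintype m] [DecidableEq m] {n : ℕ} (b : κ → Fin n)
    (hb : ∀ i, Fintype.card m ≤ Fintype.card {r // b r = i}) : ∃ c : ℝ≥0∞,
    (volume : Measure (Matrix m κ ℂ)).map (blockGram b) =
      c • (volume : Measure (Fin n → HermMatrix m)).withDensity fun A =>
        ∏ i, coneDensity (Fintype.card {r // b r = i} - Fintype.card m) (A i) := by
  choose c _ _ hc using fun i => exists_map_gram_eq_smul_withDensity (hb i)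
  obtain ⟨c₀, hc₀⟩ :=
    exists_map_linearEquiv_eq_smul (blocks m b) volume (Measure.pi fun _ => volume)
  have : ∀ i, SigmaFinite (c i • (volume : Measure (HermMatrix m)).withDensity
      (coneDensity (Fintype.card {r // b r = i} - Fintype.card m))) := fun i =>
    hc i ▸ inferInstance
  have hgram : Measurable fun (Y : ∀ i, Matrix m {r // b r = i} ℂ) i => gram (Y i) :=
    measurable_pi_lambda _ fun i => measurable_gram.comp (measurable_pi_apply i)
  have hblocks : Measurable (blocks m b) :=
    (blocks m b).toLinearMap.continuous_of_finiteDimensional.measurable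
  refine ⟨c₀ * ∏ i, c i, ?_⟩
  calc (volume : Measure (Matrix m κ ℂ)).map (blockGram b)
      = ((volume : Measure (Matrix m κ ℂ)).map (blocks m b)).map fun Y i => gram (Y i) :=
        (Measure.map_map hgram hblocks).symm
    _ = c₀ • Measure.pi fun i => (volume : Measure (Matrix m {r // b r = i} ℂ)).map gram := by
        rw [hc₀, Measure.map_smul, Measure.pi_map_pi fun i => measurable_gram.aemeasurable]
    _ = _ := by
        simp only [hc]
        rw [pi_smul_withDensity _ (fun i => measurable_coneDensity _), smul_smul, volume_pi]

end Blocks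

section Simplex

variable [Fintype m] [DecidableEq m] {n : ℕ}

/-- The unnormalized density `∏ det (z j) ^ k j * det (s - ∑ z j) ^ k (last n)` on the tuples of
positive definite matrices with positive definite remainder `s - ∑ z j`. -/
noncomputable def simplexDensity (k : Fin (n + 1) → ℤ) (s : HermMatrix m)
    (z : Fin n → HermMatrix m) : ℝ≥0∞ :=
  (∏ j, coneDensity (k j.castSucc) (z j)) * coneDensity (k (Fin.last n)) (s - ∑ j, z j)

theorem measurable_simplexDensity (k : Fin (n + 1) → ℤ) :
    Measurable fun p : HermMatrix m × (Fin n → HermMatrix m) => simplexDensity k p.1 p.2 := by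
  have hprod : Measurable fun p : HermMatrix m × (Fin n → HermMatrix m) =>
      ∏ j, coneDensity (k j.castSucc) (p.2 j) :=
    Finset.measurable_fun_prod _ fun j _ =>
      (measurable_coneDensity _).comp ((measurable_pi_apply j).comp measurable_snd)
  have hrest : Measurable fun p : HermMatrix m × (Fin n → HermMatrix m) => p.1 - ∑ j, p.2 j :=
    measurable_fst.sub (Finset.measurable_fun_sum _ fun j _ =>
      (measurable_pi_apply j).comp measurable_snd)
  exact hprod.mul ((measurable_coneDensity _).comp hrest)

theorem measurable_simplexDensity_right (k : Fin (n + 1) → ℤ) (s : HermMatrix m) :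
    Measurable (simplexDensity k s : (Fin n → HermMatrix m) → ℝ≥0∞) := by
  simpa only [Function.comp_def] using
    (measurable_simplexDensity k).comp (measurable_prodMk_left (x := s))

theorem simplexDensity_ne_top (k : Fin (n + 1) → ℤ) (s : HermMatrix m)
    (z : Fin n → HermMatrix m) : simplexDensity k s z ≠ ⊤ :=
  ENNReal.mul_ne_top (ENNReal.prod_ne_top fun _ _ => coneDensity_ne_top _ _)
    (coneDensity_ne_top _ _)

scoped instance (k : Fin (n + 1) → ℤ) (s : HermMatrix m) :
    SigmaFinite (volume.withDensity (simplexDensity k s)) :=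
  SigmaFinite.withDensity_of_ne_top (Filter.Eventually.of_forall (simplexDensity_ne_top k s))

theorem simplexDensity_ne_zero (k : Fin (n + 1) → ℤ) {s : HermMatrix m}
    {z : Fin n → HermMatrix m} : simplexDensity k s z ≠ 0 ↔
      (∀ j, z j ∈ posDefCone m) ∧ s - ∑ j, z j ∈ posDefCone m := by
  simp only [simplexDensity, mul_ne_zero_iff, Finset.prod_ne_zero_iff, coneDensity_ne_zero,
    mem_univ, true_imp_iff]

theorem simplexDensity_of_posDef (k : Fin (n + 1) → ℕ) {s : HermMatrix m}
    {z : Fin n → HermMatrix m} (hz : ∀ j, z j ∈ posDefCone m)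
    (hs : s - ∑ j, z j ∈ posDefCone m) : simplexDensity (fun i => (k i : ℤ)) s z =
      ENNReal.ofReal ((∏ j, (z j : Matrix m m ℂ).det.re ^ k j.castSucc) *
        (s - ∑ j, (z j : Matrix m m ℂ)).det.re ^ k (Fin.last n)) := by
  have hpow : ∀ j, 0 ≤ (z j : Matrix m m ℂ).det.re ^ k j.castSucc := fun j =>
    pow_nonneg (re_det_pos (hz j)).le _
  rw [ENNReal.ofReal_mul (Finset.prod_nonneg fun j _ => hpow j),
    ENNReal.ofReal_prod_of_nonneg fun j _ => hpow j, simplexDensity, coneDensity_of_posDef _ hs]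
  simp only [coneDensity_of_posDef _ (hz _), zpow_natCast]
  simp

theorem simplexDensity_eq_zero (k : Fin (n + 1) → ℤ) {s : HermMatrix m} (hs : s ∉ posDefCone m)
    (z : Fin n → HermMatrix m) : simplexDensity k s z = 0 := by
  by_contra h
  obtain ⟨hz, hrest⟩ := (simplexDensity_ne_zero k).1 h
  have hsum : (∑ j, z j : Matrix m m ℂ).PosSemidef :=
    posSemidef_sum _ fun j _ => PosDef.posSemidef (hz j)
  have := PosDef.add_posSemidef hrest hsum
  rw [AddSubgroup.coe_sub, AddSubgroup.val_finsetSum, sub_add_cancel] at this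
  exact hs this

theorem prod_zpow_eq_zpow_sum [Fintype ι] {x : ℝ} (hx : x ≠ 0) (k : ι → ℤ) :
    ∏ i, x ^ k i = x ^ ∑ i, k i := by
  induction (univ : Finset ι) using Finset.induction_on with
  | empty => simp
  | insert a t ha ih => rw [prod_insert ha, sum_insert ha, ih, zpow_add₀ hx]

theorem abs_det_tupleCongruence (g : Matrix m m ℂ) :
    |LinearMap.det (tupleCongruence n g)| = (‖g.det‖ ^ 2) ^ (Fintype.card m * n) := by
  rw [tupleCongruence, LinearMap.det_pi, Finset.abs_prod, prod_const, abs_det_congruence,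
    card_univ, Fintype.card_fin, pow_mul]

theorem simplexDensity_congruence (k : Fin (n + 1) → ℤ) {g : Matrix m m ℂ} (hg : g.det ≠ 0)
    (s : HermMatrix m) (z : Fin n → HermMatrix m) :
    simplexDensity k (congruence g s) (tupleCongruence n g z) =
      ENNReal.ofReal ((‖g.det‖ ^ 2) ^ ∑ i, k i) * simplexDensity k s z := by
  have hpos : 0 < ‖g.det‖ ^ 2 := by positivity
  have hscale : ENNReal.ofReal ((‖g.det‖ ^ 2) ^ ∑ i, k i) =
      (∏ j : Fin n, ENNReal.ofReal ((‖g.det‖ ^ 2) ^ k j.castSucc)) *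
        ENNReal.ofReal ((‖g.det‖ ^ 2) ^ k (Fin.last n)) := by
    rw [← Fin.prod_univ_castSucc (fun i => ENNReal.ofReal ((‖g.det‖ ^ 2) ^ k i)),
      ← ENNReal.ofReal_prod_of_nonneg fun i _ => (zpow_pos hpos _).le,
      prod_zpow_eq_zpow_sum hpos.ne']
  simp only [simplexDensity, tupleCongruence_apply]
  rw [← map_sum, ← map_sub, hscale]
  simp only [coneDensity_congruence _ hg, prod_mul_distrib]
  ring

theorem congruence_invSqrt_self {s : HermMatrix m} (hs : s ∈ posDefCone m) :
    congruence (invSqrt (s : Matrix m m ℂ)) s = 1 :=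
  Subtype.ext (invSqrt_mul_mul_conjTranspose hs)

theorem norm_det_invSqrt_sq {s : HermMatrix m} (hs : s ∈ posDefCone m) :
    ‖(invSqrt (s : Matrix m m ℂ)).det‖ ^ 2 = (s : Matrix m m ℂ).det.re⁻¹ := by
  have h := re_det_congruence (invSqrt (s : Matrix m m ℂ)) s
  rw [congruence_invSqrt_self hs, selfAdjoint.val_one, det_one, Complex.one_re] at h
  exact eq_inv_of_mul_eq_one_left h.symm

theorem map_tupleCongruence_withDensity_simplexDensity (k : Fin (n + 1) → ℤ) {g : Matrix m m ℂ}
    (hg : g.det ≠ 0) (s : HermMatrix m) :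
    ((volume : Measure (Fin n → HermMatrix m)).withDensity (simplexDensity k s)).map
        (tupleCongruence n g) =
      ENNReal.ofReal ((‖g.det‖ ^ 2) ^ (-(∑ i, k i + Fintype.card m * n))) •
        (volume : Measure (Fin n → HermMatrix m)).withDensity
          (simplexDensity k (congruence g s)) := by
  have hpos : 0 < ‖g.det‖ ^ 2 := by positivity
  have hdet : LinearMap.det (tupleCongruence n g) ≠ 0 := by
    rw [← abs_pos, abs_det_tupleCongruence]
    positivity
  have hs : ∀ z : Fin n → HermMatrix m, simplexDensity k s z =
      ENNReal.ofReal ((‖g.det‖ ^ 2) ^ (-∑ i, k i)) *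
        simplexDensity k (congruence g s) (tupleCongruence n g z) := fun z => by
    rw [simplexDensity_congruence k hg, ← mul_assoc, ← ENNReal.ofReal_mul (zpow_pos hpos _).le,
      ← zpow_add₀ hpos.ne', neg_add_cancel, zpow_zero, ENNReal.ofReal_one, one_mul]
  have hfactor : (‖g.det‖ ^ 2) ^ (-(∑ i, k i + Fintype.card m * n)) =
      (‖g.det‖ ^ 2) ^ (-∑ i, k i) * |LinearMap.det (tupleCongruence n g)|⁻¹ := by
    rw [abs_det_tupleCongruence, neg_add, zpow_add₀ hpos.ne', _root_.zpow_neg _ (_ * _)]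
    norm_cast
  rw [hfactor, ENNReal.ofReal_mul (zpow_pos hpos _).le]
  have hmeas := measurable_simplexDensity_right (n := n) k (congruence g s)
  exact map_linearMap_withDensity volume hdet hmeas hs

/-- The congruence by `s ^ (-1/2)`, applied to all members of a tuple. For positive definite `s` it
carries the simplex of tuples with sum at most `s` to the one of tuples with sum at most `1`. -/
noncomputable def normalize (s : HermMatrix m) (z : Fin n → HermMatrix m) : Fin n → HermMatrix m :=
  tupleCongruence n (invSqrt (s : Matrix m m ℂ)) z

theorem measurable_normalize :
    Measurable fun p : HermMatrix m × (Fin n → HermMatrix m) => normalize p.1 p.2 :=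
  measurable_pi_lambda _ fun j => by
    have hg : Measurable fun p : HermMatrix m × (Fin n → HermMatrix m) =>
        (invSqrt (p.1 : Matrix m m ℂ), p.2 j) :=
      (measurable_invSqrt.comp measurable_fst).prodMk
        ((measurable_pi_apply j).comp measurable_snd)
    simpa only [Function.comp_def, normalize, tupleCongruence_apply] using
      measurable_congruence.comp hg

theorem map_normalize_withDensity_simplexDensity (k : Fin (n + 1) → ℤ) (s : HermMatrix m) :
    ((volume : Measure (Fin n → HermMatrix m)).withDensity (simplexDensity k s)).map
        (normalize s) =
      coneDensity (∑ i, k i + Fintype.card m * n) s •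
        (volume : Measure (Fin n → HermMatrix m)).withDensity (simplexDensity k 1) := by
  by_cases hs : s ∈ posDefCone m
  · have h := map_tupleCongruence_withDensity_simplexDensity k (det_invSqrt_ne_zero s.val) s
    rw [congruence_invSqrt_self hs, norm_det_invSqrt_sq hs, _root_.inv_zpow', neg_neg] at h
    rw [coneDensity_of_posDef _ hs, ← h]
    rfl
  · have hzero : (simplexDensity k s : (Fin n → HermMatrix m) → ℝ≥0∞) = 0 :=
      funext fun z => simplexDensity_eq_zero k hs z
    have hcone : coneDensity (∑ i, k i + Fintype.card m * n) s = 0 :=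
      not_ne_iff.1 fun h => hs ((coneDensity_ne_zero _).1 h)
    rw [hzero, hcone, withDensity_zero, Measure.map_zero, zero_smul]

theorem map_fst_normalize_withDensity_simplexDensity (k : Fin (n + 1) → ℤ) :
    (((volume : Measure (HermMatrix m)).prod
        (volume : Measure (Fin n → HermMatrix m))).withDensity
          fun p => simplexDensity k p.1 p.2).map (fun p => (p.1, normalize p.1 p.2)) =
      ((volume : Measure (HermMatrix m)).withDensity
        (coneDensity (∑ i, k i + Fintype.card m * n))).prod
          ((volume : Measure (Fin n → HermMatrix m)).withDensity (simplexDensity k 1)) := by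
  have h := fun s => map_normalize_withDensity_simplexDensity (m := m) k s
  exact map_prodMk_withDensity_eq_prod (volume : Measure (HermMatrix m))
    (volume : Measure (Fin n → HermMatrix m)) (T := fun p => normalize p.1 p.2)
    (ρ := fun p => simplexDensity k p.1 p.2) (measurable_coneDensity _)
    (measurable_simplexDensity k) measurable_normalize h

/-- The coordinates `A ↦ (∑ i, A i, (A 0, …, A (n - 1)))` on the tuples `A` of length `n + 1`. -/
def sumInitEquiv (n : ℕ) (H : Type*) [AddCommGroup H] [Module ℝ H] :
    (Fin (n + 1) → H) ≃ₗ[ℝ] H × (Fin n → H) where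
  toFun A := (∑ i, A i, fun j => A j.castSucc)
  invFun p := Fin.snoc p.2 (p.1 - ∑ j, p.2 j)
  map_add' A B := by simp [sum_add_distrib, Pi.add_def]
  map_smul' c A := by simp [smul_sum, Pi.smul_def]
  left_inv A := by
    refine funext fun i => ?_
    cases i using Fin.lastCases <;> simp [Fin.sum_univ_castSucc]
  right_inv p := by simp [Fin.sum_univ_castSucc]

theorem prod_coneDensity_eq_simplexDensity (k : Fin (n + 1) → ℤ)
    (A : Fin (n + 1) → HermMatrix m) :
    ∏ i, coneDensity (k i) (A i) = simplexDensity k (∑ i, A i) fun j => A j.castSucc := by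
  rw [simplexDensity, Fin.prod_univ_castSucc, Fin.sum_univ_castSucc, add_sub_cancel_left]

/-- The first `n` members of a tuple of Hermitian matrices, scaled so that the whole tuple has sum
`1`. -/
noncomputable def normalizedInit (A : Fin (n + 1) → HermMatrix m) : Fin n → HermMatrix m :=
  normalize (∑ i, A i) fun j => A j.castSucc

theorem exists_map_sum_normalizedInit_eq_smul (k : Fin (n + 1) → ℤ) : ∃ c : ℝ≥0∞,
    ((volume : Measure (Fin (n + 1) → HermMatrix m)).withDensity
        fun A => ∏ i, coneDensity (k i) (A i)).map (fun A => (∑ i, A i, normalizedInit A)) =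
      c • ((volume : Measure (HermMatrix m)).withDensity
        (coneDensity (∑ i, k i + Fintype.card m * n))).prod
          ((volume : Measure (Fin n → HermMatrix m)).withDensity (simplexDensity k 1)) := by
  have := Measure.prod.instIsAddHaarMeasure (volume : Measure (HermMatrix m))
    (volume : Measure (Fin n → HermMatrix m))
  obtain ⟨c, hc⟩ := exists_map_linearEquiv_eq_smul (E := Fin (n + 1) → HermMatrix m)
    (F := HermMatrix m × (Fin n → HermMatrix m)) (sumInitEquiv n (HermMatrix m)) volume
    (volume.prod volume)
  have hE : Measurable (sumInitEquiv n (HermMatrix m)) :=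
    (sumInitEquiv n (HermMatrix m)).toLinearMap.continuous_of_finiteDimensional.measurable
  refine ⟨c, ?_⟩
  rw [← map_fst_normalize_withDensity_simplexDensity, ← Measure.map_smul,
    ← withDensity_smul_measure, ← hc, ← map_withDensity_comp _ hE (measurable_simplexDensity k),
    Measure.map_map (measurable_fst.prodMk measurable_normalize) hE]
  simp only [prod_coneDensity_eq_simplexDensity]
  rfl

end Simplex

section SpecialUnitary

variable [Fintype κ]

theorem measurable_matrix_mul [Finite m] :
    Measurable fun p : Matrix m κ ℂ × Matrix κ κ ℂ => p.1 * p.2 :=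
  (continuous_fst.matrix_mul continuous_snd).measurable

variable [DecidableEq κ]

theorem norm_det_of_mul_conjTranspose {u : Matrix κ κ ℂ} (hu : u * uᴴ = 1) : ‖u.det‖ = 1 := by
  have h : ‖u.det‖ ^ 2 = 1 := by
    rw [sq]
    simpa [det_mul, det_conjTranspose] using congr_arg (fun A => ‖A.det‖) hu
  exact (pow_eq_one_iff_of_nonneg (norm_nonneg _) two_ne_zero).1 h

theorem measurePreserving_mul_right_of_unitary [Fintype m] {u : Matrix κ κ ℂ}
    (hu : u * uᴴ = 1) : MeasurePreserving (fun X : Matrix m κ ℂ => X * u) := by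
  have hdet : |LinearMap.det (mulRightLinearMap m ℝ u)| = 1 := by
    rw [abs_det_mulRightLinearMap, norm_det_of_mul_conjTranspose hu, one_pow, one_pow]
  refine ⟨(continuous_id.matrix_mul continuous_const).measurable, ?_⟩
  have h := Measure.map_linearMap_addHaar_eq_smul_addHaar
    (volume : Measure (Matrix m κ ℂ)) (f := mulRightLinearMap m ℝ u) (by
      rw [← abs_ne_zero, hdet]
      exact one_ne_zero)
  rwa [abs_inv, hdet, inv_one, ENNReal.ofReal_one, one_smul] at h

theorem exists_unitary_submatrix_eq [DecidableEq m] (e : m ↪ κ) {V : Matrix m κ ℂ}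
    (hV : V * Vᴴ = 1) : ∃ g : Matrix κ κ ℂ, g * gᴴ = 1 ∧ g.submatrix e id = V := by
  let v : κ → EuclideanSpace ℂ κ := Function.extend e (fun a => WithLp.toLp 2 (V a)) 0
  have hve : ∀ a, v (e a) = WithLp.toLp 2 (V a) := e.injective.extend_apply _ _
  have hV' : Orthonormal ℂ fun a => WithLp.toLp 2 (V a) := by
    refine orthonormal_iff_ite.2 fun a a' => ?_
    have h := congr_fun₂ hV a' a
    rw [Matrix.mul_apply, Matrix.one_apply] at h
    simpa [PiLp.inner_apply, eq_comm] using h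
  have hv : Orthonormal ℂ ((Set.range e).domRestrict v) := by
    have hcomp : (Set.range e).domRestrict v =
        (fun a => WithLp.toLp 2 (V a)) ∘ (Equiv.ofInjective e e.injective).symm := by
      rw [← Equiv.comp_symm_eq]
      exact funext fun a => by simp [hve]
    rw [hcomp]
    exact hV'.comp _ (Equiv.injective _)
  obtain ⟨b, hb⟩ := hv.exists_orthonormalBasis_extension_of_card_eq (by simp)
  refine ⟨Matrix.of fun i => (b i).ofLp, ?_, ?_⟩
  · ext i j
    have h := orthonormal_iff_ite.1 b.orthonormal j i
    rw [PiLp.inner_apply] at h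
    simpa [Matrix.mul_apply, Matrix.one_apply, eq_comm] using h
  · ext a r
    simp [hb (e a) ⟨a, rfl⟩, hve]

theorem exists_specialUnitary_submatrix_eq [DecidableEq m] (e : m ↪ κ) {r₀ : κ}
    (hr₀ : r₀ ∉ Set.range e) {V : Matrix m κ ℂ} (hV : V * Vᴴ = 1) :
    ∃ g ∈ Matrix.specialUnitaryGroup κ ℂ, g.submatrix e id = V := by
  obtain ⟨g, hg, rfl⟩ := exists_unitary_submatrix_eq e hV
  have hdet : star g.det * g.det = 1 := by
    rw [mul_comm, ← det_conjTranspose, ← det_mul, hg, det_one]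
  let w : κ → ℂ := Function.update 1 r₀ (star g.det)
  have hw : diagonal w * (diagonal w)ᴴ = 1 := by
    rw [diagonal_conjTranspose, diagonal_mul_diagonal, ← diagonal_one]
    refine congr_arg diagonal (funext fun i => ?_)
    obtain rfl | hi := eq_or_ne i r₀
    · simpa [w] using hdet
    · simp [w, hi]
  refine ⟨diagonal w * g, mem_specialUnitaryGroup_iff.2 ⟨mem_unitaryGroup_iff.2 ?_, ?_⟩, ?_⟩
  · rw [star_eq_conjTranspose, conjTranspose_mul, Matrix.mul_assoc, ← Matrix.mul_assoc g, hg,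
      Matrix.one_mul, hw]
  · rw [det_mul, det_diagonal, Finset.prod_update_of_mem (mem_univ _)]
    simpa using hdet
  · ext a r
    have ha : e a ≠ r₀ := fun h => hr₀ ⟨a, h⟩
    simp [w, diagonal_mul, ha]

end SpecialUnitary

section Rows

variable [Fintype κ] {n : ℕ}

/-- The Gram matrices of all but the last block of columns of the rows of `u` picked by `e`. -/
noncomputable def rowGram (e : m → κ) (b : κ → Fin (n + 1)) (u : Matrix κ κ ℂ) :
    Fin n → HermMatrix m := fun j => blockGram b (u.submatrix e id) j.castSucc

theorem sum_card_fiber_sub (m : Type*) [Fintype m] (b : κ → Fin (n + 1)) :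
    ∑ i, ((Fintype.card {r // b r = i} : ℤ) - Fintype.card m) + Fintype.card m * n =
      Fintype.card κ - Fintype.card m := by
  have h : Fintype.card κ = ∑ i, Fintype.card {r // b r = i} := by
    rw [← Fintype.card_sigma, Fintype.card_congr (Equiv.sigmaFiberEquiv b)]
  rw [h, sum_sub_distrib, sum_const, card_univ, Fintype.card_fin, nsmul_eq_mul]
  push_cast
  ring

theorem measurable_rowGram [Finite m] (e : m → κ) (b : κ → Fin (n + 1)) :
    Measurable (rowGram e b : Matrix κ κ ℂ → Fin n → HermMatrix m) := by
  have hrows : Measurable fun u : Matrix κ κ ℂ => u.submatrix e id :=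
    (continuous_id.matrix_submatrix e id).measurable
  refine measurable_pi_lambda _ fun j => ?_
  simpa only [Function.comp_def, rowGram] using
    (measurable_pi_apply j.castSucc).comp ((measurable_blockGram b).comp hrows)

variable [Fintype m] [DecidableEq m]

theorem normalizedInit_blockGram (b : κ → Fin (n + 1)) (X : Matrix m κ ℂ) :
    normalizedInit (blockGram b X) =
      fun j => blockGram b (invSqrt (gram X).val * X) j.castSucc := by
  funext j
  rw [blockGram_mul_left, normalizedInit, normalize, sum_blockGram, tupleCongruence_apply]

theorem measurable_normalizedInit :
    Measurable (normalizedInit : (Fin (n + 1) → HermMatrix m) → Fin n → HermMatrix m) := by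
  have hinit : Measurable fun A : Fin (n + 1) → HermMatrix m =>
      (∑ i, A i, fun j : Fin n => A j.castSucc) :=
    (Finset.measurable_fun_sum _ fun i _ => measurable_pi_apply i).prodMk
      (measurable_pi_lambda _ fun j => measurable_pi_apply j.castSucc)
  simpa only [Function.comp_def] using! measurable_normalize.comp hinit

theorem exists_map_gram_normalizedInit_eq_smul (b : κ → Fin (n + 1))
    (hb : ∀ i, Fintype.card m ≤ Fintype.card {r // b r = i}) : ∃ c : ℝ≥0∞,
    (volume : Measure (Matrix m κ ℂ)).map
        (fun X => (gram X, normalizedInit (blockGram b X))) =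
      c • ((volume : Measure (HermMatrix m)).withDensity
        (coneDensity (Fintype.card κ - Fintype.card m))).prod
          ((volume : Measure (Fin n → HermMatrix m)).withDensity
            (simplexDensity (fun i => Fintype.card {r // b r = i} - Fintype.card m) 1)) := by
  obtain ⟨c₁, hc₁⟩ := exists_map_blockGram_eq_smul b hb
  obtain ⟨c₂, hc₂⟩ := exists_map_sum_normalizedInit_eq_smul (m := m)
    fun i => (Fintype.card {r // b r = i} : ℤ) - Fintype.card m
  refine ⟨c₁ * c₂, ?_⟩
  rw [mul_smul, ← sum_card_fiber_sub, ← hc₂, ← Measure.map_smul, ← hc₁,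
    Measure.map_map
      ((Finset.measurable_fun_sum _ fun i _ => measurable_pi_apply i).prodMk
        measurable_normalizedInit) (measurable_blockGram b)]
  simp only [Function.comp_def, sum_blockGram]

variable [DecidableEq κ]

theorem exists_specialUnitary_forall_normalizedInit_eq (e : m ↪ κ) {r₀ : κ}
    (hr₀ : r₀ ∉ Set.range e) (b : κ → Fin (n + 1)) {X : Matrix m κ ℂ}
    (hX : gram X ∈ posDefCone m) : ∃ g ∈ Matrix.specialUnitaryGroup κ ℂ,
      ∀ u, u * uᴴ = 1 → normalizedInit (blockGram b (X * u)) = rowGram e b (g * u) := by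
  have hV : invSqrt (gram X).val * X * (invSqrt (gram X).val * X)ᴴ = 1 := by
    rw [conjTranspose_mul, Matrix.mul_assoc, ← Matrix.mul_assoc X, ← Matrix.mul_assoc]
    exact invSqrt_mul_mul_conjTranspose hX
  obtain ⟨g, hg, hgV⟩ := exists_specialUnitary_submatrix_eq e hr₀ hV
  refine ⟨g, hg, fun u hu => ?_⟩
  have hgu : (g * u).submatrix e id = invSqrt (gram X).val * (X * u) := by
    rw [← Matrix.mul_assoc, ← hgV]
    rfl
  rw [normalizedInit_blockGram, gram_mul_right X hu]
  exact funext fun j => by rw [rowGram, hgu]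

variable {μ : Measure (Matrix κ κ ℂ)} [IsProbabilityMeasure μ]

theorem map_gram_normalizedInit_eq_prod (hμ : ∀ᵐ u ∂μ, u ∈ Matrix.specialUnitaryGroup κ ℂ)
    (hinv : ∀ g ∈ Matrix.specialUnitaryGroup κ ℂ, μ.map (fun u => g * u) = μ) (e : m ↪ κ) {r₀ : κ}
    (hr₀ : r₀ ∉ Set.range e) (b : κ → Fin (n + 1)) :
    (volume : Measure (Matrix m κ ℂ)).map
        (fun X => (gram X, normalizedInit (blockGram b X))) =
      ((volume : Measure (Matrix m κ ℂ)).map gram).prod (μ.map (rowGram e b)) := by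
  have hunit : ∀ᵐ u ∂μ, u * uᴴ = 1 :=
    hμ.mono fun u hu => mem_unitaryGroup_iff.1 (mem_specialUnitaryGroup_iff.1 hu).1
  have := Measure.isProbabilityMeasure_map (μ := μ) (measurable_rowGram e b).aemeasurable
  refine map_prodMk_eq_prod_of_measurePreserving (μ := μ) (T := fun u X => X * u)
    measurable_matrix_mul (hunit.mono fun u hu => measurePreserving_mul_right_of_unitary hu)
    measurable_gram (hunit.mono fun u hu X => gram_mul_right X hu)
    (by
      simpa only [Function.comp_def] using
        measurable_normalizedInit.comp (measurable_blockGram (m := m) b)) ?_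
  refine (ae_posDef_gram (Fintype.card_le_of_embedding e)).mono fun X hX => ?_
  obtain ⟨g, hg, hgu⟩ := exists_specialUnitary_forall_normalizedInit_eq e hr₀ b hX
  have hmul : Measurable fun u : Matrix κ κ ℂ => g * u :=
    (continuous_const.matrix_mul continuous_id).measurable
  calc μ.map (fun u => normalizedInit (blockGram b (X * u)))
      = μ.map fun u => rowGram e b (g * u) := Measure.map_congr (hunit.mono hgu)
    _ = (μ.map fun u => g * u).map (rowGram e b) :=
        (Measure.map_map (measurable_rowGram e b) hmul).symm
    _ = μ.map (rowGram e b) := by rw [hinv g hg]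

theorem exists_map_rowGram_eq_smul (hμ : ∀ᵐ u ∂μ, u ∈ Matrix.specialUnitaryGroup κ ℂ)
    (hinv : ∀ g ∈ Matrix.specialUnitaryGroup κ ℂ, μ.map (fun u => g * u) = μ) (e : m ↪ κ) {r₀ : κ}
    (hr₀ : r₀ ∉ Set.range e) (b : κ → Fin (n + 1))
    (hb : ∀ i, Fintype.card m ≤ Fintype.card {r // b r = i}) : ∃ c : ℝ≥0∞,
    μ.map (rowGram e b) = c • (volume : Measure (Fin n → HermMatrix m)).withDensity
      (simplexDensity (fun i => Fintype.card {r // b r = i} - Fintype.card m) 1) := by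
  have := Measure.isProbabilityMeasure_map (μ := μ) (measurable_rowGram (m := m) e b).aemeasurable
  obtain ⟨c, hc⟩ := exists_map_gram_normalizedInit_eq_smul b hb
  obtain ⟨c', hc'0, hc'_top, hc'⟩ :=
    exists_map_gram_eq_smul_withDensity (Fintype.card_le_of_embedding e)
  have hprod := map_gram_normalizedInit_eq_prod hμ hinv e hr₀ b
  rw [hc, hc', Measure.prod_smul_left] at hprod
  refine ⟨c'⁻¹ * c, eq_of_prod_eq_prod (withDensity_coneDensity_ne_zero (m := m)
    (Fintype.card κ - Fintype.card m)) ?_⟩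
  rw [Measure.prod_smul_right, mul_smul, hprod, smul_smul, ENNReal.inv_mul_cancel hc'0 hc'_top,
    one_smul]

end Rows

section AlmostEverywhere

variable {n : ℕ}

theorem ae_simplex_posSemidef_iff_posDef [Finite m] {E : Type*} [NormedAddCommGroup E]
    [NormedSpace ℝ E] [MeasurableSpace E] [BorelSpace E] [FiniteDimensional ℝ E] (μ : Measure E)
    [μ.IsAddHaarMeasure] (hn : 0 < n) {L : E →ₗ[ℝ] Fin n → HermMatrix m}
    (hL : Function.Surjective L) (s : HermMatrix m) : ∀ᵐ x ∂μ,
      ((∀ j, (L x j : Matrix m m ℂ).PosSemidef) ∧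
          (s - ∑ j, (L x j : Matrix m m ℂ)).PosSemidef ↔
        (∀ j, L x j ∈ posDefCone m) ∧ s - ∑ j, L x j ∈ posDefCone m) := by
  cases nonempty_fintype m
  let block (j : Fin n) : E →ₗ[ℝ] Matrix m m ℂ :=
    (selfAdjoint.submodule ℝ (Matrix m m ℂ)).subtype ∘ₗ LinearMap.proj j ∘ₗ L
  obtain ⟨v, hv⟩ := hL fun _ => 1
  have hblock : ∀ᵐ x ∂μ, ∀ j, (L x j : Matrix m m ℂ).PosSemidef ↔ L x j ∈ posDefCone m :=
    ae_all_iff.2 fun j => by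
      have hvj : block j v = 1 := congr_arg (fun z => (z j : Matrix m m ℂ)) hv
      simpa only [zero_add] using! ae_add_posSemidef_iff_posDef μ 0 (block j) hvj
  obtain ⟨w, hw⟩ := hL (Pi.single ⟨0, hn⟩ (-1))
  have hsum : ∀ x, (-∑ j, block j) x = -((∑ j, L x j : HermMatrix m) : Matrix m m ℂ) := fun x => by
    rw [AddSubgroup.val_finsetSum, LinearMap.neg_apply, LinearMap.sum_apply]
    rfl
  have hw' : (-∑ j, block j) w = 1 := by
    rw [hsum, hw, Finset.sum_pi_single']
    simp
  filter_upwards [hblock, ae_add_posSemidef_iff_posDef μ (s : Matrix m m ℂ) _ hw'] with x hx hx'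
  rw [hsum, ← sub_eq_add_neg, ← AddSubgroup.coe_sub] at hx'
  rw [← AddSubgroup.val_finsetSum, ← AddSubgroup.coe_sub]
  exact and_congr (forall_congr' hx) hx'

theorem ae_smul_simplexDensity_comp_eq [Fintype m] [DecidableEq m] {E : Type*}
    [NormedAddCommGroup E] [NormedSpace ℝ E] [MeasurableSpace E] [BorelSpace E]
    [FiniteDimensional ℝ E] (μ : Measure E) [μ.IsAddHaarMeasure] (hn : 0 < n)
    {L : E →ₗ[ℝ] Fin n → HermMatrix m} (hL : Function.Surjective L) {C : ℝ≥0∞} (hC : C ≠ ⊤)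
    (k : Fin (n + 1) → ℕ) (s : HermMatrix m) :
    C • (simplexDensity (fun i => (k i : ℤ)) s ∘ L) =ᵐ[μ] fun x =>
      ENNReal.ofReal
        (if (∀ j, (L x j : Matrix m m ℂ).PosSemidef) ∧
            (s - ∑ j, (L x j : Matrix m m ℂ)).PosSemidef then
          C.toReal * (∏ j, (L x j : Matrix m m ℂ).det.re ^ k j.castSucc) *
            (s - ∑ j, (L x j : Matrix m m ℂ)).det.re ^ k (Fin.last n)
        else 0) := by
  filter_upwards [ae_simplex_posSemidef_iff_posDef μ hn hL s] with x hx
  simp only [hx, Pi.smul_apply, smul_eq_mul, Function.comp_apply]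
  split_ifs with h
  · rw [mul_assoc, ENNReal.ofReal_mul ENNReal.toReal_nonneg, ENNReal.ofReal_toReal hC,
      simplexDensity_of_posDef k h.1 h.2]
  · rw [ENNReal.ofReal_zero, of_not_not (mt (simplexDensity_ne_zero _).1 h), mul_zero]

end AlmostEverywhere

section Coordinates

variable {n d : ℕ}

theorem isHermitian_recon15 (x : herdIdx15 n d → ℝ) (k : Fin n) : (recon15 x k).IsHermitian := by
  ext p q
  obtain h | rfl | h := lt_trichotomy p q
  · simp [recon15, h, h.not_gt, Complex.ext_iff]
  · simp [recon15]
  · simp [recon15, h, h.not_gt, Complex.ext_iff]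

theorem coordMap15_recon15 (x : herdIdx15 n d → ℝ) : coordMap15 (recon15 x) = x := by
  funext ⟨k, i⟩
  rcases i with p | ⟨⟨⟨p, q⟩, h : p < q⟩, _ | _⟩
  · simp [coordMap15, recon15]
  · simp [coordMap15, recon15, h]
  · simp [coordMap15, recon15, h]

theorem recon15_coordMap15 {Z : Fin n → Matrix (Fin d) (Fin d) ℂ} (hZ : ∀ k, (Z k).IsHermitian) :
    recon15 (coordMap15 Z) = Z := by
  funext k
  ext p q
  rcases lt_trichotomy p q with h | rfl | h
  · simp [recon15, coordMap15, h]
  · simpa [recon15, coordMap15] using (hZ k).coe_re_apply_self p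
  · rw [← (hZ k).apply]
    simp [recon15, coordMap15, h, h.not_gt, Complex.ext_iff]

/-- The coordinates of tuples of Hermitian matrices, as a linear equivalence. -/
noncomputable def coordEquiv (n d : ℕ) :
    (Fin n → HermMatrix (Fin d)) ≃ₗ[ℝ] (herdIdx15 n d → ℝ) where
  toFun Z := coordMap15 fun k => Z k
  invFun x k := ⟨recon15 x k, isHermitian_recon15 x k⟩
  map_add' Z Z' := by
    funext ⟨k, i⟩
    rcases i with p | ⟨⟨⟨p, q⟩, h⟩, _ | _⟩ <;> rfl
  map_smul' c Z := by
    funext ⟨k, i⟩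
    rcases i with p | ⟨⟨⟨p, q⟩, h⟩, _ | _⟩
    exacts [Complex.smul_re _ _, Complex.smul_re _ _, Complex.smul_im _ _]
  left_inv Z := funext fun k => Subtype.ext (congr_fun (recon15_coordMap15 fun k => (Z k).2) k)
  right_inv := coordMap15_recon15

theorem measurable_coordEquiv : Measurable (coordEquiv n d) :=
  (coordEquiv n d).toContinuousLinearEquiv.continuous.measurable

theorem coordMap15_extractZ15 {N : ℕ} (hdN : d ≤ N) {b : Fin N → Fin (n + 1)}
    {I : Fin (n + 1) → Finset (Fin N)} (hI : ∀ i r, r ∈ I i ↔ b r = i)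
    (u : Matrix (Fin N) (Fin N) ℂ) :
    coordMap15 (fun k => extractZ15 d hdN (I k.castSucc) u) =
      coordEquiv n d (rowGram (Fin.castLE hdN) b u) := by
  refine congr_arg coordMap15 (funext fun k => Matrix.ext fun p q => ?_)
  exact Finset.sum_subtype (I k.castSucc) (hI k.castSucc)
    fun r => u (Fin.castLE hdN p) r * star (u (Fin.castLE hdN q) r)

theorem exists_map_coordMap15_extractZ15_eq_smul {N : ℕ} (hdN : d < N) {b : Fin N → Fin (n + 1)}
    {I : Fin (n + 1) → Finset (Fin N)} (hI : ∀ i r, r ∈ I i ↔ b r = i) (hd : ∀ i, d ≤ (I i).card)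
    {μ : Measure (Matrix (Fin N) (Fin N) ℂ)} [IsProbabilityMeasure μ]
    (hμ : ∀ᵐ u ∂μ, u ∈ Matrix.specialUnitaryGroup (Fin N) ℂ)
    (hinv : ∀ g ∈ Matrix.specialUnitaryGroup (Fin N) ℂ, μ.map (fun u => g * u) = μ) :
    ∃ c : ℝ≥0∞, c ≠ 0 ∧ c ≠ ⊤ ∧
      μ.map (fun u => coordMap15 fun k => extractZ15 d hdN.le (I k.castSucc) u) =
      c • volume.withDensity
        (simplexDensity (fun i => (((I i).card - d : ℕ) : ℤ)) 1 ∘ (coordEquiv n d).symm) := by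
  have hcard : ∀ i, Fintype.card {r // b r = i} = (I i).card := fun i =>
    Fintype.card_of_subtype (I i) (hI i)
  have hr₀ : (⟨d, hdN⟩ : Fin N) ∉ Set.range (Fin.castLEEmb hdN.le) := by
    rintro ⟨a, ha⟩
    exact a.2.ne (congr_arg Fin.val ha)
  obtain ⟨c, hc⟩ := exists_map_rowGram_eq_smul hμ hinv (Fin.castLEEmb hdN.le) hr₀ b fun i => by
    rw [hcard, Fintype.card_fin]
    exact hd i
  simp only [hcard, Fintype.card_fin, ← Nat.cast_sub (hd _)] at hc
  have hdens := measurable_simplexDensity_right (m := Fin d)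
    (fun i => (((I i).card - d : ℕ) : ℤ)) 1
  obtain ⟨c', hc'⟩ :=
    exists_map_linearEquiv_withDensity_eq_smul (coordEquiv n d) volume volume hdens
  have hmap : μ.map (fun u => coordMap15 fun k => extractZ15 d hdN.le (I k.castSucc) u) =
      (μ.map (rowGram (Fin.castLEEmb hdN.le) b)).map (coordEquiv n d) := by
    rw [Measure.map_map measurable_coordEquiv (measurable_rowGram _ b)]
    exact congr_arg (μ.map ·) (funext (coordMap15_extractZ15 hdN.le hI))
  have := Measure.isProbabilityMeasure_map (μ := μ)
    (measurable_rowGram (Fin.castLEEmb hdN.le) b).aemeasurable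
  have hprob := Measure.isProbabilityMeasure_map
    (μ := μ.map (rowGram (Fin.castLEEmb hdN.le) b)) (measurable_coordEquiv (d := d)).aemeasurable
  rw [← hmap] at hprob
  rw [hc, Measure.map_smul, hc', smul_smul] at hmap
  obtain ⟨h₀, h_top⟩ := ne_zero_and_ne_top_of_eq_smul (IsProbabilityMeasure.ne_zero _) hmap
  exact ⟨_, h₀, h_top, hmap⟩

end Coordinates

end MatrixDirichlet

/-- The pushforward of the Haar probability measure on `SU(N)` under the
matrix-extracting procedure is the matrix Dirichlet measure
`D_{(d_1-d+1,…,d_{n+1}-d+1)}` on the complex matrix simplex `Δ_{n,d}`. -/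
theorem stmt_15 (n d : ℕ) (hn : 1 ≤ n) (hd : 1 ≤ d)
    (dd : Fin (n + 1) → ℕ) (hdd : ∀ i, d ≤ dd i)
    (N : ℕ) (hN : N = ∑ i, dd i) (hdN : d ≤ N)
    (I : Fin (n + 1) → Finset (Fin N))
    (hdisj : ∀ i j, i ≠ j → Disjoint (I i) (I j))
    (hcover : ∀ r, ∃ i, r ∈ I i)
    (hcard : ∀ i, (I i).card = dd i)
    (μ : Measure (Matrix (Fin N) (Fin N) ℂ)) [IsProbabilityMeasure μ]
    (hsupp : μ {u | u ∉ Matrix.specialUnitaryGroup (Fin N) ℂ} = 0)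
    (hinv : ∀ g ∈ Matrix.specialUnitaryGroup (Fin N) ℂ,
      Measure.map (fun u => g * u) μ = μ ∧ Measure.map (fun u => u * g) μ = μ) :
    ∃ C : ℝ, 0 < C ∧
      Measure.map (fun u => coordMap15 (fun k => extractZ15 d hdN (I k.castSucc) u)) μ
        = volume.withDensity (fun x : herdIdx15 n d → ℝ =>
            ENNReal.ofReal
              (if (∀ k : Fin n, (recon15 x k).PosSemidef)
                  ∧ (1 - ∑ k : Fin n, recon15 x k).PosSemidef then
                C * (∏ k : Fin n, (recon15 x k).det.re ^ (dd k.castSucc - d))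
                  * (1 - ∑ k : Fin n, recon15 x k).det.re ^ (dd (Fin.last n) - d)
              else 0)) := by
  choose b hb using hcover
  have hI : ∀ i r, r ∈ I i ↔ b r = i := fun i r =>
    ⟨fun hr => of_not_not fun hne => disjoint_left.1 (hdisj _ _ hne) (hb r) hr, fun h => h ▸ hb r⟩
  have hlt : d < N := by
    have hsum : (n + 1) * d ≤ ∑ i, dd i := by
      simpa using card_nsmul_le_sum univ dd d fun i _ => hdd i
    nlinarith
  obtain ⟨c, hc₀, hc_top, hc⟩ := MatrixDirichlet.exists_map_coordMap15_extractZ15_eq_smul hlt hI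
    (fun i => (hdd i).trans_eq (hcard i).symm) hsupp fun g hg => (hinv g hg).1
  simp only [hcard] at hc
  refine ⟨c.toReal, ENNReal.toReal_pos hc₀ hc_top, ?_⟩
  rw [hc, ← withDensity_smul' _ _ hc_top]
  have hae := MatrixDirichlet.ae_smul_simplexDensity_comp_eq volume hn
    (LinearEquiv.surjective (MatrixDirichlet.coordEquiv n d).symm) hc_top (fun i => dd i - d) 1
  exact withDensity_congr_ae hae
end
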